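/- arXiv:1105.2792 — 2 statements merged into one kernel-verified Lean document; each statement's English description precedes it below -/
import Mathlib

section
/- Let F be a countable field and let (A_i)_{i∈I}, I ⊆ ℤ_{>0}, be a countable collection of countable subsets of F. Then there exists a field K such that F ⊆ K, K has transcendence degree 1 over F, K has infinite degree over F(t) for any t ∈ K transcendental over F (i.e. K is an infinite algebraic extension of F(t)), and every set A_i is first-order definable in K: for each i there is a first-order formula in the language of rings with parameters from K whose set of realizations in K is exactly A_i. -/
/-- A subset `s` of a field `K` is first-order definable over `K`: there is a first-order
formula in the language of rings, with parameters from `K`, whose set of realizations in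
`K` is exactly `s`. -/
def definableWithParams (K : Type*) [Field K] (s : Set K) : Prop :=
  letI := FirstOrder.Ring.compatibleRingOfRing K
  Set.Definable₁ (Set.univ : Set K) FirstOrder.Language.ring s

namespace CountableDefinability

open Polynomial

variable {F Ω Γ₀ : Type*} [Field F] [Field Ω] [Algebra F Ω]
  [LinearOrderedCommGroupWithZero Γ₀] {v : Valuation Ω Γ₀}

/-- The valuation `v` is trivial on the subfield `F`. -/
def TrivialOn (F : Type*) {Ω Γ₀ : Type*} [Field F] [Field Ω] [Algebra F Ω]
    [LinearOrderedCommGroupWithZero Γ₀] (v : Valuation Ω Γ₀) : Prop :=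
  ∀ c : F, c ≠ 0 → v (algebraMap F Ω c) = 1

/-- `Ω` has transcendence degree at most one over `F`. -/
def DimLeOne (F Ω : Type*) [Field F] [Field Ω] [Algebra F Ω] : Prop :=
  ∀ x z : Ω, Transcendental F x → IsAlgebraic (Algebra.adjoin F {x}) z

lemma TrivialOn.le_one (hv : TrivialOn F v) (c : F) : v (algebraMap F Ω c) ≤ 1 := by
  by_cases h : c = 0
  · simp [h]
  · exact (hv c h).le

lemma TrivialOn.aeval_le_one (hv : TrivialOn F v) {x : Ω} (hx : v x ≤ 1) (p : F[X]) :
    v (aeval x p) ≤ 1 := by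
  rw [aeval_eq_sum_range]
  refine v.map_sum_le fun i _ => ?_
  rw [Algebra.smul_def, map_mul, map_pow]
  exact mul_le_one' (hv.le_one _) (pow_le_one' hx _)

lemma TrivialOn.exists_aeval_eq_pow (hv : TrivialOn F v) {x : Ω} (hx : v x < 1)
    {p : F[X]} (hp : p ≠ 0) : ∃ k : ℕ, v (aeval x p) = v x ^ k := by
  obtain ⟨q, hq, hq0⟩ := p.exists_eq_pow_rootMultiplicity_mul_and_not_dvd hp 0
  refine ⟨p.rootMultiplicity 0, ?_⟩
  have h1 : v (aeval x q) = 1 := by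
    have h0 : q.coeff 0 ≠ 0 := by
      intro h
      exact hq0 (by simpa using X_dvd_iff.2 h)
    rw [← q.divX_mul_X_add, map_add, map_mul, aeval_X, aeval_C]
    rw [v.map_add_eq_of_lt_right, hv _ h0]
    rw [hv _ h0, map_mul]
    exact mul_lt_one_of_nonneg_of_lt_one_right (hv.aeval_le_one hx.le _) (zero_le) hx
  conv_lhs => rw [hq]
  simp [h1]

lemma TrivialOn.transcendental (hv : TrivialOn F v) {x : Ω} (hx0 : x ≠ 0) (hx : v x < 1) :
    Transcendental F x := by
  rintro ⟨p, hp, h⟩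
  obtain ⟨k, hk⟩ := hv.exists_aeval_eq_pow hx hp
  rw [h, map_zero] at hk
  exact pow_ne_zero k ((v.ne_zero_iff).2 hx0) hk.symm

/-- A linear relation over `F[x]` with nonzero constant term. -/
lemma DimLeOne.exists_relation (hd : DimLeOne F Ω) {x z : Ω} (hx : Transcendental F x)
    (hz : z ≠ 0) : ∃ (c : F[X]) (n : ℕ) (p : ℕ → F[X]), c ≠ 0 ∧
      aeval x c + z * ∑ i ∈ Finset.range n, aeval x (p i) * z ^ i = 0 := by
  obtain ⟨q, hq0, hq⟩ := (hd x z hx).exists_nonzero_coeff_and_aeval_eq_zero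
    (mem_nonZeroDivisors_of_ne_zero hz)
  have hex : ∀ a : Algebra.adjoin F {x}, ∃ p : F[X], aeval x p = (a : Ω) := by
    intro a
    have : (a : Ω) ∈ (aeval (R := F) x).range :=
      Algebra.adjoin_singleton_eq_range_aeval F x ▸ a.2
    exact (AlgHom.mem_range _).1 this
  choose f hf using hex
  refine ⟨f (q.coeff 0), q.divX.natDegree + 1, fun i => f (q.divX.coeff i), ?_, ?_⟩
  · intro h
    apply hq0
    ext
    rw [← hf, h]
    simp
  · rw [← q.divX_mul_X_add, map_add, map_mul, aeval_X, aeval_C, aeval_eq_sum_range] at hq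
    rw [hf, ← hq, add_comm, mul_comm]
    congr 1
    congr 1
    refine Finset.sum_congr rfl fun i _ => ?_
    rw [hf, Algebra.smul_def]
    rfl

lemma DimLeOne.exists_pow_le (hd : DimLeOne F Ω) (hv : TrivialOn F v) {x y : Ω} (hx : x ≠ 0)
    (hy0 : y ≠ 0) (hy : v y < 1) : ∃ N : ℕ, v y ^ N ≤ v x := by
  rcases le_total 1 (v x) with h | h
  · exact ⟨0, by simpa using h⟩
  obtain ⟨c, n, p, hc, hrel⟩ := hd.exists_relation (hv.transcendental hy0 hy) hx
  obtain ⟨k, hk⟩ := hv.exists_aeval_eq_pow hy hc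
  refine ⟨k, ?_⟩
  rw [← hk, eq_neg_of_add_eq_zero_left hrel, Valuation.map_neg, map_mul]
  refine mul_le_of_le_one_right' (v.map_sum_le fun i _ => ?_)
  rw [map_mul, map_pow]
  exact mul_le_one' (hv.aeval_le_one hy.le _) (pow_le_one' h _)

lemma DimLeOne.exists_residue [IsAlgClosed F] (hd : DimLeOne F Ω) (hv : TrivialOn F v)
    {π : Ω} (hπ0 : π ≠ 0) (hπ : v π < 1) {x : Ω} (hx : v x ≤ 1) :
    ∃ d : F, v (x - algebraMap F Ω d) < 1 := by
  by_contra! hcon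
  have h1 : ∀ d : F, v (x - algebraMap F Ω d) = 1 := fun d =>
    le_antisymm ((v.map_sub _ _).trans (max_le hx (hv.le_one d))) (hcon d)
  have hp : ∀ p : F[X], p ≠ 0 → v (aeval x p) = 1 := by
    intro p hp
    have hs := IsAlgClosed.splits p
    rw [hs.eq_prod_roots, map_mul, aeval_C, map_mul, hv _ (leadingCoeff_ne_zero.2 hp), one_mul]
    rw [map_multiset_prod, map_multiset_prod, Multiset.map_map, Multiset.map_map]
    apply Multiset.prod_eq_one
    intro a ha
    obtain ⟨d, _, rfl⟩ := Multiset.mem_map.1 ha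
    simp [h1]
  have htr : Transcendental F x := by
    rintro ⟨p, hp0, h⟩
    simpa [h] using hp p hp0
  obtain ⟨c, n, p, hc, hrel⟩ := hd.exists_relation htr hπ0
  have := hp c hc
  rw [eq_neg_of_add_eq_zero_left hrel, Valuation.map_neg, map_mul] at this
  refine this.not_lt (mul_lt_one_of_lt_of_le hπ (v.map_sum_le fun i _ => ?_))
  rw [map_mul, map_pow]
  exact mul_le_one' (hv.aeval_le_one hx _) (pow_le_one' hπ.le _)

/-- If the nonzero terms of a finite sum have pairwise distinct values, the sum has the value
of one of them. -/
lemma exists_map_sum_eq {ι : Type*} (s : Finset ι) (f : ι → Ω)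
    (hne : ∃ i ∈ s, f i ≠ 0)
    (hdist : ∀ i ∈ s, ∀ j ∈ s, f i ≠ 0 → v (f i) = v (f j) → i = j) :
    ∃ i ∈ s, f i ≠ 0 ∧ v (∑ i ∈ s, f i) = v (f i) := by
  classical
  obtain ⟨i₀, hi₀, h0⟩ := hne
  obtain ⟨i, hi, hmax⟩ := s.exists_max_image (fun i => v (f i)) ⟨i₀, hi₀⟩
  have hfi : f i ≠ 0 := by
    intro h
    have := hmax i₀ hi₀
    simp [h, h0] at this
  refine ⟨i, hi, hfi, v.map_sum_eq_of_lt hi fun k hk => ?_⟩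
  rw [Finset.mem_sdiff, Finset.mem_singleton] at hk
  exact lt_of_le_of_ne (hmax k hk.1) fun h => hk.2 (hdist i hi k hk.1 hfi h.symm).symm

end CountableDefinability

namespace CountableDefinability

open Polynomial IntermediateField

variable {F Ω Γ₀ : Type*} [Field F] [Field Ω] [Algebra F Ω]
  [LinearOrderedCommGroupWithZero Γ₀] {v : Valuation Ω Γ₀}

/-- The value of `g` is `q` times, written additively, the value of an element of `K`. -/
def IsEvenAt (v : Valuation Ω Γ₀) (K : IntermediateField F Ω) (q : ℕ) (g : Ω) : Prop :=
  ∃ y ∈ K, v y ^ q = v g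

lemma IsEvenAt.mono {K L : IntermediateField F Ω} (h : K ≤ L) {q : ℕ} {g : Ω}
    (hg : IsEvenAt v K q g) : IsEvenAt v L q g :=
  let ⟨y, hy, e⟩ := hg
  ⟨y, h hy, e⟩

lemma IsEvenAt.of_coprime {K : IntermediateField F Ω} {g y : Ω} {a q : ℕ} (hg : g ∈ K)
    (hg0 : g ≠ 0) (hy : y ∈ K) (h : v y ^ q = v g ^ a) (hc : a.Coprime q) :
    IsEvenAt v K q g := by
  have hvg : v g ≠ 0 := v.ne_zero_iff.2 hg0
  have hbez : (1 : ℤ) = a * a.gcdA q + q * a.gcdB q := by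
    rw [← Nat.gcd_eq_gcd_ab, hc]; rfl
  refine ⟨y ^ (a.gcdA q) * g ^ (a.gcdB q), mul_mem (zpow_mem hy _) (zpow_mem hg _), ?_⟩
  have hcomm : ∀ (c : Γ₀) (m : ℤ), (c ^ m) ^ q = (c ^ q) ^ m := fun c m => by
    rw [← zpow_natCast, ← zpow_natCast, ← zpow_mul, ← zpow_mul, mul_comm]
  rw [map_mul, map_zpow₀, map_zpow₀, mul_pow, hcomm, hcomm, h, ← zpow_natCast, ← zpow_natCast,
    ← zpow_mul, ← zpow_mul, ← zpow_add₀ hvg, ← hbez, zpow_one]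

lemma exists_aeval_of_mem_sup {K : IntermediateField F Ω} {u : Ω} {s : ℕ} (hs : 0 < s)
    (hu : u ^ s ∈ K) {z : Ω} (hz : z ∈ K ⊔ F⟮u⟯) : ∃ p : K[X], aeval u p = z := by
  have halg : IsAlgebraic K u := by
    refine ⟨X ^ s - C ⟨u ^ s, hu⟩, X_pow_sub_C_ne_zero hs _, ?_⟩
    simp [IntermediateField.algebraMap_apply]
  rw [← restrictScalars_adjoin_eq_sup, IntermediateField.mem_restrictScalars,
    ← mem_toSubalgebra, adjoin_simple_toSubalgebra_of_isAlgebraic halg,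
    Algebra.adjoin_singleton_eq_range_aeval] at hz
  exact (AlgHom.mem_range _).1 hz

lemma exists_sum_of_mem_sup {K : IntermediateField F Ω} {u : Ω} {s : ℕ} (hs : 0 < s)
    (hu : u ^ s ∈ K) {z : Ω} (hz : z ∈ K ⊔ F⟮u⟯) :
    ∃ a : ℕ → K, z = ∑ i ∈ Finset.range s, (a i : Ω) * u ^ i := by
  obtain ⟨p, rfl⟩ := exists_aeval_of_mem_sup hs hu hz
  have hm : (X ^ s - C (⟨u ^ s, hu⟩ : K)).Monic := monic_X_pow_sub_C _ hs.ne'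
  have hroot : aeval u (X ^ s - C (⟨u ^ s, hu⟩ : K)) = 0 := by
    simp [IntermediateField.algebraMap_apply]
  set r := p %ₘ (X ^ s - C (⟨u ^ s, hu⟩ : K)) with hr
  have hdeg : r.natDegree < s := by
    have := natDegree_modByMonic_lt p hm (by
      intro h
      have := congrArg natDegree h
      rw [natDegree_X_pow_sub_C] at this
      simp at this
      omega)
    rwa [natDegree_X_pow_sub_C] at this
  refine ⟨fun i => r.coeff i, ?_⟩
  rw [← aeval_modByMonic_eq_self_of_root hroot, ← hr, aeval_eq_sum_range' hdeg]
  rfl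

lemma sum_aeval_mem {K : IntermediateField F Ω} {u : Ω} {s : ℕ} (hu : u ^ s ∈ K) {ζ : F}
    (hζ : IsPrimitiveRoot ζ s) (p : K[X]) :
    ∑ k ∈ Finset.range s, aeval (algebraMap F Ω (ζ ^ k) * u) p ∈ K := by
  induction p using Polynomial.induction_on' with
  | add p q hp hq =>
    simp only [map_add, Finset.sum_add_distrib]
    exact add_mem hp hq
  | monomial n a =>
    have h1 : ∑ k ∈ Finset.range s, aeval (algebraMap F Ω (ζ ^ k) * u) (monomial n a) =
        a * u ^ n * algebraMap F Ω (∑ k ∈ Finset.range s, (ζ ^ n) ^ k) := by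
      rw [map_sum, Finset.mul_sum]
      refine Finset.sum_congr rfl fun k _ => ?_
      rw [aeval_monomial, mul_pow, ← map_pow, ← pow_mul, ← pow_mul, mul_comm k n,
        IntermediateField.algebraMap_apply]
      ring
    rw [h1]
    by_cases hn : s ∣ n
    · obtain ⟨m, rfl⟩ := hn
      rw [pow_mul u]
      exact mul_mem (mul_mem a.2 (pow_mem hu _)) (K.algebraMap_mem _)
    · have hne : ζ ^ n - 1 ≠ 0 := fun h => hn ((hζ.pow_eq_one_iff_dvd n).1 (sub_eq_zero.1 h))
      have h0 := mul_geom_sum (ζ ^ n) s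
      rw [← pow_mul, mul_comm n s, pow_mul, hζ.pow_eq_one, one_pow, sub_self, mul_eq_zero] at h0
      rw [h0.resolve_left hne]
      simp

lemma exists_uniform_pow_mul_lt (hd : DimLeOne F Ω) (hv : TrivialOn F v) {ι : Type*}
    (t : Finset ι) (e p : ι → Ω) (he : ∀ k ∈ t, v (e k) < 1) {z : Ω} (hz : z ≠ 0) :
    ∃ N : ℕ, ∀ k ∈ t, v (e k) ^ N * v (p k) < v z := by
  have hvz : 0 < v z := v.pos_iff.2 hz
  have key : ∀ k ∈ t, ∃ N : ℕ, v (e k) ^ N * v (p k) < v z := by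
    intro k hk
    by_cases he0 : e k = 0
    · exact ⟨1, by simpa [he0] using hvz⟩
    by_cases hp0 : p k = 0
    · exact ⟨1, by simpa [hp0] using hvz⟩
    obtain ⟨N, hN⟩ := hd.exists_pow_le hv (div_ne_zero hz hp0) he0 (he k hk)
    refine ⟨N + 1, ?_⟩
    have hpk : 0 < v (p k) := v.pos_iff.2 hp0
    rw [map_div₀, le_div_iff₀ hpk] at hN
    refine lt_of_lt_of_le ?_ hN
    refine mul_lt_mul_of_pos_right ?_ hpk
    rw [pow_succ]
    exact mul_lt_of_lt_one_right (pow_pos (v.pos_iff.2 he0) _) (he k hk)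
  choose! f hf using key
  refine ⟨t.sup f, fun k hk => lt_of_le_of_lt ?_ (hf k hk)⟩
  gcongr ?_ * _
  exact pow_le_pow_right_of_le_one' (he k hk).le (Finset.le_sup hk)

lemma exists_eq_map_of_unit_root [IsAlgClosed F] (hd : DimLeOne F Ω) (hv : TrivialOn F v)
    {π : Ω} (hπ0 : π ≠ 0) (hπ : v π < 1) {K : IntermediateField F Ω} {u : Ω} {s : ℕ}
    (hs : (s : F) ≠ 0) (hu : u ^ s ∈ K) (hvu : v u = 1) (p : K[X]) :
    ∃ b ∈ K, v b = v (aeval u p) := by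
  by_cases hz : aeval u p = 0
  · exact ⟨0, zero_mem _, by rw [hz]⟩
  have : NeZero (s : F) := ⟨hs⟩
  obtain ⟨ζ, hζ⟩ := HasEnoughRootsOfUnity.exists_primitiveRoot F s
  have hs0 : 0 < s := Nat.pos_of_ne_zero fun h => hs (by simp [h])
  obtain ⟨d, hd'⟩ := hd.exists_residue hv hπ0 hπ hvu.le
  have hd0 : d ≠ 0 := by
    rintro rfl
    simp [hvu] at hd'
  have hζ1 : ∀ k, v (algebraMap F Ω (ζ ^ k)) = 1 := fun k =>
    hv _ (pow_ne_zero _ (hζ.ne_zero hs0.ne'))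
  let E : K[X] := ∏ i ∈ Finset.Ico 1 s, (X - C (algebraMap F K (ζ ^ i * d)))
  have hE : ∀ x : Ω, v (aeval x E) =
      ∏ i ∈ Finset.Ico 1 s, v (x - algebraMap F Ω (ζ ^ i * d)) := by
    intro x
    simp only [E, map_prod, map_sub, aeval_X, aeval_C]
    rfl
  have hE0 : v (aeval u E) = 1 := by
    rw [hE]
    refine Finset.prod_eq_one fun i hi => ?_
    rw [Finset.mem_Ico] at hi
    have h1 : u - algebraMap F Ω (ζ ^ i * d) =
        (u - algebraMap F Ω d) + algebraMap F Ω ((1 - ζ ^ i) * d) := by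
      simp only [map_mul, map_sub, map_one]; ring
    have h2 : v (algebraMap F Ω ((1 - ζ ^ i) * d)) = 1 :=
      hv _ (mul_ne_zero (sub_ne_zero.2 (hζ.pow_ne_one_of_pos_of_lt (by omega) hi.2).symm) hd0)
    rw [h1, v.map_add_eq_of_lt_right (by rwa [h2]), h2]
  have hEk : ∀ k ∈ Finset.Ico 1 s, v (aeval (algebraMap F Ω (ζ ^ k) * u) E) < 1 := by
    intro k hk
    have hle : ∀ i, v (algebraMap F Ω (ζ ^ k) * u - algebraMap F Ω (ζ ^ i * d)) ≤ 1 := fun i =>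
      (v.map_sub _ _).trans (max_le (by rw [map_mul, hζ1, hvu, mul_one]) (hv.le_one _))
    rw [hE, ← Finset.mul_prod_erase _ _ hk]
    refine mul_lt_one_of_lt_of_le ?_ (Finset.prod_le_one' fun i _ => hle i)
    rw [map_mul (algebraMap F Ω) _ d, ← mul_sub, map_mul, hζ1, one_mul]
    exact hd'
  obtain ⟨N, hN⟩ := exists_uniform_pow_mul_lt hd hv (Finset.Ico 1 s)
    (fun k => aeval (algebraMap F Ω (ζ ^ k) * u) E)
    (fun k => aeval (algebraMap F Ω (ζ ^ k) * u) p) hEk hz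
  refine ⟨_, sum_aeval_mem hu hζ (p * E ^ N), ?_⟩
  have h0 : v (aeval (algebraMap F Ω (ζ ^ 0) * u) (p * E ^ N)) = v (aeval u p) := by
    simp [hE0]
  rw [v.map_sum_eq_of_lt (j := 0) (by simpa using hs0), h0]
  intro k hk
  rw [h0, map_mul, map_mul, mul_comm, map_pow, map_pow]
  refine hN k ?_
  simp only [Finset.mem_sdiff, Finset.mem_range, Finset.mem_singleton] at hk
  rw [Finset.mem_Ico]
  omega

/-- Adjoining an `s`-th root of an element with `s`-divisible value does not change the values. -/
lemma exists_eq_map_of_isEvenAt [IsAlgClosed F] (hd : DimLeOne F Ω) (hv : TrivialOn F v)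
    {π : Ω} (hπ0 : π ≠ 0) (hπ : v π < 1) {K : IntermediateField F Ω} {u : Ω} {s : ℕ}
    (hs : (s : F) ≠ 0) (hu : u ^ s ∈ K) (he : IsEvenAt v K s (u ^ s)) {z : Ω}
    (hz : z ∈ K ⊔ F⟮u⟯) : ∃ b ∈ K, v b = v z := by
  have hs0 : s ≠ 0 := fun h => hs (by simp [h])
  by_cases hu0 : u = 0
  · subst hu0
    exact ⟨z, by simpa using hz, rfl⟩
  obtain ⟨y, hy, hyu⟩ := he
  rw [map_pow] at hyu
  have hyu' : v y = v u := (pow_left_inj₀ (zero_le) (zero_le) hs0).1 hyu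
  have hy0 : y ≠ 0 := fun h => hu0 (by simpa [h] using hyu'.symm)
  obtain ⟨p, rfl⟩ := exists_aeval_of_mem_sup (Nat.pos_of_ne_zero hs0) hu hz
  have h1 : aeval (u / y) (p.comp (C ⟨y, hy⟩ * X)) = aeval u p := by
    rw [aeval_comp]
    congr 1
    simp only [map_mul, aeval_C, aeval_X, IntermediateField.algebraMap_apply]
    field_simp
  rw [← h1]
  refine exists_eq_map_of_unit_root hd hv hπ0 hπ hs ?_ ?_ _
  · rw [div_pow]
    exact div_mem hu (pow_mem hy _)
  · rw [map_div₀, hyu', div_self (v.ne_zero_iff.2 hu0)]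

lemma exists_eq_map_pow_of_not_isEvenAt {K : IntermediateField F Ω} {u : Ω} {s : ℕ}
    (hs : s.Prime) (hu : u ^ s ∈ K) (ho : ¬ IsEvenAt v K s (u ^ s)) {z : Ω} (hz0 : z ≠ 0)
    (hz : z ∈ K ⊔ F⟮u⟯) : ∃ b ∈ K, v b = v z ^ s := by
  obtain ⟨a, ha⟩ := exists_sum_of_mem_sup hs.pos hu hz
  have hu0 : u ≠ 0 := by
    rintro rfl
    exact ho ⟨0, zero_mem _, by simp⟩
  have hvu : v u ≠ 0 := v.ne_zero_iff.2 hu0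
  have hlt : ∀ i j, j < s → i < j → a i ≠ 0 →
      v ((a i : Ω) * u ^ i) = v ((a j : Ω) * u ^ j) → False := by
    intro i j hj hij hi heq
    obtain ⟨k, rfl⟩ := Nat.exists_eq_add_of_lt hij
    have hi0 : v (a i : Ω) ≠ 0 := v.ne_zero_iff.2 (by simpa using hi)
    have haj : v (a (i + k + 1) : Ω) ≠ 0 := by
      intro h
      rw [map_mul, map_mul, h, zero_mul, map_pow] at heq
      exact mul_ne_zero hi0 (pow_ne_zero _ hvu) heq
    refine ho (IsEvenAt.of_coprime (y := (a i : Ω) / a (i + k + 1)) (a := k + 1) hu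
      (pow_ne_zero _ hu0) (div_mem (a i).2 (a _).2) ?_ ?_)
    · have h2 : v u ^ (k + 1) = v (a i : Ω) / v (a (i + k + 1) : Ω) := by
        rw [eq_div_iff haj]
        rw [map_mul, map_mul, map_pow, map_pow, add_assoc, pow_add] at heq
        have hvi : v u ^ i ≠ 0 := pow_ne_zero _ hvu
        apply mul_right_cancel₀ hvi
        rw [heq, add_assoc]
        ac_rfl
      rw [map_div₀, ← h2, map_pow, ← pow_mul, ← pow_mul, mul_comm]
    · exact (hs.coprime_iff_not_dvd.2 (Nat.not_dvd_of_pos_of_lt (by omega) (by omega))).symm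
  obtain ⟨i, -, hi0, hi⟩ := exists_map_sum_eq (v := v) (Finset.range s)
    (fun i => (a i : Ω) * u ^ i) (by
      by_contra! h
      exact hz0 (ha.trans (Finset.sum_eq_zero h))) (by
      intro i hi j hj h0 heq
      rw [Finset.mem_range] at hi hj
      rcases lt_trichotomy i j with h | h | h
      · exact (hlt i j hj h (by rintro h; simp [h] at h0) heq).elim
      · exact h
      · refine (hlt j i hi h ?_ heq.symm).elim
        rintro h'
        rw [h'] at heq
        simp only [ZeroMemClass.coe_zero, zero_mul, map_zero, map_eq_zero] at heq
        exact h0 heq)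
  refine ⟨(a i : Ω) ^ s * (u ^ s) ^ i, mul_mem (pow_mem (a i).2 _) (pow_mem hu _), ?_⟩
  rw [ha, hi]
  simp only [map_mul, map_pow]
  rw [mul_pow, ← pow_mul, ← pow_mul, mul_comm s]

lemma isEvenAt_of_sup [IsAlgClosed F] (hd : DimLeOne F Ω) (hv : TrivialOn F v)
    {π : Ω} (hπ0 : π ≠ 0) (hπ : v π < 1) {K : IntermediateField F Ω} {u g : Ω} {s q : ℕ}
    (hp : s.Prime) (hs : (s : F) ≠ 0) (hu : u ^ s ∈ K) (hg : g ∈ K) (hg0 : g ≠ 0)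
    (hq : q ≠ 0) (hsq : s.Coprime q ∨ IsEvenAt v K s (u ^ s))
    (h : IsEvenAt v (K ⊔ F⟮u⟯) q g) : IsEvenAt v K q g := by
  obtain ⟨y, hy, hyg⟩ := h
  by_cases he : IsEvenAt v K s (u ^ s)
  · obtain ⟨b, hb, hby⟩ := exists_eq_map_of_isEvenAt hd hv hπ0 hπ hs hu he hy
    exact ⟨b, hb, by rw [hby, hyg]⟩
  · have hy0 : y ≠ 0 := by
      rintro rfl
      rw [map_zero, zero_pow hq] at hyg
      exact hg0 (v.zero_iff.1 hyg.symm)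
    obtain ⟨b, hb, hby⟩ := exists_eq_map_pow_of_not_isEvenAt hp hu he hy0 hy
    refine IsEvenAt.of_coprime hg hg0 hb ?_ (hsq.resolve_right he)
    rw [hby, ← hyg, ← pow_mul, ← pow_mul, mul_comm]

end CountableDefinability

namespace CountableDefinability

open Polynomial IntermediateField

variable {F Ω Γ₀ : Type*} [Field F] [Field Ω] [Algebra F Ω]
  [LinearOrderedCommGroupWithZero Γ₀] {v : Valuation Ω Γ₀}

lemma TrivialOn.exists_eq_zpow (hv : TrivialOn F v) {x : Ω} (hx0 : x ≠ 0) (hx : v x < 1)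
    {a : Ω} (ha : a ∈ F⟮x⟯) (ha0 : a ≠ 0) : ∃ m : ℤ, v a = v x ^ m := by
  obtain ⟨p, q, rfl⟩ := (mem_adjoin_simple_iff F a).1 ha
  have hp : p ≠ 0 := by rintro rfl; simp at ha0
  have hq : q ≠ 0 := by rintro rfl; simp at ha0
  obtain ⟨k, hk⟩ := hv.exists_aeval_eq_pow hx hp
  obtain ⟨l, hl⟩ := hv.exists_aeval_eq_pow hx hq
  refine ⟨k - l, ?_⟩
  rw [map_div₀, hk, hl, zpow_sub₀ (v.ne_zero_iff.2 hx0), zpow_natCast, zpow_natCast]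

lemma not_isEvenAt_adjoin (hv : TrivialOn F v) {x : Ω} (hx0 : x ≠ 0) (hx : v x < 1)
    {q : ℕ} (hq : 2 ≤ q) : ¬ IsEvenAt v F⟮x⟯ q x := by
  rintro ⟨y, hy, hyx⟩
  have hvx : 0 < v x := v.pos_iff.2 hx0
  have hy0 : y ≠ 0 := by
    rintro rfl
    rw [map_zero, zero_pow (by omega)] at hyx
    exact hvx.ne hyx
  obtain ⟨m, hm⟩ := hv.exists_eq_zpow hx0 hx hy hy0
  rw [hm, ← zpow_natCast, ← zpow_mul] at hyx
  have := zpow_right_injective₀ hvx hx.ne (hyx.trans (zpow_one _).symm)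
  have hdvd : (q : ℤ) ∣ 1 := ⟨m, by rw [← this, mul_comm]⟩
  have := Int.le_of_dvd one_pos hdvd
  omega

lemma natDegree_minpoly_le_finrank {L : Type*} [Field L] [Algebra L Ω]
    (E : IntermediateField L Ω) [FiniteDimensional L E] {y : Ω} (hy : y ∈ E) :
    (minpoly L y).natDegree ≤ Module.finrank L E := by
  have h1 := minpoly.natDegree_le (A := L) (⟨y, hy⟩ : E)
  rwa [IntermediateField.minpoly_eq] at h1

lemma exists_pow_not_isEvenAt (hd : DimLeOne F Ω) (hv : TrivialOn F v) {x : Ω} (hx0 : x ≠ 0)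
    (hx : v x < 1) {K : IntermediateField F Ω} (hK : K.FG) {q : ℕ} (hq : 2 ≤ q) :
    ∃ k : ℕ, ¬ IsEvenAt v K (q ^ k) x := by
  obtain ⟨S, rfl⟩ := hK
  have halg : ∀ z : Ω, IsAlgebraic F⟮x⟯ z := fun z => by
    obtain ⟨p, hp, hz⟩ := hd x z (hv.transcendental hx0 hx)
    let f : Algebra.adjoin F {x} →+* F⟮x⟯ :=
      (Subalgebra.inclusion (algebra_adjoin_le_adjoin F {x})).toRingHom
    have hf : Function.Injective f :=
      Subalgebra.inclusion_injective (algebra_adjoin_le_adjoin F {x})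
    refine ⟨p.map f, (Polynomial.map_ne_zero_iff hf).2 hp, ?_⟩
    rw [aeval_def, eval₂_map, ← hz]
    rfl
  have : FiniteDimensional F⟮x⟯ (adjoin F⟮x⟯ (S : Set Ω)) :=
    finiteDimensional_adjoin fun z _ => (halg z).isIntegral
  have hle : adjoin F (S : Set Ω) ≤ (adjoin F⟮x⟯ (S : Set Ω)).restrictScalars F :=
    adjoin_le_iff.2 fun z hz => subset_adjoin F⟮x⟯ (S : Set Ω) hz
  let n := Module.finrank F⟮x⟯ (adjoin F⟮x⟯ (S : Set Ω))
  refine ⟨n, ?_⟩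
  rintro ⟨y, hy, hyx⟩
  have hvx : 0 < v x := v.pos_iff.2 hx0
  have hM : n < q ^ n := n.lt_pow_self (by omega)
  have hy0 : y ≠ 0 := by
    rintro rfl
    rw [map_zero, zero_pow (by omega)] at hyx
    exact hvx.ne hyx
  have hvy : 0 < v y := v.pos_iff.2 hy0
  have hvy1 : v y < 1 := by
    by_contra! h
    exact (one_le_pow_of_one_le' h (q ^ n)).not_gt (by rwa [hyx])
  have hdeg : (minpoly F⟮x⟯ y).natDegree ≤ n :=
    natDegree_minpoly_le_finrank _ (hle hy)
  have hmonic := minpoly.monic (halg y).isIntegral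
  have hsum := minpoly.aeval F⟮x⟯ y
  rw [aeval_eq_sum_range] at hsum
  obtain ⟨i, -, hi0, hi⟩ := exists_map_sum_eq (v := v)
    (Finset.range ((minpoly F⟮x⟯ y).natDegree + 1))
    (fun i => (minpoly F⟮x⟯ y).coeff i • y ^ i)
    ⟨(minpoly F⟮x⟯ y).natDegree, by simp, by simp [hmonic, hy0]⟩ (by
      intro i hi j hj h0 heq
      have key : ∀ i, (minpoly F⟮x⟯ y).coeff i • y ^ i ≠ 0 →
          ∃ m : ℤ, v ((minpoly F⟮x⟯ y).coeff i • y ^ i) = v y ^ ((q ^ n : ℕ) * m + i) := by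
        intro i h
        rw [Algebra.smul_def] at h
        obtain ⟨m, hm⟩ := hv.exists_eq_zpow hx0 hx ((minpoly F⟮x⟯ y).coeff i).2
          (left_ne_zero_of_mul h)
        refine ⟨m, ?_⟩
        rw [Algebra.smul_def, map_mul, IntermediateField.algebraMap_apply, hm, ← hyx,
          zpow_add₀ hvy.ne', zpow_mul, map_pow, zpow_natCast, zpow_natCast]
      have hj0 : (minpoly F⟮x⟯ y).coeff j • y ^ j ≠ 0 := by
        intro h
        rw [h, map_zero, map_eq_zero] at heq
        exact h0 heq
      obtain ⟨m, hm⟩ := key i h0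
      obtain ⟨l, hl⟩ := key j hj0
      rw [hm, hl] at heq
      have h3 := zpow_right_injective₀ hvy hvy1.ne heq
      rw [Finset.mem_range] at hi hj
      have h4 : ((q ^ n : ℕ) * m + i : ℤ) % (q ^ n : ℕ) = ((q ^ n : ℕ) * l + j) % (q ^ n : ℕ) :=
        congrArg (· % ((q ^ n : ℕ) : ℤ)) h3
      rw [Int.mul_add_emod_self_left, Int.mul_add_emod_self_left] at h4
      rw [Int.emod_eq_of_lt (by omega) (by omega), Int.emod_eq_of_lt (by omega) (by omega)] at h4
      exact_mod_cast h4)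
  rw [hsum, map_zero] at hi
  exact hi0 (v.zero_iff.1 hi.symm)

lemma mem_range_of_isAlgebraic [IsAlgClosed F] {x : Ω} (hx : IsAlgebraic F x) :
    x ∈ (algebraMap F Ω).range :=
  minpoly.mem_range_of_degree_eq_one F x
    (IsAlgClosed.degree_eq_one_of_irreducible F (minpoly.irreducible hx.isIntegral))

lemma trivialOn_valuation {V : ValuationSubring Ω} (h : ∀ c : F, algebraMap F Ω c ∈ V) :
    TrivialOn F V.valuation := by
  intro c hc
  refine le_antisymm ((V.valuation_le_one_iff _).2 (h c)) ?_
  have := (V.valuation_le_one_iff _).2 (h c⁻¹)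
  rw [map_inv₀, map_inv₀] at this
  exact (inv_le_one₀ (V.valuation.pos_iff.2 (by simpa using hc))).1 this

lemma exists_valuationSubring_notMem [IsAlgClosed F] {x : Ω} (hx : x ∉ (algebraMap F Ω).range) :
    ∃ V : ValuationSubring Ω, (∀ c : F, algebraMap F Ω c ∈ V) ∧ x ∉ V := by
  have : IsIntegrallyClosedIn (algebraMap F Ω).range Ω := by
    rw [Subring.isIntegrallyClosedIn_iff]
    rintro z ⟨p, hp, hz⟩
    refine mem_range_of_isAlgebraic (IsIntegral.isAlgebraic ?_)
    obtain ⟨q, hq, -, hqm⟩ := lifts_and_degree_eq_and_monic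
      (mem_lifts_of_surjective (algebraMap F Ω).rangeRestrict_surjective p) hp
    refine ⟨q, hqm, ?_⟩
    rw [← hz, ← hq, eval₂_map]
    rfl
  obtain ⟨V, hV, hxV⟩ := Subring.exists_le_valuationSubring_of_isIntegrallyClosedIn hx
  exact ⟨V, fun c => hV ⟨c, rfl⟩, hxV⟩

end CountableDefinability

namespace CountableDefinability

open Polynomial IntermediateField

variable {F Ω : Type*} [Field F] [Field Ω] [Algebra F Ω]

/-- The fixed data of the construction: a transcendental element `t`, a prime `ℓ`, a family of
further primes `r i`, and the sets `A i` which are to become definable. The index `0` is reserved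
for making the degree infinite. -/
structure Setup (F Ω : Type*) [Field F] [Field Ω] [Algebra F Ω] where
  t : Ω
  ℓ : ℕ
  r : ℕ → ℕ
  A : ℕ → Set F
  dim : DimLeOne F Ω
  trans : Transcendental F t
  ℓ_prime : ℓ.Prime
  ℓ_ne : (ℓ : F) ≠ 0
  r_prime : ∀ i, (r i).Prime
  r_ne : ∀ i, (r i : F) ≠ 0
  r_inj : Function.Injective r
  r_ne_ℓ : ∀ i, r i ≠ ℓ
  A_zero : A 0 = ∅

lemma Setup.sub_ne_zero (S : Setup F Ω) (a : F) : S.t - algebraMap F Ω a ≠ 0 := by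
  intro h
  exact S.trans (by rw [sub_eq_zero.1 h]; exact isAlgebraic_algebraMap a)

/-- A finitely generated approximation `K` of the field under construction, with finitely many
valuations at which elements of `K` with value not divisible by `ℓ` have to stay so. -/
structure Condition (S : Setup F Ω) where
  K : IntermediateField F Ω
  J : Set (ValuationSubring Ω)
  fg : K.FG
  t_mem : S.t ∈ K
  finite : J.Finite
  const_mem : ∀ V ∈ J, ∀ c : F, algebraMap F Ω c ∈ V
  nontrivial : ∀ V ∈ J, ∃ π : Ω, π ≠ 0 ∧ V.valuation π < 1
  odd : ∀ i, ∀ a ∈ S.A i, ∀ V : ValuationSubring Ω, (∀ c : F, algebraMap F Ω c ∈ V) →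
    V.valuation (S.t - algebraMap F Ω a) < 1 →
    ¬ IsEvenAt V.valuation K (S.r i) (S.t - algebraMap F Ω a)

variable {S : Setup F Ω}

instance : Preorder (Condition S) where
  le c d := c.K ≤ d.K ∧ c.J ⊆ d.J ∧ ∀ V ∈ c.J, ∀ g ∈ c.K,
    IsEvenAt V.valuation d.K S.ℓ g → IsEvenAt V.valuation c.K S.ℓ g
  le_refl _ := ⟨le_rfl, subset_rfl, fun _ _ _ _ h => h⟩
  le_trans _ _ _ h₁ h₂ := ⟨h₁.1.trans h₂.1, h₁.2.1.trans h₂.2.1, fun V hV g hg h =>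
    h₁.2.2 V hV g hg (h₂.2.2 V (h₁.2.1 hV) g (h₁.1 hg) h)⟩

namespace Condition

/-- The condition `F(t)`. -/
def base (S : Setup F Ω) : Condition S where
  K := F⟮S.t⟯
  J := ∅
  fg := by simpa using fg_adjoin_finset {S.t}
  t_mem := mem_adjoin_simple_self F S.t
  finite := Set.finite_empty
  const_mem := by simp
  nontrivial := by simp
  odd i a _ V hV h := by
    have h1 : F⟮S.t⟯ = F⟮S.t - algebraMap F Ω a⟯ := by
      apply le_antisymm <;> rw [adjoin_simple_le_iff]
      · simpa using add_mem (mem_adjoin_simple_self F (S.t - algebraMap F Ω a))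
          (IntermediateField.algebraMap_mem _ a)
      · exact sub_mem (mem_adjoin_simple_self F S.t) (IntermediateField.algebraMap_mem _ a)
    rw [h1]
    exact not_isEvenAt_adjoin (trivialOn_valuation hV) (S.sub_ne_zero a) h (S.r_prime i).two_le

/-- Adjoining an `s`-th root. -/
lemma exists_adjoin_root [IsAlgClosed F] (c : Condition S) {s : ℕ} (hs : s.Prime)
    (hsF : (s : F) ≠ 0) {u : Ω} (hu : u ^ s ∈ c.K)
    (hJ : s = S.ℓ → ∀ V ∈ c.J, IsEvenAt V.valuation c.K s (u ^ s))
    (hr : ∀ i, s = S.r i → ∀ a ∈ S.A i, ∀ V : ValuationSubring Ω,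
      (∀ c : F, algebraMap F Ω c ∈ V) → V.valuation (S.t - algebraMap F Ω a) < 1 →
      IsEvenAt V.valuation c.K s (u ^ s)) :
    ∃ d : Condition S, c ≤ d ∧ u ∈ d.K ∧ d.J = c.J := by
  refine ⟨⟨c.K ⊔ F⟮u⟯, c.J, fg_sup c.fg (by simpa using fg_adjoin_finset {u}),
    (le_sup_left : c.K ≤ c.K ⊔ F⟮u⟯) c.t_mem, c.finite, c.const_mem, c.nontrivial, ?_⟩, ?_, ?_, rfl⟩
  · intro i a ha V hV h he
    refine c.odd i a ha V hV h ?_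
    refine isEvenAt_of_sup S.dim (trivialOn_valuation hV) (S.sub_ne_zero a) h hs hsF hu
      (sub_mem c.t_mem (c.K.algebraMap_mem a)) (S.sub_ne_zero a) (S.r_prime i).ne_zero ?_ he
    by_cases hsr : s = S.r i
    · exact Or.inr (hr i hsr a ha V hV h)
    · exact Or.inl ((Nat.coprime_primes hs (S.r_prime i)).2 hsr)
  · refine ⟨le_sup_left, subset_rfl, fun V hV g hg h => ?_⟩
    obtain ⟨π, hπ0, hπ⟩ := c.nontrivial V hV
    by_cases hg0 : g = 0
    · exact ⟨0, zero_mem _, by simp [hg0, S.ℓ_prime.ne_zero]⟩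
    refine isEvenAt_of_sup S.dim (trivialOn_valuation (c.const_mem V hV)) hπ0 hπ hs hsF hu
      hg hg0 S.ℓ_prime.ne_zero ?_ h
    by_cases hsr : s = S.ℓ
    · exact Or.inr (hJ hsr V hV)
    · exact Or.inl ((Nat.coprime_primes hs S.ℓ_prime).2 hsr)
  · exact (le_sup_right : F⟮u⟯ ≤ c.K ⊔ F⟮u⟯) (mem_adjoin_simple_self F u)

/-- At some valuation of the condition, `x` has a pole which dominates a zero `π` whose value is
not divisible by `ℓ`. -/
def HasPole (c : Condition S) (x : Ω) : Prop :=
  ∃ V ∈ c.J, ∃ π ∈ c.K, ¬ IsEvenAt V.valuation c.K S.ℓ π ∧ V.valuation π < 1 ∧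
    1 < V.valuation (π * x ^ S.ℓ)

lemma exists_hasPole [IsAlgClosed F] (c : Condition S) {x : Ω} (hx : x ∈ c.K)
    (hxF : x ∉ (algebraMap F Ω).range) : ∃ d : Condition S, c ≤ d ∧ d.HasPole x := by
  classical
  obtain ⟨V, hV, hxV⟩ := exists_valuationSubring_notMem hxF
  have hx1 : 1 < V.valuation x := by
    rw [← not_le, V.valuation_le_one_iff]; exact hxV
  have hx0 : x ≠ 0 := by
    rintro rfl
    simp at hx1
  have hvi : V.valuation x⁻¹ < 1 := by
    rw [map_inv₀]; exact inv_lt_one_of_one_lt₀ hx1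
  have hex := exists_pow_not_isEvenAt S.dim (trivialOn_valuation hV) (inv_ne_zero hx0) hvi c.fg
    S.ℓ_prime.two_le
  obtain ⟨k, hk⟩ : ∃ k, Nat.find hex = k + 1 := by
    refine Nat.exists_eq_succ_of_ne_zero fun h => ?_
    have := Nat.find_spec hex
    rw [h] at this
    exact this ⟨x⁻¹, inv_mem hx, by simp⟩
  have hodd := Nat.find_spec hex
  rw [hk] at hodd
  obtain ⟨π, hπ, hπx⟩ := not_not.1 (Nat.find_min hex (m := k) (by omega))
  have hℓk : S.ℓ ^ k ≠ 0 := pow_ne_zero _ S.ℓ_prime.ne_zero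
  have hπ1 : V.valuation π < 1 := by
    by_contra! h
    exact (one_le_pow_of_one_le' h (S.ℓ ^ k)).not_gt (by rwa [hπx])
  refine ⟨⟨c.K, insert V c.J, c.fg, c.t_mem, c.finite.insert V, ?_, ?_, c.odd⟩,
    ⟨le_rfl, Set.subset_insert _ _, fun _ _ _ _ h => h⟩, V, Set.mem_insert _ _, π, hπ, ?_, hπ1, ?_⟩
  · rintro W (rfl | hW)
    · exact hV
    · exact c.const_mem W hW
  · rintro W (rfl | hW)
    · exact ⟨x⁻¹, inv_ne_zero hx0, hvi⟩
    · exact c.nontrivial W hW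
  · rintro ⟨y, hy, hyπ⟩
    exact hodd ⟨y, hy, by rw [← hπx, ← hyπ, ← pow_mul, pow_succ, mul_comm]⟩
  · have h1 : V.valuation x⁻¹ ≤ V.valuation π := by
      rw [← hπx]
      exact pow_le_of_le_one (zero_le) hπ1.le hℓk
    obtain ⟨m, hm⟩ : ∃ m, S.ℓ = m + 2 := ⟨S.ℓ - 2, by have := S.ℓ_prime.two_le; omega⟩
    have hvx : V.valuation x ≠ 0 := V.valuation.ne_zero_iff.2 hx0
    calc (1 : V.ValueGroup) < V.valuation x ^ (m + 1) := one_lt_pow' hx1 (by simp)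
      _ = V.valuation x⁻¹ * V.valuation x ^ S.ℓ := by
        rw [hm, map_inv₀, pow_succ' _ (m + 1), inv_mul_cancel_left₀ hvx]
      _ ≤ V.valuation π * V.valuation x ^ S.ℓ := by gcongr
      _ = _ := by simp

/-- Either `w` has a value not divisible by `ℓ` at some valuation of the condition where
`w z ^ ℓ` is not a zero, or `z` is a sum of two elements `y` for which `1 + w y ^ ℓ` is an
`ℓ`-th power. -/
def Decides (c : Condition S) (w z : Ω) : Prop :=
  (w ∈ c.K ∧ ∃ V ∈ c.J, ¬ IsEvenAt V.valuation c.K S.ℓ w ∧ 1 ≤ V.valuation (w * z ^ S.ℓ)) ∨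
    ∃ e : F, ∃ u₁ ∈ c.K, ∃ u₂ ∈ c.K, u₁ ^ S.ℓ = 1 + w * (algebraMap F Ω e * z) ^ S.ℓ ∧
      u₂ ^ S.ℓ = 1 + w * (algebraMap F Ω (1 - e) * z) ^ S.ℓ

lemma finite_setOf_one_add_lt (n : ℕ) (hn : 0 < n) {V : ValuationSubring Ω}
    (hV : ∀ c : F, algebraMap F Ω c ∈ V) {g : Ω} (hg : V.valuation g = 1) :
    {e : F | V.valuation (1 + g * algebraMap F Ω e ^ n) < 1}.Finite := by
  classical
  rcases Set.eq_empty_or_nonempty {e : F | V.valuation (1 + g * algebraMap F Ω e ^ n) < 1}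
    with h | ⟨e₀, h₀⟩
  · rw [h]; exact Set.finite_empty
  refine (nthRoots n (e₀ ^ n)).toFinset.finite_toSet.subset fun e he => ?_
  rw [Finset.mem_coe, Multiset.mem_toFinset, mem_nthRoots hn]
  by_contra hne
  have h1 := trivialOn_valuation hV (e ^ n - e₀ ^ n) (sub_ne_zero.2 hne)
  have h2 : V.valuation (g * algebraMap F Ω (e ^ n - e₀ ^ n)) < 1 := by
    have : g * algebraMap F Ω (e ^ n - e₀ ^ n) =
        (1 + g * algebraMap F Ω e ^ n) - (1 + g * algebraMap F Ω e₀ ^ n) := by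
      simp only [map_sub, map_pow]; ring
    rw [this]
    exact (V.valuation.map_sub _ _).trans_lt (max_lt he h₀)
  rw [map_mul, hg, h1, one_mul] at h2
  exact h2.false

lemma isEvenAt_one_add {K : IntermediateField F Ω} {n : ℕ} {V : ValuationSubring Ω}
    (hV : ∀ c : F, algebraMap F Ω c ∈ V) {w z : Ω} (hz : z ∈ K)
    (hw : IsEvenAt V.valuation K n w ∨ V.valuation (w * z ^ n) < 1) {e : F} (he0 : e ≠ 0)
    (he : V.valuation (w * z ^ n) = 1 →
      ¬ V.valuation (1 + w * z ^ n * algebraMap F Ω e ^ n) < 1) :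
    IsEvenAt V.valuation K n (1 + w * (algebraMap F Ω e * z) ^ n) := by
  have h1 : w * (algebraMap F Ω e * z) ^ n = w * z ^ n * algebraMap F Ω e ^ n := by ring
  have h2 : V.valuation (w * z ^ n * algebraMap F Ω e ^ n) = V.valuation (w * z ^ n) := by
    rw [map_mul _ (w * z ^ n), map_pow, trivialOn_valuation hV e he0, one_pow, mul_one]
  rw [h1]
  rcases lt_trichotomy (V.valuation (w * z ^ n)) 1 with h | h | h
  · refine ⟨1, one_mem _, ?_⟩
    rw [map_one, one_pow, V.valuation.map_add_eq_of_lt_left (by rwa [h2, map_one]), map_one]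
  · refine ⟨1, one_mem _, ?_⟩
    rw [map_one, one_pow]
    refine le_antisymm (not_lt.1 (he h)) ((V.valuation.map_add _ _).trans ?_)
    rw [h2, h, map_one, max_self]
  · obtain ⟨y, hy, hyw⟩ := hw.resolve_right h.not_gt
    refine ⟨y * z, mul_mem hy hz, ?_⟩
    rw [V.valuation.map_add_eq_of_lt_right (by rwa [h2, map_one]), h2, map_mul, mul_pow, hyw,
      map_mul, map_pow]

lemma exists_decides [IsAlgClosed F] [IsAlgClosed Ω] (c : Condition S) {w z : Ω} (hw : w ∈ c.K)
    (hz : z ∈ c.K) : ∃ d : Condition S, c ≤ d ∧ d.Decides w z := by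
  by_cases hcase : ∃ V ∈ c.J, ¬ IsEvenAt V.valuation c.K S.ℓ w ∧ 1 ≤ V.valuation (w * z ^ S.ℓ)
  · exact ⟨c, le_rfl, Or.inl ⟨hw, hcase⟩⟩
  have hcase' : ∀ V ∈ c.J, IsEvenAt V.valuation c.K S.ℓ w ∨ V.valuation (w * z ^ S.ℓ) < 1 := by
    intro V hV
    by_contra! h
    exact hcase ⟨V, hV, h⟩
  let B : ValuationSubring Ω → Set F := fun V => {e : F | V.valuation (w * z ^ S.ℓ) = 1 ∧
    V.valuation (1 + w * z ^ S.ℓ * algebraMap F Ω e ^ S.ℓ) < 1}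
  have hB : ∀ V ∈ c.J, (B V).Finite := by
    intro V hV
    by_cases h : V.valuation (w * z ^ S.ℓ) = 1
    · exact (finite_setOf_one_add_lt S.ℓ S.ℓ_prime.pos (c.const_mem V hV) h).subset
        fun e he => he.2
    · exact Set.finite_empty.subset fun e he => h he.1
  have hfin : ({0, 1} ∪ (⋃ V ∈ c.J, B V) ∪ (fun e : F => 1 - e) ⁻¹' (⋃ V ∈ c.J, B V)).Finite := by
    have hU : (⋃ V ∈ c.J, B V).Finite := c.finite.biUnion hB
    exact ((Set.toFinite _).union hU).union (hU.preimage (sub_right_injective.injOn))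
  have : Infinite F := IsAlgClosed.instInfinite
  obtain ⟨e, he⟩ := hfin.exists_notMem
  simp only [Set.mem_union, Set.mem_insert_iff, Set.mem_singleton_iff, Set.mem_iUnion,
    Set.mem_preimage, not_or, not_exists] at he
  obtain ⟨⟨⟨he0, he1⟩, heB⟩, heB'⟩ := he
  have hK : ∀ e : F, 1 + w * (algebraMap F Ω e * z) ^ S.ℓ ∈ c.K := fun e =>
    add_mem (one_mem _) (mul_mem hw (pow_mem (mul_mem (c.K.algebraMap_mem e) hz) _))
  obtain ⟨u₁, hu₁⟩ := IsAlgClosed.exists_pow_nat_eq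
    (1 + w * (algebraMap F Ω e * z) ^ S.ℓ) S.ℓ_prime.pos
  obtain ⟨u₂, hu₂⟩ := IsAlgClosed.exists_pow_nat_eq
    (1 + w * (algebraMap F Ω (1 - e) * z) ^ S.ℓ) S.ℓ_prime.pos
  have hev₁ : ∀ V ∈ c.J, IsEvenAt V.valuation c.K S.ℓ (u₁ ^ S.ℓ) := fun V hV => by
    rw [hu₁]
    exact isEvenAt_one_add (c.const_mem V hV) hz (hcase' V hV) he0
      fun h h' => heB V hV ⟨h, h'⟩
  have hev₂ : ∀ V ∈ c.J, IsEvenAt V.valuation c.K S.ℓ (u₂ ^ S.ℓ) := fun V hV => by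
    rw [hu₂]
    exact isEvenAt_one_add (c.const_mem V hV) hz (hcase' V hV) (sub_ne_zero.2 (Ne.symm he1))
      fun h h' => heB' V hV ⟨h, h'⟩
  obtain ⟨d₁, hd₁, hud₁, hJ₁⟩ := c.exists_adjoin_root S.ℓ_prime S.ℓ_ne (u := u₁)
    (hu₁ ▸ hK e) (fun _ => hev₁) (fun i hi => (S.r_ne_ℓ i hi.symm).elim)
  obtain ⟨d₂, hd₂, hud₂, -⟩ := d₁.exists_adjoin_root S.ℓ_prime S.ℓ_ne (u := u₂)
    (hd₁.1 (hu₂ ▸ hK (1 - e))) (fun _ V hV => (hev₂ V (hJ₁ ▸ hV)).mono hd₁.1)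
    (fun i hi => (S.r_ne_ℓ i hi.symm).elim)
  exact ⟨d₂, hd₁.trans hd₂, Or.inr ⟨e, u₁, hd₂.1 hud₁, u₂, hud₂, hu₁, hu₂⟩⟩

lemma exists_root_sub [IsAlgClosed F] [IsAlgClosed Ω] (c : Condition S) (i : ℕ) {b : F}
    (hb : b ∉ S.A i) :
    ∃ d : Condition S, c ≤ d ∧ ∃ y ∈ d.K, y ^ S.r i = S.t - algebraMap F Ω b := by
  obtain ⟨u, hu⟩ := IsAlgClosed.exists_pow_nat_eq (S.t - algebraMap F Ω b) (S.r_prime i).pos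
  obtain ⟨d, hd, hud, -⟩ := c.exists_adjoin_root (S.r_prime i) (S.r_ne i) (u := u)
    (hu ▸ sub_mem c.t_mem (c.K.algebraMap_mem b)) (fun h => (S.r_ne_ℓ i h).elim) (by
      intro j hj a ha V hV h
      obtain rfl := S.r_inj hj
      refine ⟨1, one_mem _, ?_⟩
      have hab : a - b ≠ 0 := sub_ne_zero.2 fun hab => hb (hab ▸ ha)
      have h1 := trivialOn_valuation hV _ hab
      rw [hu, map_one, one_pow, show S.t - algebraMap F Ω b =
        (S.t - algebraMap F Ω a) + algebraMap F Ω (a - b) by rw [map_sub]; ring,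
        V.valuation.map_add_eq_of_lt_right (by rwa [h1]), h1])
  exact ⟨d, hd, u, hud, hu⟩

lemma exists_root_pow [IsAlgClosed F] [IsAlgClosed Ω] (c : Condition S) (k : ℕ) :
    ∃ d : Condition S, c ≤ d ∧ ∃ y ∈ d.K, y ^ S.r 0 ^ k = S.t := by
  induction k with
  | zero => exact ⟨c, le_rfl, S.t, c.t_mem, by simp⟩
  | succ k ih =>
    obtain ⟨d, hd, y, hy, hyt⟩ := ih
    obtain ⟨u, hu⟩ := IsAlgClosed.exists_pow_nat_eq y (S.r_prime 0).pos
    obtain ⟨d', hd', hud', -⟩ := d.exists_adjoin_root (S.r_prime 0) (S.r_ne 0) (u := u)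
      (hu ▸ hy) (fun h => (S.r_ne_ℓ 0 h).elim) (by
        intro j hj a ha
        obtain rfl := S.r_inj hj
        simp [S.A_zero] at ha)
    exact ⟨d', hd.trans hd', u, hud', by rw [pow_succ', pow_mul, hu, hyt]⟩

end Condition

/-- The set of conditions satisfying `P`, or forcing that some element never enters the field. -/
def Decided (P : Condition S → Prop) (X : Set Ω) : Set (Condition S) :=
  {c | P c ∨ ∀ d, c ≤ d → ¬ X ⊆ (d.K : Set Ω)}

lemma isCofinal_decided {P : Condition S → Prop} {X : Set Ω}
    (h : ∀ c : Condition S, X ⊆ (c.K : Set Ω) → ∃ d, c ≤ d ∧ P d) : IsCofinal (Decided P X) := by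
  intro c
  by_cases hc : ∃ d, c ≤ d ∧ X ⊆ (d.K : Set Ω)
  · obtain ⟨d, hcd, hd⟩ := hc
    obtain ⟨d', hd', hP⟩ := h d hd
    exact ⟨d', Or.inl hP, hcd.trans hd'⟩
  · push Not at hc
    exact ⟨c, Or.inr hc, le_rfl⟩

/-- The field obtained from a sufficiently generic sequence of conditions. -/
theorem exists_generic_field [IsAlgClosed F] [IsAlgClosed Ω] [Countable F] [Countable Ω]
    (S : Setup F Ω) : ∃ K : IntermediateField F Ω, S.t ∈ K ∧
      (∀ x ∈ K, x ∉ (algebraMap F Ω).range → ∃ V : ValuationSubring Ω,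
        (∀ c : F, algebraMap F Ω c ∈ V) ∧ ∃ π ∈ K, ¬ IsEvenAt V.valuation K S.ℓ π ∧
          V.valuation π < 1 ∧ 1 < V.valuation (π * x ^ S.ℓ)) ∧
      (∀ w ∈ K, ∀ z ∈ K, (∃ V : ValuationSubring Ω, (∀ c : F, algebraMap F Ω c ∈ V) ∧
          ¬ IsEvenAt V.valuation K S.ℓ w ∧ 1 ≤ V.valuation (w * z ^ S.ℓ)) ∨
        ∃ e : F, ∃ u₁ ∈ K, ∃ u₂ ∈ K, u₁ ^ S.ℓ = 1 + w * (algebraMap F Ω e * z) ^ S.ℓ ∧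
          u₂ ^ S.ℓ = 1 + w * (algebraMap F Ω (1 - e) * z) ^ S.ℓ) ∧
      (∀ i, ∀ b ∉ S.A i, ∃ y ∈ K, y ^ S.r i = S.t - algebraMap F Ω b) ∧
      (∀ k, ∃ y ∈ K, y ^ S.r 0 ^ k = S.t) ∧
      (∀ i, ∀ a ∈ S.A i, ∀ V : ValuationSubring Ω, (∀ c : F, algebraMap F Ω c ∈ V) →
        V.valuation (S.t - algebraMap F Ω a) < 1 →
        ¬ IsEvenAt V.valuation K (S.r i) (S.t - algebraMap F Ω a)) := by
  let ι := {x : Ω // x ∉ (algebraMap F Ω).range} ⊕ (Ω × Ω) ⊕ {p : ℕ × F // p.2 ∉ S.A p.1} ⊕ ℕ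
  have : Encodable ι := Encodable.ofCountable ι
  let 𝒟 : ι → Order.Cofinal (Condition S) := fun j => match j with
    | .inl x => ⟨Decided (fun c => c.HasPole x.1) {x.1}, isCofinal_decided fun c hc =>
        c.exists_hasPole (by simpa using hc) x.2⟩
    | .inr (.inl p) => ⟨Decided (fun c => c.Decides p.1 p.2) {p.1, p.2},
        isCofinal_decided fun c hc => c.exists_decides (hc (by simp)) (hc (by simp))⟩
    | .inr (.inr (.inl p)) => ⟨Decided
        (fun c => ∃ y ∈ c.K, y ^ S.r p.1.1 = S.t - algebraMap F Ω p.1.2) ∅,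
        isCofinal_decided fun c _ => c.exists_root_sub p.1.1 p.2⟩
    | .inr (.inr (.inr k)) => ⟨Decided (fun c => ∃ y ∈ c.K, y ^ S.r 0 ^ k = S.t) ∅,
        isCofinal_decided fun c _ => c.exists_root_pow k⟩
  let c := Order.sequenceOfCofinals (Condition.base S) 𝒟
  have hc : Monotone c := Order.sequenceOfCofinals.monotone _ _
  have h𝒟 : ∀ j, ∃ n, c n ∈ 𝒟 j := fun j =>
    ⟨_, Order.sequenceOfCofinals.encode_mem (Condition.base S) 𝒟 j⟩
  have hKmono : Monotone fun n => (c n).K := fun m n h => (hc h).1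
  let K : IntermediateField F Ω := ⨆ n, (c n).K
  have hK : ∀ x, x ∈ K ↔ ∃ n, x ∈ (c n).K := fun x => by
    rw [← SetLike.mem_coe, coe_iSup_of_directed hKmono.directed_le, Set.mem_iUnion]
    rfl
  have hle : ∀ n, (c n).K ≤ K := le_iSup _
  have hmeet : ∀ (P : Condition S → Prop) (X : Set Ω) (n : ℕ), X.Finite → X ⊆ K →
      c n ∈ Decided P X → P (c n) := by
    intro P X n hX hXK hn
    refine hn.resolve_right fun h => ?_
    obtain ⟨m, hm⟩ : ∃ m, X ⊆ (c m).K := by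
      choose! f hf using fun x (hx : x ∈ X) => (hK x).1 (hXK hx)
      obtain ⟨m, hm⟩ := (hX.image f).bddAbove
      exact ⟨m, fun x hx => hKmono (hm ⟨x, hx, rfl⟩) (hf x hx)⟩
    exact h _ (hc (le_max_left n m)) (hm.trans (hKmono (le_max_right n m)))
  have hodd : ∀ n, ∀ V ∈ (c n).J, ∀ g ∈ (c n).K, ¬ IsEvenAt V.valuation (c n).K S.ℓ g →
      ¬ IsEvenAt V.valuation K S.ℓ g := by
    rintro n V hV g hg h ⟨y, hy, hyg⟩
    obtain ⟨m, hm⟩ := (hK y).1 hy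
    exact h ((hc (le_max_left n m)).2.2 V hV g hg ⟨y, hKmono (le_max_right n m) hm, hyg⟩)
  refine ⟨K, hle 0 (c 0).t_mem, ?_, ?_, ?_, ?_, ?_⟩
  · intro x hx hxF
    obtain ⟨n, hn⟩ := h𝒟 (.inl ⟨x, hxF⟩)
    obtain ⟨V, hV, π, hπ, ho, h1, h2⟩ := hmeet _ {x} n (Set.finite_singleton x) (by simpa) hn
    exact ⟨V, (c n).const_mem V hV, π, hle n hπ, hodd n V hV π hπ ho, h1, h2⟩
  · intro w hw z hz
    obtain ⟨n, hn⟩ := h𝒟 (.inr (.inl (w, z)))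
    rcases hmeet _ {w, z} n (Set.toFinite _) (by simp [Set.insert_subset_iff, hw, hz]) hn with
      ⟨hwn, V, hV, ho, h1⟩ | ⟨e, u₁, hu₁, u₂, hu₂, h⟩
    · exact Or.inl ⟨V, (c n).const_mem V hV, hodd n V hV w hwn ho, h1⟩
    · exact Or.inr ⟨e, u₁, hle n hu₁, u₂, hle n hu₂, h⟩
  · intro i b hb
    obtain ⟨n, hn⟩ := h𝒟 (.inr (.inr (.inl ⟨(i, b), hb⟩)))
    obtain ⟨y, hy, h⟩ := hmeet _ ∅ n Set.finite_empty (by simp) hn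
    exact ⟨y, hle n hy, h⟩
  · intro k
    obtain ⟨n, hn⟩ := h𝒟 (.inr (.inr (.inr k)))
    obtain ⟨y, hy, h⟩ := hmeet _ ∅ n Set.finite_empty (by simp) hn
    exact ⟨y, hle n hy, h⟩
  · rintro i a ha V hV h ⟨y, hy, hya⟩
    obtain ⟨n, hn⟩ := (hK y).1 hy
    exact (c n).odd i a ha V hV h ⟨y, hn, hya⟩

end CountableDefinability

namespace CountableDefinability

open Polynomial IntermediateField

variable {F Ω : Type*} [Field F] [Field Ω] [Algebra F Ω]

/-- `x` is a sum of two elements `z` for which `1 + w z ^ n` is an `n`-th power. -/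
def IsKummerSum {K : Type*} [Field K] (n : ℕ) (w x : K) : Prop :=
  ∃ z₁ z₂ u₁ u₂ : K, z₁ + z₂ = x ∧ u₁ ^ n = 1 + w * z₁ ^ n ∧ u₂ ^ n = 1 + w * z₂ ^ n

lemma isEvenAt_of_pow_eq_one_add {Γ₀ : Type*} [LinearOrderedCommGroupWithZero Γ₀]
    {v : Valuation Ω Γ₀} {K : IntermediateField F Ω} {n : ℕ} (hn : n ≠ 0) {w z u : Ω}
    (hz : z ∈ K) (hu : u ∈ K) (h : u ^ n = 1 + w * z ^ n) (hle : 1 ≤ v (w * z ^ n)) :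
    IsEvenAt v K n w := by
  have hz0 : z ≠ 0 := by
    rintro rfl
    simp [hn] at hle
  have hvz : v z ^ n ≠ 0 := pow_ne_zero _ (v.ne_zero_iff.2 hz0)
  rcases hle.eq_or_lt with h1 | h1
  · refine ⟨z⁻¹, inv_mem hz, ?_⟩
    rw [map_mul, map_pow] at h1
    rw [map_inv₀, inv_pow]
    exact (eq_inv_of_mul_eq_one_left h1.symm).symm
  · refine ⟨u / z, div_mem hu hz, ?_⟩
    have h2 : v u ^ n = v (w * z ^ n) := by
      rw [← map_pow, h, v.map_add_eq_of_lt_right (by rwa [map_one])]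
    rw [map_div₀, div_pow, h2, map_mul, map_pow, mul_div_cancel_right₀ _ hvz]

lemma IsKummerSum.isEvenAt {Γ₀ : Type*} [LinearOrderedCommGroupWithZero Γ₀]
    {v : Valuation Ω Γ₀} {K : IntermediateField F Ω} {n : ℕ} (hn : n ≠ 0) {w x : K}
    (h : IsKummerSum n w x) (hle : 1 ≤ v (w * x ^ n : Ω)) : IsEvenAt v K n (w : Ω) := by
  obtain ⟨z₁, z₂, u₁, u₂, rfl, h₁, h₂⟩ := h
  have hmax : v ((z₁ + z₂ : K) : Ω) ≤ v (z₁ : Ω) ∨ v ((z₁ + z₂ : K) : Ω) ≤ v (z₂ : Ω) :=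
    le_max_iff.1 (v.map_add _ _)
  have key : ∀ z u : K, u ^ n = 1 + w * z ^ n → v ((z₁ + z₂ : K) : Ω) ≤ v (z : Ω) →
      IsEvenAt v K n (w : Ω) := by
    intro z u hu hz
    refine isEvenAt_of_pow_eq_one_add hn z.2 u.2 (by exact_mod_cast congrArg Subtype.val hu)
      (hle.trans ?_)
    rw [map_mul, map_mul, map_pow, map_pow]
    gcongr
  exact hmax.elim (key z₁ u₁ h₁) (key z₂ u₂ h₂)

variable {S : Setup F Ω} {K : IntermediateField F Ω}

lemma mem_range_iff_forall_isKummerSum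
    (hpole : ∀ x ∈ K, x ∉ (algebraMap F Ω).range → ∃ V : ValuationSubring Ω,
      (∀ c : F, algebraMap F Ω c ∈ V) ∧ ∃ π ∈ K, ¬ IsEvenAt V.valuation K S.ℓ π ∧
        V.valuation π < 1 ∧ 1 < V.valuation (π * x ^ S.ℓ))
    (hdec : ∀ w ∈ K, ∀ z ∈ K, (∃ V : ValuationSubring Ω, (∀ c : F, algebraMap F Ω c ∈ V) ∧
        ¬ IsEvenAt V.valuation K S.ℓ w ∧ 1 ≤ V.valuation (w * z ^ S.ℓ)) ∨
      ∃ e : F, ∃ u₁ ∈ K, ∃ u₂ ∈ K, u₁ ^ S.ℓ = 1 + w * (algebraMap F Ω e * z) ^ S.ℓ ∧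
        u₂ ^ S.ℓ = 1 + w * (algebraMap F Ω (1 - e) * z) ^ S.ℓ) (x : K) :
    (∃ e : F, algebraMap F K e = x) ↔
      ∀ w : K, IsKummerSum S.ℓ w 1 → IsKummerSum S.ℓ w x := by
  have hℓ := S.ℓ_prime.ne_zero
  have hdec' : ∀ w z : K, (∃ V : ValuationSubring Ω, (∀ c : F, algebraMap F Ω c ∈ V) ∧
      ¬ IsEvenAt V.valuation K S.ℓ (w : Ω) ∧ 1 ≤ V.valuation (w * z ^ S.ℓ : Ω)) ∨
        IsKummerSum S.ℓ w z := by
    intro w z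
    refine (hdec w w.2 z z.2).imp_right ?_
    rintro ⟨e, u₁, hu₁, u₂, hu₂, h₁, h₂⟩
    refine ⟨algebraMap F K e * z, algebraMap F K (1 - e) * z, ⟨u₁, hu₁⟩, ⟨u₂, hu₂⟩, ?_,
      Subtype.ext h₁, Subtype.ext h₂⟩
    rw [← add_mul, ← map_add, add_sub_cancel, map_one, one_mul]
  constructor
  · rintro ⟨e, rfl⟩ w hw
    by_cases he : e = 0
    · exact ⟨0, 0, 1, 1, by simp [he], by simp [hℓ], by simp [hℓ]⟩
    refine (hdec' w (algebraMap F K e)).resolve_left ?_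
    rintro ⟨V, hV, ho, h⟩
    refine ho (hw.isEvenAt hℓ ?_)
    have h1 : V.valuation ((algebraMap F K e : K) : Ω) = 1 := trivialOn_valuation hV e he
    rw [map_mul, map_pow, h1, one_pow, mul_one] at h
    simpa using h
  · intro hx
    by_contra hxF
    obtain ⟨V, hV, π, hπ, ho, hπ1, hπx⟩ := hpole x x.2 fun ⟨e, he⟩ => hxF ⟨e, Subtype.ext he⟩
    have hone : (1 : Ω) - π ≠ 0 := by
      intro h
      rw [← sub_eq_zero.1 h, map_one] at hπ1
      exact hπ1.false
    let w : K := ⟨π, hπ⟩ / (1 - ⟨π, hπ⟩) ^ S.ℓ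
    have hwΩ : (w : Ω) = π / (1 - π) ^ S.ℓ := rfl
    have hsum : IsKummerSum S.ℓ w 1 := by
      refine (hdec' w 1).resolve_left ?_
      rintro ⟨W, hW, hoW, h⟩
      have h' : 1 ≤ W.valuation π / W.valuation (1 - π) ^ S.ℓ := by
        simpa [hwΩ] using h
      rcases lt_trichotomy (W.valuation π) 1 with h1 | h1 | h1
      · rw [W.valuation.map_sub_eq_of_lt_left (by rwa [map_one]), map_one, one_pow, div_one] at h'
        exact h'.not_gt h1
      · refine hoW ⟨(1 - π)⁻¹, inv_mem (sub_mem (one_mem _) hπ), ?_⟩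
        rw [hwΩ, map_div₀, h1, map_inv₀, inv_pow, map_pow, one_div]
      · rw [W.valuation.map_sub_eq_of_lt_right (by rwa [map_one]),
          one_le_div₀ (pow_pos (zero_lt_one.trans h1) _)] at h'
        refine h'.not_gt ?_
        conv_lhs => rw [← pow_one (W.valuation π)]
        exact pow_lt_pow_right₀ h1 S.ℓ_prime.one_lt
    have hvw : V.valuation (w : Ω) = V.valuation π := by
      rw [hwΩ, map_div₀, map_pow, V.valuation.map_sub_eq_of_lt_left (by rwa [map_one]), map_one,
        one_pow, div_one]
    obtain ⟨y, hy, hyw⟩ := (hx w hsum).isEvenAt (v := V.valuation) hℓ (by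
      rw [map_mul, hvw, ← map_mul]; exact hπx.le)
    exact ho ⟨y, hy, hyw.trans hvw⟩

lemma exists_valuation_lt_one [IsAlgClosed F] (S : Setup F Ω) (a : F) :
    ∃ V : ValuationSubring Ω, (∀ c : F, algebraMap F Ω c ∈ V) ∧
      V.valuation (S.t - algebraMap F Ω a) < 1 := by
  obtain ⟨V, hV, h⟩ := exists_valuationSubring_notMem (F := F)
    (x := (S.t - algebraMap F Ω a)⁻¹) (by
      rintro ⟨c, hc⟩
      refine S.trans ?_
      have : S.t = algebraMap F Ω (a + c⁻¹) := by
        rw [map_add, map_inv₀, hc, inv_inv]; ring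
      rw [this]
      exact isAlgebraic_algebraMap _)
  refine ⟨V, hV, ?_⟩
  rw [← V.valuation_le_one_iff, not_le, map_inv₀] at h
  exact (one_lt_inv₀ (V.valuation.pos_iff.2 (S.sub_ne_zero a))).1 h

/-- The generic field, with first-order descriptions of `F` and of the sets `A i`. -/
theorem exists_field_with_descriptions [IsAlgClosed F] [IsAlgClosed Ω] [Countable F] [Countable Ω]
    (S : Setup F Ω) : ∃ (K : IntermediateField F Ω) (t : K), (t : Ω) = S.t ∧ ¬ K.FG ∧
      ∀ i (x : K), (∃ a ∈ S.A i, algebraMap F K a = x) ↔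
        (∀ w : K, IsKummerSum S.ℓ w 1 → IsKummerSum S.ℓ w x) ∧ ¬ ∃ y : K, y ^ S.r i = t - x := by
  obtain ⟨K, ht, hpole, hdec, hroot, hpow, hodd⟩ := exists_generic_field S
  refine ⟨K, ⟨S.t, ht⟩, rfl, ?_, ?_⟩
  · intro hfg
    obtain ⟨V, hV, h⟩ := exists_valuation_lt_one S (0 : F)
    have ht0 := S.sub_ne_zero 0
    rw [map_zero, sub_zero] at h ht0
    obtain ⟨k, hk⟩ := exists_pow_not_isEvenAt S.dim (trivialOn_valuation hV) ht0 h hfg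
      (S.r_prime 0).two_le
    obtain ⟨y, hy, hyt⟩ := hpow k
    exact hk ⟨y, hy, by rw [← map_pow, hyt]⟩
  · intro i x
    rw [← mem_range_iff_forall_isKummerSum hpole hdec x]
    constructor
    · rintro ⟨a, ha, rfl⟩
      refine ⟨⟨a, rfl⟩, ?_⟩
      rintro ⟨y, hy⟩
      obtain ⟨V, hV, h⟩ := exists_valuation_lt_one S a
      refine hodd i a ha V hV h ⟨y, y.2, ?_⟩
      rw [← map_pow]
      exact congrArg V.valuation (congrArg Subtype.val hy)
    · rintro ⟨⟨a, rfl⟩, h⟩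
      refine ⟨a, ?_, rfl⟩
      by_contra ha
      obtain ⟨y, hy, hya⟩ := hroot i a ha
      exact h ⟨⟨y, hy⟩, Subtype.ext hya⟩

end CountableDefinability

namespace CountableDefinability

open FirstOrder MvPolynomial

section Definability

variable {K ι : Type*} [Field K] [FirstOrder.Ring.CompatibleRing K]

lemma definable_eval_eq_zero (p : MvPolynomial ι K) :
    (Set.univ : Set K).Definable Language.ring {v : ι → K | eval v p = 0} := by
  convert (FirstOrder.Ring.mvPolynomial_zeroLocus_definable {p}).mono (Set.subset_univ _) using 1
  ext v
  rw [MvPolynomial.zeroLocus_span]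
  simp [aeval_eq_eval]

lemma definable_isKummerSum (n : ℕ) (p q : MvPolynomial ι K) :
    (Set.univ : Set K).Definable Language.ring
      {v : ι → K | IsKummerSum n (eval v p) (eval v q)} := by
  let P := rename (Sum.inl : ι → ι ⊕ Fin 4) p
  let Q := rename (Sum.inl : ι → ι ⊕ Fin 4) q
  let Y (i : Fin 4) : MvPolynomial (ι ⊕ Fin 4) K := X (Sum.inr i)
  convert (((definable_eval_eq_zero (Y 0 + Y 1 - Q)).inter
    (definable_eval_eq_zero (Y 2 ^ n - (1 + P * Y 0 ^ n)))).inter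
    (definable_eval_eq_zero (Y 3 ^ n - (1 + P * Y 1 ^ n)))).exists_of_finite using 1
  ext v
  simp only [P, Q, Y, Set.mem_ofPred_eq, Set.mem_inter_iff, map_sub, map_add, map_mul, map_pow,
    map_one, eval_X, eval_rename, Sum.elim_inr, Sum.elim_comp_inl, sub_eq_zero]
  constructor
  · rintro ⟨z₁, z₂, u₁, u₂, h, h₁, h₂⟩
    exact ⟨![z₁, z₂, u₁, u₂], ⟨h, h₁⟩, h₂⟩
  · rintro ⟨u, ⟨h, h₁⟩, h₂⟩
    exact ⟨_, _, _, _, h, h₁, h₂⟩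

end Definability

lemma definableWithParams_description {K : Type*} [Field K] (n m : ℕ) (t : K) :
    definableWithParams K {x | (∀ w : K, IsKummerSum n w 1 → IsKummerSum n w x) ∧
      ¬ ∃ y : K, y ^ m = t - x} := by
  let := FirstOrder.Ring.compatibleRingOfRing K
  have h₁ := ((definable_isKummerSum (K := K) n (X (Sum.inr 0) : MvPolynomial (Fin 1 ⊕ Fin 1) K)
    1).himp (definable_isKummerSum n (X (Sum.inr 0)) (X (Sum.inl 0)))).forall_of_finite
  have h₂ := (definable_eval_eq_zero (X (Sum.inr 0) ^ m - (C t - X (Sum.inl 0)) :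
    MvPolynomial (Fin 1 ⊕ Fin 1) K)).exists_of_finite
  change (Set.univ : Set K).Definable Language.ring _
  convert h₁.inter h₂.compl using 1
  ext v
  simp only [himp_eq, Set.mem_ofPred_eq, Set.mem_inter_iff, Set.mem_compl_iff, map_sub, map_pow,
    map_one, eval_X, eval_C, Sum.elim_inr, Sum.elim_inl, sub_eq_zero]
  refine and_congr ⟨fun h u => ?_, fun h w hw => ?_⟩ (not_congr ⟨?_, ?_⟩)
  · exact or_iff_not_imp_right.2 fun h' => by
      have := not_not.1 h'
      simpa using h _ (by simpa using this)
  · simpa [hw] using h fun _ => w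
  · rintro ⟨y, hy⟩
    exact ⟨fun _ => y, hy⟩
  · rintro ⟨u, hu⟩
    exact ⟨u 0, hu⟩

end CountableDefinability

namespace CountableDefinability

open IntermediateField Cardinal

lemma infinite_setOf_prime_cast_ne_zero (F : Type*) [Field F] :
    {p : ℕ | p.Prime ∧ (p : F) ≠ 0}.Infinite := by
  refine (Nat.infinite_setOfPred_prime.sdiff (Set.finite_singleton (ringChar F))).mono ?_
  rintro p ⟨hp, hne⟩
  refine ⟨hp, fun h => hne ?_⟩
  have hdvd := (ringChar.spec F p).1 h
  refine (((Nat.dvd_prime hp).1 hdvd).resolve_left fun h1 => ?_).symm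
  exact CharP.ringChar_ne_one h1

lemma dimLeOne_of_trdeg_le_one {F Ω : Type*} [Field F] [Field Ω] [Algebra F Ω]
    (h : Algebra.trdeg F Ω ≤ 1) : DimLeOne F Ω := by
  intro x z hx
  have hind : AlgebraicIndependent F ((↑) : ({x} : Set Ω) → Ω) :=
    algebraicIndependent_unique_type_iff.2 hx
  have hbasis := hind.isTranscendenceBasis_of_trdeg_le_of_finite (by simpa using h)
  have := hbasis.isAlgebraic
  rw [Subtype.range_coe] at this
  exact this.isAlgebraic z

lemma countable_of_isAlgebraic (F E : Type*) [Field F] [Field E] [Algebra F E] [Countable F]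
    [Algebra.IsAlgebraic F E] : Countable E :=
  Set.countable_univ_iff.1 <| (Algebraic.countable F E).mono fun x _ =>
    Algebra.IsAlgebraic.isAlgebraic x

lemma countable_ratFunc (F : Type*) [Field F] [Countable F] : Countable (RatFunc F) := by
  rw [← mk_le_aleph0_iff]
  exact (IsLocalization.cardinalMk_le (nonZeroDivisors (Polynomial F))).trans
    (Polynomial.cardinalMk_le_max.trans (max_le mk_le_aleph0 le_rfl))

/-- The definability theorem inside an algebraically closed field `Ω` of transcendence degree one
over an algebraic closure `C` of `F`. -/
theorem exists_intermediateField_definable {F C Ω : Type*} [Field F] [Field C] [Field Ω]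
    [Algebra F C] [Algebra C Ω] [Algebra F Ω] [IsScalarTower F C Ω] [Algebra.IsAlgebraic F C]
    [IsAlgClosed C] [IsAlgClosed Ω] [Countable C] [Countable Ω]
    (hC : Algebra.trdeg C Ω ≤ 1) (hF : Algebra.trdeg F Ω ≤ 1) {t : Ω} (ht : Transcendental C t)
    (A : ℕ+ → Set F) :
    ∃ K : IntermediateField C Ω,
      (∃ t : K, Transcendental F t ∧ Algebra.IsAlgebraic F⟮t⟯ K) ∧
      (∀ t : K, Transcendental F t → ¬ FiniteDimensional F⟮t⟯ K) ∧
      ∀ i, definableWithParams K {x : K | ∃ a ∈ A i, algebraMap F K a = x} := by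
  have hinf := infinite_setOf_prime_cast_ne_zero C
  have hprime := Nat.nth_mem_of_infinite hinf
  have hinj := Nat.nth_injective hinf
  let S : Setup C Ω :=
    { t := t
      ℓ := Nat.nth (fun p => p.Prime ∧ (p : C) ≠ 0) 0
      r := fun i => Nat.nth (fun p => p.Prime ∧ (p : C) ≠ 0) (i + 1)
      A := fun i => {c | ∃ k : ℕ+, (k : ℕ) = i ∧ ∃ a ∈ A k, algebraMap F C a = c}
      dim := dimLeOne_of_trdeg_le_one hC
      trans := ht
      ℓ_prime := (hprime 0).1
      ℓ_ne := (hprime 0).2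
      r_prime := fun i => (hprime _).1
      r_ne := fun i => (hprime _).2
      r_inj := fun i j h => Nat.succ_injective (hinj h)
      r_ne_ℓ := fun i h => Nat.succ_ne_zero i (hinj h)
      A_zero := Set.eq_empty_of_forall_notMem fun c ⟨k, hk, _⟩ => k.ne_zero hk }
  obtain ⟨K, s, hs, hK, hdesc⟩ := exists_field_with_descriptions S
  have : IsScalarTower F K Ω := .of_algebraMap_eq fun _ => rfl
  have hs' : Transcendental F s := fun h =>
    S.trans (IsAlgebraic.tower_top (K := F) C (hs ▸ h.algebraMap))
  refine ⟨K, ⟨s, hs', ⟨fun z => ?_⟩⟩, fun t' _ hfin => ?_, fun i => ?_⟩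
  · have hK : Algebra.trdeg F K ≤ 1 :=
      (trdeg_le_of_injective (IsScalarTower.toAlgHom F K Ω)
        (algebraMap K Ω).injective).trans hF
    exact IntermediateField.isAlgebraic_adjoin_iff.2 (dimLeOne_of_trdeg_le_one hK s z hs')
  · refine hK (IntermediateField.essFiniteType_iff.1 ?_)
    have : Algebra.EssFiniteType F F⟮t'⟯ := IntermediateField.essFiniteType_iff.2
      (IntermediateField.fg_adjoin_of_finite (Set.finite_singleton t'))
    have := Algebra.EssFiniteType.comp F F⟮t'⟯ K
    exact Algebra.EssFiniteType.of_comp F C K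
  · convert definableWithParams_description S.ℓ (S.r i) s using 1
    ext x
    refine Iff.trans ?_ (hdesc i x)
    constructor
    · rintro ⟨a, ha, rfl⟩
      exact ⟨_, ⟨i, rfl, a, ha, rfl⟩, (IsScalarTower.algebraMap_apply F C K a).symm⟩
    · rintro ⟨_, ⟨k, hk, a, ha, rfl⟩, rfl⟩
      obtain rfl := PNat.coe_injective hk
      exact ⟨a, ha, IsScalarTower.algebraMap_apply F C K a⟩

end CountableDefinability

/-- Main Theorem: Let `F` be a countable field and let `A_i ⊆ F`,
`i ∈ I ⊆ ℤ_{>0}`, be a countable collection of countable subsets of `F`.  Then there is a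
field `K ⊇ F` of transcendence degree `1` over `F` (i.e. some `t ∈ K` is transcendental
over `F` and `K` is algebraic over `F(t)`), such that `K` has infinite degree over `F(t)`
for every `t ∈ K` transcendental over `F`, and every `A_i` is first-order definable
over `K` (as a subset of `K` via the embedding `F → K`). -/
theorem stmt_0 (F : Type) [Field F] [Countable F]
    (I : Set ℕ+) (A : ℕ+ → Set F) (hA : ∀ i ∈ I, (A i).Countable) :
    ∃ (K : Type) (_ : Field K) (_ : Algebra F K),
      (∃ t : K, Transcendental F t ∧
        Algebra.IsAlgebraic ↥(IntermediateField.adjoin F {t}) K) ∧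
      (∀ t : K, Transcendental F t →
        ¬ FiniteDimensional ↥(IntermediateField.adjoin F {t}) K) ∧
      (∀ i ∈ I, definableWithParams K {x : K | ∃ a ∈ A i, algebraMap F K a = x}) := by
  let C := AlgebraicClosure F
  let Ω := AlgebraicClosure (RatFunc C)
  have hC : Countable C := CountableDefinability.countable_of_isAlgebraic F C
  have : Countable (RatFunc C) := CountableDefinability.countable_ratFunc C
  have hΩ : Countable Ω := CountableDefinability.countable_of_isAlgebraic (RatFunc C) Ω
  have : Algebra.IsAlgebraic (Polynomial C) (RatFunc C) :=
    IsLocalization.isAlgebraic _ (nonZeroDivisors (Polynomial C))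
  have htC : Algebra.trdeg C Ω = 1 := by
    rw [← trdeg_add_eq C (RatFunc C) (A := Ω), ← trdeg_add_eq C (Polynomial C) (A := RatFunc C), 
      Polynomial.trdeg_of_isDomain, trdeg_eq_zero, trdeg_eq_zero, add_zero, add_zero]
  have htF : Algebra.trdeg F Ω = 1 := by
    rw [← trdeg_add_eq F C (A := Ω), htC, trdeg_eq_zero, zero_add]
  obtain ⟨K, h₁, h₂, h₃⟩ := CountableDefinability.exists_intermediateField_definable
    (F := F) (C := C) (Ω := Ω) htC.le htF.le
    (t := algebraMap (RatFunc C) Ω RatFunc.X)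
    ((transcendental_algebraMap_iff (algebraMap (RatFunc C) Ω).injective).2
      RatFunc.transcendental_X) A
  exact ⟨K, inferInstance, inferInstance, h₁, h₂, fun i _ => h₃ i⟩
end

section
/- Assume: F is a countable field; for each u ∈ ℤ_{>0}, A_u ⊆ F is countable and for every finite set B ⊆ F the complement in F of {a+b : a ∈ A_u, b ∈ B} is infinite; M is a countable field extension of F of transcendence degree at least one over F and t ∈ M is transcendental over F; (q_u)_{u∈ℤ_{>0}} is a sequence of distinct primes, all different from the characteristic of M; for each u, R_u(S) = C_u(S)/B_u(S) ∈ F(S) where C_u(S) = ∏_{i=1}^{m_u}(S−c_{u,i})^{n_{u,i}} and B_u(S) = ∏_{i=1}^{k_u}(S−b_{u,i})^{j_{u,i}} with the c_{u,i}, b_{u,i} ∈ F pairwise distinct and the n_{u,i}, j_{u,i} positive integers, n_{u,1} ≢ 0 (mod q_u) and 0 < deg C_u − deg B_u ≢ 0 (mod q_u); and for every u and every x ∈ M there is y ∈ M with y^{q_u} = R_u(x). Then there exists a field K with F(t) ⊆ K ⊆ M such that: (1) [K : F(t)] is infinite; (2) for every u, the set A_u is definable in K by a first-order formula in the language of rings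 with parameters from K; (3) F is definable in K by a first-order formula in the language of rings with parameters from K; and (4) for every field H with K ⊆ H ⊆ M and [H : K] finite, either [H : K] = 1 or q_u divides [H : K] for some u. -/
/-- Evaluation of the rational function `R(T) = ∏ (T - cᵢ)^{nᵢ} / ∏ (T - bᵢ)^{jᵢ}`
(with coefficients in a subfield `F`) at a point `x` of a field extension `M` of `F`. -/
noncomputable def ratEval {F M : Type*} [Field F] [Field M] [Algebra F M] {m k : ℕ}
    (c : Fin m → F) (b : Fin k → F) (n : Fin m → ℕ) (j : Fin k → ℕ) (x : M) : M :=
  (∏ i, (x - algebraMap F M (c i)) ^ n i) / (∏ i, (x - algebraMap F M (b i)) ^ j i)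

open Polynomial

/-- `w` makes the field `Ω`, algebraic over `Λ`, behave as an algebraic closure of the field
`Λ = F((T))` with its canonical absolute value. -/
structure IsLaurentModel (F Λ Ω : Type) [Field F] [Field Λ] [Field Ω] [Algebra F Λ] [Algebra Λ Ω]
    [Algebra F Ω] (w : AbsoluteValue Ω ℝ) (T : Λ) : Prop where
  nonarch : IsNonarchimedean w
  conj : ∀ x y, minpoly Λ x = minpoly Λ y → w x = w y
  const : ∀ a : F, a ≠ 0 → w (algebraMap F Ω a) = 1
  unif_pos : T ≠ 0
  unif_lt : w (algebraMap Λ Ω T) < 1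
  value : ∀ z : Λ, z ≠ 0 → ∃ n : ℤ, w (algebraMap Λ Ω z) = w (algebraMap Λ Ω T) ^ n
  dense : ∀ z : Λ, ∀ ε > 0, ∃ r ∈ IntermediateField.adjoin F {T}, w (algebraMap Λ Ω (z - r)) < ε

open scoped RatFunc in
theorem LaurentSeries.algebraMap_ratFunc_mem_adjoin (F : Type) [Field F] (Q : RatFunc F) :
    algebraMap (RatFunc F) (LaurentSeries F) Q ∈
      IntermediateField.adjoin F {(HahnSeries.single 1 1 : LaurentSeries F)} := by
  rw [IntermediateField.mem_adjoin_simple_iff]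
  have key : ∀ p : Polynomial F, algebraMap (Polynomial F) (LaurentSeries F) p =
      Polynomial.aeval (HahnSeries.single 1 1 : LaurentSeries F) p := by
    intro p
    induction p using Polynomial.induction_on' with
    | add p q hp hq => rw [map_add, map_add, hp, hq]
    | monomial n a =>
      rw [← Polynomial.C_mul_X_pow_eq_monomial, map_mul, map_mul, map_pow, map_pow,
        Polynomial.aeval_X, Polynomial.aeval_C]
      simp [LaurentSeries.algebraMap_apply]
  refine ⟨Q.num, Q.denom, ?_⟩
  rw [← key, ← key]
  conv_lhs => rw [← RatFunc.num_div_denom Q]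
  rw [RatFunc.algebraMap_apply_div]

open LaurentSeries WithZero in
theorem LaurentSeries.valued_algebraMap (F : Type) [Field F] {a : F} (ha : a ≠ 0) :
    Valued.v (algebraMap F (LaurentSeries F) a) = 1 := by
  have key : ∀ a : F, Valued.v (algebraMap F (LaurentSeries F) a) ≤ 1 := fun a => by
    rw [val_le_one_iff_eq_coe]
    exact ⟨PowerSeries.C a, by simp [LaurentSeries.algebraMap_apply]⟩
  refine le_antisymm (key a) ?_
  have h := key a⁻¹
  rw [map_inv₀, map_inv₀, inv_le_one₀] at h
  · exact h
  · rw [zero_lt_iff]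
    simpa using ha

open LaurentSeries WithZero in
open scoped RatFunc in
theorem exists_isLaurentModel (F : Type) [Field F] :
    ∃ (w : AbsoluteValue (AlgebraicClosure (LaurentSeries F)) ℝ) (T : LaurentSeries F),
      IsLaurentModel F (LaurentSeries F) (AlgebraicClosure (LaurentSeries F)) w T := by
  set T : LaurentSeries F := HahnSeries.single 1 1 with hTdef
  have hvT : Valued.v T = exp (-1 : ℤ) := LaurentSeries.valuation_single_zpow F 1
  have hT0 : T ≠ 0 := by
    intro h
    rw [h, map_zero] at hvT
    exact exp_ne_zero hvT.symm
  have hTlt : Valued.v T < 1 := by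
    rw [hvT, ← exp_zero, exp_lt_exp]; norm_num
  have : (Valued.v (R := LaurentSeries F)).IsNontrivial :=
    ⟨T, by simpa using hT0, hTlt.ne⟩
  have hR : Nonempty (Valued.v (R := LaurentSeries F)).RankOne := by
    rw [Valuation.nonempty_rankOne_iff_mulArchimedean]
    exact MulArchimedean.comap
      (MonoidWithZeroHom.ValueGroup₀.embedding (f := .ofClass (Valued.v (R := LaurentSeries F)))
        |>.toMonoidHom)
      MonoidWithZeroHom.ValueGroup₀.embedding_strictMono
  let _ := hR.some
  have hcomp : CompleteSpace (LaurentSeries F) := inferInstance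
  let _ : NontriviallyNormedField (LaurentSeries F) :=
    Valued.toNontriviallyNormedField (LaurentSeries F) ℤᵐ⁰
  have hultra : IsUltrametricDist (LaurentSeries F) := by
    open Valued in
    exact inferInstanceAs (IsUltrametricDist (LaurentSeries F))
  have hlt1 : ∀ x : LaurentSeries F, ‖x‖ < 1 ↔ Valued.v x < 1 := fun x =>
    Valued.toNormedField.norm_lt_one_iff
  have hle1 : ∀ x : LaurentSeries F, ‖x‖ ≤ 1 ↔ Valued.v x ≤ 1 := fun x =>
    Valued.toNormedField.norm_le_one_iff
  have hge1 : ∀ x : LaurentSeries F, 1 ≤ ‖x‖ ↔ 1 ≤ Valued.v x := fun x =>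
    Valued.toNormedField.one_le_norm_iff
  have heq1 : ∀ x : LaurentSeries F, Valued.v x = 1 → ‖x‖ = 1 := fun x hx =>
    le_antisymm ((hle1 x).2 hx.le) ((hge1 x).2 hx.ge)
  let Ω := AlgebraicClosure (LaurentSeries F)
  let w : AbsoluteValue Ω ℝ :=
    { toFun := spectralNorm (LaurentSeries F) Ω
      map_mul' := fun x y => spectralAlgNorm_mul x y
      nonneg' := spectralNorm_nonneg
      eq_zero' := fun x => ⟨fun h => eq_zero_of_map_spectralNorm_eq_zero h
        (Algebra.IsAlgebraic.isAlgebraic x), fun h => by rw [h]; exact spectralNorm_zero⟩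
      add_le' := fun x y => map_add_le_add (spectralAlgNorm (LaurentSeries F) Ω) x y }
  have hw : ∀ z : LaurentSeries F, w (algebraMap (LaurentSeries F) Ω z) = ‖z‖ :=
    fun z => spectralNorm_extends z
  refine ⟨w, T, ⟨?_, ?_, ?_, hT0, ?_, ?_, ?_⟩⟩
  · exact isNonarchimedean_spectralNorm
  · intro x y hxy
    change spectralValue _ = spectralValue _
    rw [hxy]
  · intro a ha
    rw [IsScalarTower.algebraMap_apply F (LaurentSeries F) Ω, hw]
    exact heq1 _ (LaurentSeries.valued_algebraMap F ha)
  · rw [hw, hlt1]; exact hTlt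
  · intro z hz
    have hvz : Valued.v z ≠ 0 := by simpa using hz
    refine ⟨-log (Valued.v z), ?_⟩
    rw [hw, hw, ← norm_zpow]
    have h1 : ‖z / T ^ (-log (Valued.v z))‖ = 1 := by
      apply heq1
      rw [map_div₀, map_zpow₀, hvT, ← exp_zsmul]
      simp [exp_log, hvz]
    rw [norm_div, div_eq_one_iff_eq] at h1
    · exact h1
    · exact (norm_pos_iff.2 (zpow_ne_zero _ hT0)).ne'
  · intro z ε hε
    obtain ⟨x, hx0, hxε⟩ := NormedField.exists_norm_lt (LaurentSeries F) hε
    have hx0' : x ≠ 0 := norm_pos_iff.1 hx0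
    have hvx : Valued.v x ≠ 0 := by simpa using hx0'
    obtain ⟨Q, hQ⟩ := exists_ratFunc_val_lt z (Units.mk0 _ hvx)
    refine ⟨algebraMap (RatFunc F) (LaurentSeries F) Q, ?_, ?_⟩
    · exact LaurentSeries.algebraMap_ratFunc_mem_adjoin F Q
    · rw [hw]
      refine lt_trans ?_ hxε
      exact Valued.toNormedField.norm_lt_iff.2 hQ

namespace AbsoluteValue

variable {E : Type} [Field E] {w : AbsoluteValue E ℝ}

theorem na_add_eq_of_lt (hna : IsNonarchimedean w) {x y : E} (h : w y < w x) : w (x + y) = w x := by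
  refine le_antisymm ((hna x y).trans_eq (max_eq_left h.le)) ?_
  by_contra! hlt
  have h1 := hna (x + y) (-y)
  rw [add_neg_cancel_right, w.map_neg] at h1
  exact absurd h1 (not_le.2 (max_lt hlt h))

theorem na_add_lt (hna : IsNonarchimedean w) {x y : E} {r : ℝ} (hx : w x < r) (hy : w y < r) :
    w (x + y) < r :=
  (hna x y).trans_lt (max_lt hx hy)

theorem na_add_le (hna : IsNonarchimedean w) {x y : E} {r : ℝ} (hx : w x ≤ r) (hy : w y ≤ r) :
    w (x + y) ≤ r :=
  (hna x y).trans (max_le hx hy)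

theorem na_sub_lt (hna : IsNonarchimedean w) {x y : E} {r : ℝ} (hx : w x < r) (hy : w y < r) :
    w (x - y) < r := by
  rw [sub_eq_add_neg]
  exact na_add_lt hna hx (by rwa [w.map_neg])

theorem na_sub_le (hna : IsNonarchimedean w) {x y : E} {r : ℝ} (hx : w x ≤ r) (hy : w y ≤ r) :
    w (x - y) ≤ r := by
  rw [sub_eq_add_neg]
  exact na_add_le hna hx (by rwa [w.map_neg])

theorem na_sum_lt (hna : IsNonarchimedean w) {ι : Type*} (s : Finset ι) (f : ι → E) {r : ℝ}
    (hr : 0 < r)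
    (h : ∀ i ∈ s, w (f i) < r) : w (∑ i ∈ s, f i) < r := by
  classical
  induction s using Finset.induction_on with
  | empty => simpa using hr
  | insert a s ha ih =>
    rw [Finset.sum_insert ha]
    exact na_add_lt hna (h a (by simp)) (ih fun i hi => h i (by simp [hi]))

/-- If the nonzero terms of a finite sum have pairwise distinct absolute values, every term is
bounded by the sum. -/
theorem na_term_le_sum (hna : IsNonarchimedean w) {ι : Type*} (s : Finset ι) (f : ι → E)
    (h : ∀ i ∈ s, ∀ k ∈ s, f i ≠ 0 → w (f i) = w (f k) → i = k) :
    ∀ i ∈ s, w (f i) ≤ w (∑ i ∈ s, f i) := by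
  classical
  intro i hi
  obtain ⟨a, ha, hmax⟩ := s.exists_max_image (fun i => w (f i)) ⟨i, hi⟩
  refine (hmax i hi).trans ?_
  by_cases h0 : f a = 0
  · rw [h0, map_zero]; exact w.nonneg _
  · rw [← Finset.add_sum_erase s f ha]
    refine (na_add_eq_of_lt hna (na_sum_lt hna _ _ (w.pos h0) fun k hk => ?_)).ge
    rw [Finset.mem_erase] at hk
    exact lt_of_le_of_ne (hmax k hk.2) fun he => hk.1 (h a ha k hk.2 h0 he.symm).symm

end AbsoluteValue


section Good

variable {F Λ Ω : Type} [Field F] [Field Λ] [Field Ω] [Algebra F Λ] [Algebra Λ Ω] [Algebra F Ω]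
  {w : AbsoluteValue Ω ℝ} {T : Λ}

/-- The value of `x` is a `q`-th power in the value group of `L`. -/
def ValueDiv (w : AbsoluteValue Ω ℝ) (L : IntermediateField Λ Ω) (q : ℕ) (x : Ω) : Prop :=
  ∃ h ∈ L, w h ^ q = w x

/-- `L` is maximal among the subfields of `Ω` in which the value of some fixed element is not
a `q`-th power. -/
def IsGood (w : AbsoluteValue Ω ℝ) (q : ℕ) (L : IntermediateField Λ Ω) : Prop :=
  ∃ s ∈ L, ¬ ValueDiv w L q s ∧ ∀ L' : IntermediateField Λ Ω, L ≤ L' → ¬ ValueDiv w L' q s → L' ≤ L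

theorem ValueDiv.of_pow {L : IntermediateField Λ Ω} {q e : ℕ} {x : Ω} (hx : x ∈ L)
    (hcop : e.Coprime q) (h : ValueDiv w L q (x ^ e)) : ValueDiv w L q x := by
  by_cases hx0 : x = 0
  · refine ⟨0, L.zero_mem, ?_⟩
    obtain ⟨h, -, hh⟩ := h
    have hq0 : q ≠ 0 := by
      rintro rfl
      rw [Nat.coprime_zero_right] at hcop
      rw [hcop, pow_zero, pow_one, hx0, map_zero] at hh
      exact one_ne_zero hh
    rw [hx0, map_zero, zero_pow hq0]
  obtain ⟨h, hL, hh⟩ := h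
  have hwx : w x ≠ 0 := by simpa using hx0
  have hbez := Nat.gcd_eq_gcd_ab e q
  rw [hcop.gcd_eq_one] at hbez
  refine ⟨h ^ e.gcdA q * x ^ e.gcdB q, L.mul_mem (zpow_mem hL _) (zpow_mem hx _), ?_⟩
  rw [map_mul, map_zpow₀, map_zpow₀, mul_pow, ← zpow_natCast, ← zpow_mul, mul_comm _ (q : ℤ),
    zpow_mul, zpow_natCast, hh, map_pow, ← zpow_natCast, ← zpow_mul, ← zpow_natCast, ← zpow_mul,
    ← zpow_add₀ hwx, mul_comm (e.gcdB q), ← hbez, Nat.cast_one, zpow_one]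

theorem IsLaurentModel.conj_of_minpoly_eq (hw : IsLaurentModel F Λ Ω w T)
    [Algebra.IsAlgebraic Λ Ω] {L : IntermediateField Λ Ω}
    {x y : Ω} (h : minpoly L x = minpoly L y) : w x = w y := by
  apply hw.conj
  have hx : IsIntegral Λ x := (Algebra.IsAlgebraic.isAlgebraic x).isIntegral
  refine minpoly.eq_of_irreducible_of_monic (minpoly.irreducible hx) ?_ (minpoly.monic hx)
  obtain ⟨r, hr⟩ := minpoly.dvd_map_of_isScalarTower Λ L x
  have h1 : aeval y ((minpoly Λ x).map (algebraMap Λ L)) = 0 := by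
    rw [hr, h, map_mul, minpoly.aeval, zero_mul]
  rwa [aeval_map_algebraMap] at h1

theorem IsLaurentModel.map_coeff_zero_minpoly (hw : IsLaurentModel F Λ Ω w T)
    [Algebra.IsAlgebraic Λ Ω] [IsAlgClosed Ω] (L : IntermediateField Λ Ω) (x : Ω) :
    w (algebraMap L Ω ((minpoly L x).coeff 0)) = w x ^ (minpoly L x).natDegree := by
  have hx : IsIntegral L x := (Algebra.IsAlgebraic.isAlgebraic x).isIntegral
  have hsplit := IsAlgClosed.splits ((minpoly L x).map (algebraMap L Ω))
  have hmon := (minpoly.monic hx).map (algebraMap L Ω)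
  have hroots : ∀ y ∈ ((minpoly L x).map (algebraMap L Ω)).roots, w y = w x := by
    intro y hy
    rw [mem_roots hmon.ne_zero, IsRoot.def, eval_map_algebraMap] at hy
    exact (hw.conj_of_minpoly_eq
      (minpoly.eq_of_irreducible_of_monic (minpoly.irreducible hx) hy (minpoly.monic hx))).symm
  rw [← coeff_map, hsplit.coeff_zero_eq_prod_roots_of_monic hmon, map_mul, map_pow, w.map_neg,
    map_one, one_pow, one_mul, map_multiset_prod, Multiset.map_congr rfl hroots,
    Multiset.map_const', Multiset.prod_replicate, ← hsplit.natDegree_eq_card_roots,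
    natDegree_map]

theorem IsGood.exists_of_notMem {q : ℕ} {L : IntermediateField Λ Ω} (hL : IsGood w q L) :
    ∃ s ∈ L, ¬ ValueDiv w L q s ∧ ∀ α ∉ L, ∃ h ∈ IntermediateField.adjoin L {α}, w h ^ q = w s := by
  obtain ⟨s, hs, hnd, hmax⟩ := hL
  refine ⟨s, hs, hnd, fun α hα => ?_⟩
  by_contra hcon
  refine hα (hmax ((IntermediateField.adjoin L {α}).restrictScalars Λ) ?_ hcon ?_)
  · intro x hx
    exact (IntermediateField.adjoin L {α}).algebraMap_mem ⟨x, hx⟩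
  · exact IntermediateField.mem_adjoin_simple_self L α

theorem exists_irreducible_factor_not_dvd {E : Type} [Field E] {q : ℕ} (p : E[X])
    (hp : ¬ q ∣ p.natDegree) : ∃ g : E[X], Irreducible g ∧ g ∣ p ∧ ¬ q ∣ g.natDegree := by
  by_contra! hcon
  have key : ∀ r : E[X], r ≠ 0 → r ∣ p → q ∣ r.natDegree := by
    intro r
    induction r using WfDvdMonoid.induction_on_irreducible with
    | zero => exact fun h => absurd rfl h
    | unit u hu => intro _ _; simp [natDegree_eq_zero_of_isUnit hu]
    | mul a i ha hi ih =>
      intro _ hdvd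
      rw [natDegree_mul hi.ne_zero ha]
      exact dvd_add (hcon i hi (dvd_of_mul_right_dvd hdvd)) (ih ha (dvd_of_mul_left_dvd hdvd))
  have hp0 : p ≠ 0 := by rintro rfl; simp at hp
  exact hp (key p hp0 dvd_rfl)

/-- Polynomials over a good field of degree prime to `q` have roots. -/
theorem IsGood.exists_root (hw : IsLaurentModel F Λ Ω w T) [Algebra.IsAlgebraic Λ Ω]
    [IsAlgClosed Ω] {q : ℕ} (hq : q.Prime) {L : IntermediateField Λ Ω} (hL : IsGood w q L)
    (p : L[X]) (hp : ¬ q ∣ p.natDegree) : ∃ x : L, p.IsRoot x := by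
  obtain ⟨g, hg, hgp, hgq⟩ := exists_irreducible_factor_not_dvd p hp
  obtain ⟨α, hα⟩ := IsAlgClosed.exists_aeval_eq_zero Ω g (degree_pos_of_irreducible hg).ne'
  by_cases hαL : α ∈ L
  · refine ⟨⟨α, hαL⟩, IsRoot.dvd ?_ hgp⟩
    have h1 : algebraMap L Ω (g.eval ⟨α, hαL⟩) = 0 := by
      rw [← aeval_algebraMap_apply_eq_algebraMap_eval]
      exact hα
    simpa using h1
  obtain ⟨s, hs, hnd, hmax⟩ := hL.exists_of_notMem
  obtain ⟨h, hh, hhs⟩ := hmax α hαL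
  exfalso
  refine hnd (ValueDiv.of_pow hs (e := (minpoly L h).natDegree) ?_
    ⟨algebraMap L Ω ((minpoly L h).coeff 0), SetLike.coe_mem _, ?_⟩)
  · rw [Nat.coprime_comm, hq.coprime_iff_not_dvd]
    intro hdvd
    apply hgq
    have hαi : IsIntegral L α := (Algebra.IsAlgebraic.isAlgebraic α).isIntegral
    have hgdeg : g.natDegree = Module.finrank L (IntermediateField.adjoin L {α}) := by
      rw [IntermediateField.adjoin.finrank hαi, ← minpoly.eq_of_irreducible hg hα,
        natDegree_mul_C (by simpa using hg.ne_zero)]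
    have hfin : FiniteDimensional L (IntermediateField.adjoin L {α}) :=
      IntermediateField.adjoin.finiteDimensional hαi
    rw [hgdeg]
    refine hdvd.trans ?_
    have := minpoly.degree_dvd (K := L) (x := (⟨h, hh⟩ : IntermediateField.adjoin L {α}))
      (IsIntegral.of_finite L _)
    rwa [← minpoly.algebraMap_eq (algebraMap (IntermediateField.adjoin L {α}) Ω).injective] at this
  · rw [hw.map_coeff_zero_minpoly, map_pow, ← hhs]
    ring

theorem IsGood.exists_pow_eq_of_map_eq_one (hw : IsLaurentModel F Λ Ω w T)
    [Algebra.IsAlgebraic Λ Ω] [IsAlgClosed Ω] {q : ℕ} (hq : q.Prime) (hqF : (q : F) ≠ 0)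
    {L : IntermediateField Λ Ω} (hL : IsGood w q L) {u : Ω} (hu : u ∈ L) (hu1 : w u = 1) :
    ∃ z ∈ L, z ^ q = u := by
  by_contra! hcon
  obtain ⟨ρ, hρ⟩ := IsAlgClosed.exists_pow_nat_eq u hq.pos
  have hρ1 : w ρ = 1 := by
    have := congrArg w hρ
    rw [map_pow, hu1] at this
    exact (pow_eq_one_iff_of_nonneg (w.nonneg _) hq.ne_zero).1 this
  have hirr : Irreducible (X ^ q - C (⟨u, hu⟩ : L)) :=
    X_pow_sub_C_irreducible_of_prime hq fun b hb => hcon b b.2 (congrArg Subtype.val hb)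
  have hminroot : ∀ ρ' : Ω, ρ' ^ q = u → minpoly L ρ' = X ^ q - C (⟨u, hu⟩ : L) := by
    intro ρ' hρ'
    refine (minpoly.eq_of_irreducible_of_monic hirr ?_ (monic_X_pow_sub_C _ hq.ne_zero)).symm
    simp only [map_sub, map_pow, aeval_X, aeval_C, hρ']
    exact sub_self u
  have hinteg : ∀ x : Ω, IsIntegral L x := fun x => (Algebra.IsAlgebraic.isAlgebraic x).isIntegral
  have hdeg : Module.finrank L (IntermediateField.adjoin L {ρ}) = q := by
    rw [IntermediateField.adjoin.finrank (hinteg ρ), hminroot ρ hρ, natDegree_X_pow_sub_C]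
  have hρL : ρ ∉ L := fun h => hcon ρ h hρ
  obtain ⟨s, hs, hnd, hmax⟩ := hL.exists_of_notMem
  obtain ⟨h, hh, hhs⟩ := hmax ρ hρL
  have hs0 : s ≠ 0 := by
    rintro rfl
    exact hnd ⟨0, L.zero_mem, by rw [map_zero, zero_pow hq.ne_zero]⟩
  have hh0 : h ≠ 0 := by
    rintro rfl
    rw [map_zero, zero_pow hq.ne_zero, eq_comm, w.eq_zero] at hhs
    exact hs0 hhs
  have hwh : w h ≠ 0 := by simpa using hh0
  have hfin : FiniteDimensional L (IntermediateField.adjoin L {ρ}) :=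
    IntermediateField.adjoin.finiteDimensional (hinteg ρ)
  have hhdeg : (minpoly L h).natDegree = q := by
    have h1 := minpoly.degree_dvd (K := L) (x := (⟨h, hh⟩ : IntermediateField.adjoin L {ρ}))
      (IsIntegral.of_finite L _)
    rw [← minpoly.algebraMap_eq (algebraMap (IntermediateField.adjoin L {ρ}) Ω).injective,
      hdeg] at h1
    refine ((Nat.dvd_prime hq).1 h1).resolve_left fun h2 => ?_
    obtain ⟨l, hl⟩ := minpoly.natDegree_eq_one_iff.1 h2
    have hl' : (l : Ω) = h := hl
    exact hnd ⟨h, hl' ▸ l.2, hhs⟩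
  have hle : IntermediateField.adjoin L {h} ≤ IntermediateField.adjoin L {ρ} := by
    rw [IntermediateField.adjoin_simple_le_iff]; exact hh
  have hadj : IntermediateField.adjoin L {h} = IntermediateField.adjoin L {ρ} :=
    IntermediateField.eq_of_le_of_finrank_eq hle (by
      rw [hdeg]; exact (IntermediateField.adjoin.finrank (hinteg h)).trans hhdeg)
  have hρmem : ρ ∈ IntermediateField.adjoin L {h} := by
    rw [hadj]; exact IntermediateField.mem_adjoin_simple_self L ρ
  obtain ⟨p, hpdeg, hp⟩ : ∃ p : L[X], p.natDegree < q ∧ ρ = aeval h p := by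
    rw [← IntermediateField.mem_toSubalgebra,
      IntermediateField.adjoin_simple_toSubalgebra_of_isAlgebraic (hinteg h).isAlgebraic,
      Algebra.adjoin_singleton_eq_range_aeval] at hρmem
    obtain ⟨p, hp⟩ := hρmem
    have hmon := minpoly.monic (hinteg h)
    refine ⟨p %ₘ minpoly L h, ?_, ?_⟩
    · rw [← hhdeg]
      exact natDegree_modByMonic_lt _ hmon fun h1 => by
        rw [h1, natDegree_one] at hhdeg
        exact hq.ne_zero hhdeg.symm
    · rw [aeval_modByMonic_eq_self_of_root (minpoly.aeval L h)]
      exact hp.symm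
  have hdistinct : ∀ e : ℕ, 0 < e → e < q → ∀ a ∈ L, w a ≠ w h ^ e := by
    intro e he heq a ha hae
    refine hnd (ValueDiv.of_pow hs (e := e) ?_ ⟨a, ha, ?_⟩)
    · exact (Nat.coprime_of_lt_prime he.ne' heq hq).symm
    · rw [hae, map_pow, ← hhs]; ring
  have hlt : ∀ i k, i < k → k < q → ∀ a b : L, a ≠ 0 →
      w ((a : Ω) * h ^ i) ≠ w ((b : Ω) * h ^ k) := by
    intro i k hik hk a b ha hab
    have ha' : (a : Ω) ≠ 0 := by simpa using ha
    have hb : (b : Ω) ≠ 0 := by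
      intro hb
      rw [hb, zero_mul, map_zero, w.eq_zero] at hab
      exact mul_ne_zero ha' (pow_ne_zero _ hh0) hab
    have hwb : w (b : Ω) ≠ 0 := by simpa using hb
    refine hdistinct (k - i) (by omega) (by omega) (a / b) (L.div_mem a.2 b.2) ?_
    rw [map_div₀, div_eq_iff hwb]
    apply mul_right_cancel₀ (pow_ne_zero i hwh)
    rw [mul_right_comm, ← pow_add, Nat.sub_add_cancel hik.le, ← map_pow, ← map_pow, ← map_mul,
      ← map_mul, hab, mul_comm]
  have hsum : ρ = ∑ i ∈ Finset.range q, (p.coeff i : Ω) * h ^ i := by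
    rw [hp, aeval_eq_sum_range' hpdeg]
    rfl
  have hlow := AbsoluteValue.na_term_le_sum hw.nonarch (Finset.range q)
    (fun i => (p.coeff i : Ω) * h ^ i) (by
      intro i hi k hk h0 hik
      rw [Finset.mem_range] at hi hk
      have hi0 : p.coeff i ≠ 0 := fun h1 => h0 (by rw [h1]; simp)
      have hk0 : p.coeff k ≠ 0 := fun h1 => h0 (by
        rwa [h1, ZeroMemClass.coe_zero, zero_mul, map_zero, w.eq_zero] at hik)
      rcases lt_trichotomy i k with hlt' | heq | hgt
      · exact absurd hik (hlt i k hlt' hk _ _ hi0)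
      · exact heq
      · exact absurd hik.symm (hlt k i hgt hi _ _ hk0))
  rw [← hsum, hρ1] at hlow
  have hρa : w (ρ - (p.coeff 0 : Ω)) < 1 := by
    obtain ⟨r, hr⟩ := Nat.exists_eq_succ_of_ne_zero hq.ne_zero
    rw [hsum, hr, Finset.sum_range_succ', pow_zero, mul_one, add_sub_cancel_right]
    refine AbsoluteValue.na_sum_lt hw.nonarch _ _ one_pos fun i hi => ?_
    rw [Finset.mem_range] at hi
    refine lt_of_le_of_ne (hlow (i + 1) (by rw [Finset.mem_range]; omega)) fun h1 => ?_
    refine hlt 0 (i + 1) (by omega) (by omega) 1 (p.coeff (i + 1)) one_ne_zero ?_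
    rw [h1]; simp
  have hconj : ∀ ρ' : Ω, ρ' ^ q = u → w (ρ' - ρ) < 1 := by
    intro ρ' hρ'
    have h1 : w (ρ' - (p.coeff 0 : Ω)) = w (ρ - (p.coeff 0 : Ω)) := by
      apply hw.conj_of_minpoly_eq (L := L)
      have h2 := minpoly.sub_algebraMap ρ' (p.coeff 0)
      have h3 := minpoly.sub_algebraMap ρ (p.coeff 0)
      rw [hminroot ρ' hρ', ← hminroot ρ hρ, ← h3] at h2
      exact h2
    rw [← sub_sub_sub_cancel_right ρ' ρ (p.coeff 0 : Ω)]
    exact AbsoluteValue.na_sub_lt hw.nonarch (h1.trans_lt hρa) hρa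
  have hqΩ : w (q : Ω) = 1 := by
    have := hw.const q hqF
    rwa [map_natCast] at this
  have hqΩ0 : NeZero (q : Ω) := ⟨by
    intro h0
    rw [h0, map_zero] at hqΩ
    exact zero_ne_one hqΩ⟩
  obtain ⟨ζ, hζ⟩ := HasEnoughRootsOfUnity.exists_primitiveRoot Ω q
  have hζ1 : w (ζ - 1) < 1 := by
    have h1 := hconj (ζ * ρ) (by rw [mul_pow, hζ.pow_eq_one, one_mul, hρ])
    rwa [← sub_one_mul, map_mul, hρ1, mul_one] at h1
  have hζw : w ζ = 1 := by
    have := congrArg w hζ.pow_eq_one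
    rw [map_pow, map_one] at this
    exact (pow_eq_one_iff_of_nonneg (w.nonneg _) hq.ne_zero).1 this
  have hgeom := hζ.geom_sum_eq_zero hq.one_lt
  have hqsum : (q : Ω) = ∑ i ∈ Finset.range q, (1 - ζ ^ i) := by
    rw [Finset.sum_sub_distrib, hgeom]; simp
  refine absurd hqΩ (ne_of_lt ?_)
  rw [hqsum]
  refine AbsoluteValue.na_sum_lt hw.nonarch _ _ one_pos fun i hi => ?_
  clear hi
  rw [← w.map_neg, neg_sub]
  induction i with
  | zero => simp
  | succ i ih =>
    rw [show ζ ^ (i + 1) - 1 = ζ ^ i * (ζ - 1) + (ζ ^ i - 1) by ring]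
    refine AbsoluteValue.na_add_lt hw.nonarch ?_ ih
    rwa [map_mul, map_pow, hζw, one_pow, one_mul]

/-- An element of a good field whose value is a `q`-th power is a `q`-th power. -/
theorem IsGood.exists_pow_eq (hw : IsLaurentModel F Λ Ω w T) [Algebra.IsAlgebraic Λ Ω]
    [IsAlgClosed Ω] {q : ℕ} (hq : q.Prime) (hqF : (q : F) ≠ 0) {L : IntermediateField Λ Ω}
    (hL : IsGood w q L) {y : Ω} (hy : y ∈ L) (hdiv : ValueDiv w L q y) :
    ∃ z ∈ L, z ^ q = y := by
  by_cases hy0 : y = 0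
  · exact ⟨0, L.zero_mem, by rw [hy0, zero_pow hq.ne_zero]⟩
  obtain ⟨h, hh, hhy⟩ := hdiv
  have hwy : w y ≠ 0 := by simpa using hy0
  have hh0 : h ≠ 0 := by
    rintro rfl
    rw [map_zero, zero_pow hq.ne_zero] at hhy
    exact hwy hhy.symm
  obtain ⟨z, hz, hzq⟩ := hL.exists_pow_eq_of_map_eq_one hw hq hqF
    (L.div_mem hy (pow_mem hh q)) (by rw [map_div₀, map_pow, hhy, div_self hwy])
  exact ⟨z * h, L.mul_mem hz hh, by rw [mul_pow, hzq, div_mul_cancel₀ _ (pow_ne_zero _ hh0)]⟩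

end Good

section Places

variable {F Λ Ω : Type} [Field F] [Field Λ] [Field Ω] [Algebra F Λ] [Algebra Λ Ω] [Algebra F Ω]
  {w : AbsoluteValue Ω ℝ} {T : Λ}

theorem IsLaurentModel.map_const_le_one (hw : IsLaurentModel F Λ Ω w T) (a : F) :
    w (algebraMap F Ω a) ≤ 1 := by
  by_cases ha : a = 0
  · rw [ha, map_zero, map_zero]; exact zero_le_one
  · exact (hw.const a ha).le

theorem IsLaurentModel.map_le_one_of_isAlgebraic (hw : IsLaurentModel F Λ Ω w T) {z : Ω}
    (hz : IsAlgebraic F z) : w z ≤ 1 := by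
  by_contra! hlt
  have hinteg := hz.isIntegral
  have h0 := minpoly.aeval F z
  have hpos : 0 < (minpoly F z).natDegree := minpoly.natDegree_pos hinteg
  rw [aeval_eq_sum_range, Finset.sum_range_succ, (minpoly.monic hinteg).coeff_natDegree, one_smul,
    add_comm] at h0
  have h1 : w (∑ i ∈ Finset.range (minpoly F z).natDegree, (minpoly F z).coeff i • z ^ i) <
      w (z ^ (minpoly F z).natDegree) := by
    refine AbsoluteValue.na_sum_lt hw.nonarch _ _ (by rw [map_pow]; positivity) fun i hi => ?_
    rw [Finset.mem_range] at hi
    rw [Algebra.smul_def, map_mul, map_pow, map_pow]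
    calc _ ≤ 1 * w z ^ i := by gcongr; exact hw.map_const_le_one _
      _ < _ := by rw [one_mul]; exact pow_lt_pow_right₀ hlt hi
  have h2 := AbsoluteValue.na_add_eq_of_lt hw.nonarch h1
  rw [h0, map_zero] at h2
  exact absurd h1 (by rw [← h2]; exact not_lt.2 (w.nonneg _))

theorem IsLaurentModel.map_eq_one_of_isAlgebraic (hw : IsLaurentModel F Λ Ω w T) {z : Ω}
    (hz : IsAlgebraic F z) (hz0 : z ≠ 0) : w z = 1 := by
  refine le_antisymm (hw.map_le_one_of_isAlgebraic hz) ?_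
  have h := hw.map_le_one_of_isAlgebraic hz.inv
  rwa [map_inv₀, inv_le_one₀ (w.pos hz0)] at h

theorem exists_isGood_ge {q : ℕ} {L₁ : IntermediateField Λ Ω} {s : Ω} (hs : s ∈ L₁)
    (hnd : ¬ ValueDiv w L₁ q s) :
    ∃ L : IntermediateField Λ Ω, L₁ ≤ L ∧ IsGood w q L ∧ ¬ ValueDiv w L q s := by
  obtain ⟨L, hL₁, hL⟩ := zorn_le_nonempty₀
    {L : IntermediateField Λ Ω | L₁ ≤ L ∧ ¬ ValueDiv w L q s} (by
      intro c hc hchain L₂ hL₂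
      have : Nonempty c := ⟨⟨L₂, hL₂⟩⟩
      have hdir : Directed (· ≤ ·) (fun x : c => (x : IntermediateField Λ Ω)) :=
        hchain.directedOn.directed_val
      refine ⟨⨆ x : c, (x : IntermediateField Λ Ω), ⟨?_, ?_⟩, ?_⟩
      · exact (hc hL₂).1.trans (le_iSup (fun x : c => (x : IntermediateField Λ Ω)) ⟨L₂, hL₂⟩)
      · rintro ⟨h, hh, hhs⟩
        rw [← SetLike.mem_coe, IntermediateField.coe_iSup_of_directed hdir, Set.mem_iUnion] at hh
        obtain ⟨L₃, hL₃⟩ := hh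
        exact (hc L₃.2).2 ⟨h, hL₃, hhs⟩
      · intro z hz
        exact le_iSup (fun x : c => (x : IntermediateField Λ Ω)) ⟨z, hz⟩) L₁ ⟨le_rfl, hnd⟩
  refine ⟨L, hL₁, ⟨s, hL₁ hs, hL.prop.2, fun L' hLL' hL' => ?_⟩, hL.prop.2⟩
  exact hL.le_of_ge ⟨hL₁.trans hLL', hL'⟩ hLL'

theorem IsLaurentModel.map_pow_factorial (hw : IsLaurentModel F Λ Ω w T) [Algebra.IsAlgebraic Λ Ω]
    [IsAlgClosed Ω] {y : Ω} (hy0 : y ≠ 0) {N : ℕ} (hN : (minpoly Λ y).natDegree ≤ N) :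
    ∃ k : ℤ, w y ^ N.factorial = w (algebraMap Λ Ω T) ^ k := by
  have hinteg : IsIntegral Λ y := (Algebra.IsAlgebraic.isAlgebraic y).isIntegral
  have hinteg' : IsIntegral (⊥ : IntermediateField Λ Ω) y := hinteg.tower_top
  have h1 := hw.map_coeff_zero_minpoly ⊥ y
  have hle : (minpoly (⊥ : IntermediateField Λ Ω) y).natDegree ≤ N := by
    refine le_trans ?_ hN
    have h2 := minpoly.dvd_map_of_isScalarTower Λ (⊥ : IntermediateField Λ Ω) y
    have h3 := natDegree_le_of_dvd h2 ((minpoly.monic hinteg).map _).ne_zero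
    rwa [natDegree_map] at h3
  obtain ⟨z, hz⟩ := IntermediateField.mem_bot.1
    ((minpoly (⊥ : IntermediateField Λ Ω) y).coeff 0).2
  have hz' : algebraMap (⊥ : IntermediateField Λ Ω) Ω ((minpoly _ y).coeff 0) =
    algebraMap Λ Ω z := hz.symm
  have hz0 : z ≠ 0 := by
    rintro rfl
    rw [hz', map_zero, map_zero, eq_comm] at h1
    exact hy0 (w.eq_zero.1 (pow_eq_zero_iff (minpoly.natDegree_pos hinteg').ne' |>.1 h1))
  obtain ⟨k, hk⟩ := hw.value z hz0
  obtain ⟨r, hr⟩ := Nat.dvd_factorial (minpoly.natDegree_pos hinteg') hle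
  refine ⟨k * r, ?_⟩
  rw [hr, pow_mul, ← h1, hz', hk, zpow_mul, zpow_natCast]

variable [IsScalarTower F Λ Ω]

/-- The elements of the compositum of `Λ` with the image of `σ` are limits of elements of the
image of `σ`, as soon as that image contains `T`. -/
theorem IsLaurentModel.exists_approx (hw : IsLaurentModel F Λ Ω w T) [Algebra.IsAlgebraic Λ Ω]
    {E : Type} [Field E] [Algebra F E] (σ : E →ₐ[F] Ω) (hT : algebraMap Λ Ω T ∈ σ.fieldRange)
    {y : Ω} (hy : y ∈ IntermediateField.adjoin Λ (Set.range σ)) :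
    ∀ ε > 0, ∃ e : E, w (y - σ e) < ε := by
  rw [← IntermediateField.mem_toSubalgebra, IntermediateField.adjoin_toSubalgebra] at hy
  induction hy using Algebra.adjoin_induction with
  | mem x hx =>
    obtain ⟨e, rfl⟩ := hx
    intro ε hε
    exact ⟨e, by simpa using hε⟩
  | algebraMap z =>
    intro ε hε
    obtain ⟨r, hr, hzr⟩ := hw.dense z ε hε
    have hle : IntermediateField.adjoin F {T} ≤
        σ.fieldRange.comap (IsScalarTower.toAlgHom F Λ Ω) := by
      rw [IntermediateField.adjoin_simple_le_iff]
      exact hT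
    obtain ⟨e, he⟩ := hle hr
    have he' : σ e = algebraMap Λ Ω r := he
    exact ⟨e, by rwa [he', ← map_sub]⟩
  | add x y _ _ hx hy =>
    intro ε hε
    obtain ⟨e, he⟩ := hx ε hε
    obtain ⟨f, hf⟩ := hy ε hε
    refine ⟨e + f, ?_⟩
    rw [map_add, add_sub_add_comm]
    exact AbsoluteValue.na_add_lt hw.nonarch he hf
  | mul x y _ _ hx hy =>
    intro ε hε
    obtain ⟨f, hf⟩ := hy (ε / (w x + 1)) (div_pos hε (by have := w.nonneg x; positivity))
    obtain ⟨e, he⟩ := hx (ε / (w (σ f) + 1)) (div_pos hε (by have := w.nonneg (σ f); positivity))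
    refine ⟨e * f, ?_⟩
    have key : ∀ a b : ℝ, 0 ≤ a → b < ε / (a + 1) → 0 ≤ b → a * b < ε := by
      intro a b ha hb hb0
      rw [lt_div_iff₀ (by positivity)] at hb
      nlinarith
    rw [map_mul, show x * y - σ e * σ f = x * (y - σ f) + (x - σ e) * σ f by ring]
    refine AbsoluteValue.na_add_lt hw.nonarch ?_ ?_
    · rw [map_mul]; exact key _ _ (w.nonneg _) hf (w.nonneg _)
    · rw [map_mul, mul_comm]; exact key _ _ (w.nonneg _) he (w.nonneg _)

theorem IsLaurentModel.exists_map_eq (hw : IsLaurentModel F Λ Ω w T) [Algebra.IsAlgebraic Λ Ω]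
    {E : Type} [Field E] [Algebra F E] (σ : E →ₐ[F] Ω) (hT : algebraMap Λ Ω T ∈ σ.fieldRange)
    {y : Ω} (hy : y ∈ IntermediateField.adjoin Λ (Set.range σ)) :
    ∃ e : E, w (σ e) = w y := by
  by_cases hy0 : y = 0
  · exact ⟨0, by rw [hy0, map_zero]⟩
  obtain ⟨e, he⟩ := hw.exists_approx σ hT hy (w y) (w.pos hy0)
  refine ⟨e, ?_⟩
  have := AbsoluteValue.na_add_eq_of_lt hw.nonarch (x := y) (y := -(y - σ e)) (by rwa [w.map_neg])
  rwa [neg_sub, add_sub_cancel] at this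

theorem IsLaurentModel.exists_place_of_algHom (hw : IsLaurentModel F Λ Ω w T)
    [Algebra.IsAlgebraic Λ Ω] [IsAlgClosed Ω] {q : ℕ} (hq : q.Prime) {P E : Type} [Field P]
    [Field E] [Algebra F P] [Algebra F E] [Algebra P E] [IsScalarTower F P E]
    [FiniteDimensional P E] (φ : P →ₐ[F] Λ) {x : P} (hφ : φ x = T⁻¹) :
    ∃ (L : IntermediateField Λ Ω) (σ : E →ₐ[F] Ω), IsGood w q L ∧ (∀ e, σ e ∈ L) ∧
      1 < w (σ (algebraMap P E x)) ∧ ∃ s, ¬ ValueDiv w L q (σ s) := by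
  have hTΩ : algebraMap Λ Ω T ≠ 0 := by simpa using hw.unif_pos
  have hwT : 0 < w (algebraMap Λ Ω T) := w.pos hTΩ
  let _ : Algebra P Λ := φ.toRingHom.toAlgebra
  let _ : Algebra P Ω := ((algebraMap Λ Ω).comp φ.toRingHom).toAlgebra
  have : IsScalarTower P Λ Ω := IsScalarTower.of_algebraMap_eq fun _ => rfl
  have : IsScalarTower F P Ω := IsScalarTower.of_algebraMap_eq fun a => by
    change algebraMap F Ω a = algebraMap Λ Ω (φ (algebraMap F P a))
    rw [φ.commutes, ← IsScalarTower.algebraMap_apply]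
  let σP : E →ₐ[P] Ω := IsAlgClosed.lift
  let σ : E →ₐ[F] Ω := σP.restrictScalars F
  have hσx : σ (algebraMap P E x) = (algebraMap Λ Ω T)⁻¹ := by
    rw [← map_inv₀, ← hφ]
    exact σP.commutes x
  have hTr : algebraMap Λ Ω T ∈ σ.fieldRange := ⟨(algebraMap P E x)⁻¹, by
    change σ _ = _
    rw [map_inv₀, hσx, inv_inv]⟩
  let L₁ := IntermediateField.adjoin Λ (Set.range σ)
  have hmem : ∀ e, σ e ∈ L₁ := fun e => IntermediateField.subset_adjoin _ _ ⟨e, rfl⟩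
  obtain ⟨s, hs⟩ : ∃ s, ¬ ValueDiv w L₁ q (σ s) := by
    by_contra! hcon
    have hiter : ∀ j : ℕ, ∃ e, w (σ e) ^ q ^ j = w (σ (algebraMap P E x)) := by
      intro j
      induction j with
      | zero => exact ⟨algebraMap P E x, by simp⟩
      | succ j ih =>
        obtain ⟨e, he⟩ := ih
        obtain ⟨h, hh, hhe⟩ := hcon e
        obtain ⟨e', he'⟩ := hw.exists_map_eq σ hTr hh
        exact ⟨e', by rw [he', pow_succ', pow_mul, hhe, he]⟩
    let N := Module.finrank P E
    obtain ⟨e, he⟩ := hiter N.factorial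
    have hσe0 : σ e ≠ 0 := by
      intro h0
      rw [h0, hσx, map_zero, zero_pow (pow_ne_zero _ hq.ne_zero), map_inv₀, eq_comm,
        inv_eq_zero] at he
      exact hwT.ne' he
    obtain ⟨k, hk⟩ := hw.map_pow_factorial hσe0 (N := N) (by
      have h1 : IsIntegral P e := IsIntegral.of_finite P e
      have h2 : IsIntegral P (σP e) := h1.map σP
      have h3 := natDegree_le_of_dvd (minpoly.dvd_map_of_isScalarTower P Λ (σP e))
        ((minpoly.monic h2).map _).ne_zero
      rw [natDegree_map, minpoly.algHom_eq σP σP.injective] at h3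
      exact h3.trans (minpoly.natDegree_le e))
    have h4 : w (algebraMap Λ Ω T) ^ (-(N.factorial : ℤ)) =
        w (algebraMap Λ Ω T) ^ (k * (q ^ N.factorial : ℕ)) := by
      rw [zpow_mul, ← hk, zpow_natCast, ← pow_mul, mul_comm, pow_mul, he, hσx, map_inv₀, inv_pow,
        zpow_neg, zpow_natCast]
    have h5 := zpow_right_injective₀ hwT hw.unif_lt.ne h4
    have h6 : ((q ^ N.factorial : ℕ) : ℤ) ∣ (N.factorial : ℤ) := by
      rw [← dvd_neg, h5]; exact dvd_mul_left _ _
    have h7 := Nat.le_of_dvd (Nat.factorial_pos N) (Int.natCast_dvd_natCast.1 h6)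
    exact absurd h7 (not_le.2 (Nat.lt_pow_self hq.one_lt))
  obtain ⟨L, hL₁L, hLgood, hLs⟩ := exists_isGood_ge (hmem s) hs
  refine ⟨L, σ, hLgood, fun e => hL₁L (hmem e), ?_, s, hLs⟩
  rw [hσx, map_inv₀]
  exact (one_lt_inv₀ hwT).2 hw.unif_lt

/-- A function field has a place with a pole at a prescribed nonconstant element. -/
theorem IsLaurentModel.exists_place (hw : IsLaurentModel F Λ Ω w T) [Algebra.IsAlgebraic Λ Ω]
    [IsAlgClosed Ω] {q : ℕ} (hq : q.Prime) {E : Type} [Field E] [Algebra F E] {x : E}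
    (hx : Transcendental F x) [FiniteDimensional (IntermediateField.adjoin F {x}) E] :
    ∃ (L : IntermediateField Λ Ω) (σ : E →ₐ[F] Ω), IsGood w q L ∧ (∀ e, σ e ∈ L) ∧
      1 < w (σ x) ∧ ∃ s, ¬ ValueDiv w L q (σ s) := by
  have hTΩ : algebraMap Λ Ω T ≠ 0 := by simpa using hw.unif_pos
  have hTtr : Transcendental F T⁻¹ := by
    intro halg
    have h1 : IsAlgebraic F (algebraMap Λ Ω T) := by
      have := halg.inv
      rw [inv_inv] at this
      exact this.algebraMap
    exact absurd (hw.map_eq_one_of_isAlgebraic h1 hTΩ) hw.unif_lt.ne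
  refine hw.exists_place_of_algHom hq (P := IntermediateField.adjoin F {x})
    ((IntermediateField.adjoin F {T⁻¹}).val.comp
      ((RatFunc.algEquivOfTranscendental T⁻¹ hTtr).toAlgHom.comp
        (RatFunc.algEquivOfTranscendental x hx).symm.toAlgHom))
    (x := IntermediateField.AdjoinSimple.gen F x) ?_
  have h2 := RatFunc.algEquivOfTranscendental_symm_aeval x hx X
  rw [aeval_X] at h2
  simp [h2]

end Places

section RationalFunction

variable {F Λ Ω : Type} [Field F] [Field Λ] [Field Ω] [Algebra F Λ] [Algebra Λ Ω] [Algebra F Ω]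
  {w : AbsoluteValue Ω ℝ} {T : Λ}

theorem map_ratEval {E E' : Type*} [Field E] [Field E'] [Algebra F E] [Algebra F E'] {m k : ℕ}
    (c : Fin m → F) (b : Fin k → F) (n : Fin m → ℕ) (j : Fin k → ℕ) (σ : E →ₐ[F] E') (x : E) :
    σ (ratEval c b n j x) = ratEval c b n j (σ x) := by
  simp [ratEval, map_div₀, map_prod]

theorem ratEval_mem [IsScalarTower F Λ Ω] {L : IntermediateField Λ Ω} {m k : ℕ}
    (c : Fin m → F) (b : Fin k → F) (n : Fin m → ℕ) (j : Fin k → ℕ) {y : Ω} (hy : y ∈ L) :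
    ratEval c b n j y ∈ L := by
  have h (a : F) : algebraMap F Ω a ∈ L := by
    rw [IsScalarTower.algebraMap_apply F Λ Ω]; exact L.algebraMap_mem _
  exact L.div_mem (prod_mem fun i _ => pow_mem (L.sub_mem hy (h _)) _)
    (prod_mem fun i _ => pow_mem (L.sub_mem hy (h _)) _)

theorem IsLaurentModel.map_add_const (hw : IsLaurentModel F Λ Ω w T) {y : Ω} (hy : 1 < w y)
    (a : F) : w (y + algebraMap F Ω a) = w y :=
  AbsoluteValue.na_add_eq_of_lt hw.nonarch ((hw.map_const_le_one a).trans_lt hy)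

theorem IsLaurentModel.map_sub_const (hw : IsLaurentModel F Λ Ω w T) {y : Ω} (hy : 1 < w y)
    (a : F) : w (y - algebraMap F Ω a) = w y := by
  rw [sub_eq_add_neg, ← map_neg, hw.map_add_const hy]

theorem IsLaurentModel.eq_of_map_sub_lt (hw : IsLaurentModel F Λ Ω w T) {a a' : F}
    (h : w (algebraMap F Ω a - algebraMap F Ω a') < 1) : a = a' := by
  by_contra hne
  rw [← map_sub, hw.const _ (sub_ne_zero.2 hne)] at h
  exact h.false

theorem IsLaurentModel.finite_map_add_lt (hw : IsLaurentModel F Λ Ω w T) (y : Ω) :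
    {a : F | w (y + algebraMap F Ω a) < 1}.Finite := by
  refine Set.Subsingleton.finite fun a ha a' ha' => hw.eq_of_map_sub_lt ?_
  simpa using AbsoluteValue.na_sub_lt hw.nonarch ha ha'

theorem IsLaurentModel.map_ratEval_of_lt (hw : IsLaurentModel F Λ Ω w T) {m k : ℕ}
    (c : Fin m → F) (b : Fin k → F) (n : Fin m → ℕ) (j : Fin k → ℕ) {y : Ω} (hy : 1 < w y)
    {d : ℕ} (hd : ∑ i, n i = ∑ i, j i + d) : w (ratEval c b n j y) = w (y ^ d) := by
  have h0 : w y ≠ 0 := (zero_lt_one.trans hy).ne'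
  simp only [ratEval, map_div₀, map_prod, map_pow, hw.map_sub_const hy, Finset.prod_pow_eq_pow_sum]
  rw [hd, pow_add, mul_div_cancel_left₀ _ (pow_ne_zero _ h0)]

theorem IsLaurentModel.pow_ne_ratEval (hw : IsLaurentModel F Λ Ω w T) {q : ℕ} (hq : q.Prime)
    {L : IntermediateField Λ Ω} {m k : ℕ}
    (c : Fin m → F) (b : Fin k → F) (n : Fin m → ℕ) (j : Fin k → ℕ) {d : ℕ}
    (hd : ∑ i, n i = ∑ i, j i + d) (hqd : ¬ q ∣ d) {y : Ω} (hyL : y ∈ L) (hy : 1 < w y)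
    (hnd : ¬ ValueDiv w L q y) {z : Ω} (hz : z ∈ L) : z ^ q ≠ ratEval c b n j y := by
  intro h
  refine hnd (ValueDiv.of_pow hyL ((hq.coprime_iff_not_dvd.2 hqd).symm) ⟨z, hz, ?_⟩)
  rw [← map_pow, h, hw.map_ratEval_of_lt c b n j hy hd]

theorem IsGood.exists_pow_eq_ratEval (hw : IsLaurentModel F Λ Ω w T) [Algebra.IsAlgebraic Λ Ω]
    [IsAlgClosed Ω] [IsScalarTower F Λ Ω] {q : ℕ} (hq : q.Prime) (hqF : (q : F) ≠ 0)
    {L : IntermediateField Λ Ω} (hL : IsGood w q L) {m k : ℕ}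
    (c : Fin m → F) (b : Fin k → F) (n : Fin m → ℕ) (j : Fin k → ℕ) {d : ℕ}
    (hd : ∑ i, n i = ∑ i, j i + d) {y : Ω} (hyL : y ∈ L) (hy : 1 < w y → ValueDiv w L q y) :
    {a : F | ¬ ∃ z ∈ L, z ^ q = ratEval c b n j (y + algebraMap F Ω a)}.Finite := by
  have hmem (a : F) : ratEval c b n j (y + algebraMap F Ω a) ∈ L := by
    refine ratEval_mem c b n j (L.add_mem hyL ?_)
    rw [IsScalarTower.algebraMap_apply F Λ Ω]; exact L.algebraMap_mem _
  by_cases h1 : 1 < w y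
  · convert Set.finite_empty
    refine Set.eq_empty_of_forall_notMem fun a ha => ha (hL.exists_pow_eq hw hq hqF (hmem a) ?_)
    obtain ⟨h, hhL, hh⟩ := hy h1
    refine ⟨h ^ d, pow_mem hhL _, ?_⟩
    rw [hw.map_ratEval_of_lt c b n j (by rwa [hw.map_add_const h1]) hd, map_pow, map_pow,
      hw.map_add_const h1, ← hh]
    ring
  · refine ((Set.finite_iUnion fun i => hw.finite_map_add_lt (y - algebraMap F Ω (c i))).union
      (Set.finite_iUnion fun i => hw.finite_map_add_lt (y - algebraMap F Ω (b i)))).subset ?_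
    intro a ha
    by_contra hcon
    simp only [Set.mem_union, Set.mem_iUnion, Set.mem_ofPred_eq, not_or, not_exists, not_lt] at hcon
    have hone (e : F) (he : 1 ≤ w (y - algebraMap F Ω e + algebraMap F Ω a)) :
        w (y + algebraMap F Ω a - algebraMap F Ω e) = 1 := by
      rw [sub_add_eq_add_sub] at he
      refine le_antisymm ?_ he
      exact AbsoluteValue.na_sub_le hw.nonarch (AbsoluteValue.na_add_le hw.nonarch (not_lt.1 h1)
        (hw.map_const_le_one _)) (hw.map_const_le_one _)
    refine ha (hL.exists_pow_eq hw hq hqF (hmem a) ⟨1, L.one_mem, ?_⟩)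
    simp only [ratEval, map_div₀, map_prod, map_pow, fun i => hone (c i) (hcon.1 i),
      fun i => hone (b i) (hcon.2 i), map_one, one_pow, Finset.prod_const_one, div_one]

theorem IsLaurentModel.finite_one_lt_map_div (hw : IsLaurentModel F Λ Ω w T) (y : Ω) :
    {a : F | 1 < w (y / (1 + algebraMap F Ω a * y ^ 2))}.Finite := by
  refine ((Set.finite_singleton (0 : F)).union (hw.finite_map_add_lt ((y ^ 2)⁻¹))).subset ?_
  intro a ha
  by_contra hcon
  simp only [Set.mem_union, Set.mem_singleton_iff, Set.mem_ofPred_eq, not_or, not_lt] at hcon ha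
  obtain ⟨ha0, ha1⟩ := hcon
  have hy0 : y ≠ 0 := by
    rintro rfl
    simp at ha
    linarith
  have hwy : 0 < w y := w.pos hy0
  refine ha.not_ge ?_
  rcases lt_or_ge (w y) 1 with h | h
  · have : w (1 + algebraMap F Ω a * y ^ 2) = 1 := by
      rw [AbsoluteValue.na_add_eq_of_lt hw.nonarch, map_one]
      rw [map_mul, map_pow, map_one, hw.const a ha0, one_mul]
      exact pow_lt_one₀ hwy.le h two_ne_zero
    rw [map_div₀, this, div_one]
    exact h.le
  · have : 1 + algebraMap F Ω a * y ^ 2 = y ^ 2 * ((y ^ 2)⁻¹ + algebraMap F Ω a) := by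
      field_simp
    rw [map_div₀, this, map_mul, map_pow, div_le_one (by positivity)]
    calc w y = w y * 1 * 1 := by ring
      _ ≤ w y * w y * w ((y ^ 2)⁻¹ + algebraMap F Ω a) := by gcongr
      _ = _ := by ring

end RationalFunction

theorem finiteDimensional_adjoin_of_transcendental {F P E : Type} [Field F] [Field P] [Field E]
    [Algebra F P] [Algebra P E] [Algebra F E] [IsScalarTower F P E] {τ : P}
    (hτ : IntermediateField.adjoin F {τ} = ⊤) [FiniteDimensional P E] {x : E}
    (hx : Transcendental F x) : FiniteDimensional (IntermediateField.adjoin F {x}) E := by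
  have halg : Algebra.IsAlgebraic (Algebra.adjoin F {τ}) P := by
    have h1 : Algebra.IsAlgebraic (IntermediateField.adjoin F {τ}) P :=
      ⟨fun y => isAlgebraic_algebraMap (⟨y, hτ ▸ IntermediateField.mem_top⟩ :
        IntermediateField.adjoin F {τ})⟩
    open scoped IntermediateField.algebraAdjoinAdjoin in
    exact (IsFractionRing.comap_isAlgebraic_iff (K := IntermediateField.adjoin F {τ})).2 h1
  have hdeg : Algebra.trdeg F E ≤ 1 := by
    rw [← trdeg_add_eq F P, trdeg_eq_zero (R := P), add_zero]
    simpa using Algebra.IsAlgebraic.trdeg_le_cardinalMk F ({τ} : Set P)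
  have hind : AlgebraicIndependent F (fun _ : Unit => x) :=
    algebraicIndependent_unique_type_iff.2 hx
  have hbasis := hind.isTranscendenceBasis_of_trdeg_le_of_finite (by simpa using hdeg)
  have h2 := hbasis.isAlgebraic_field
  rw [Set.range_const] at h2
  have h3 : Algebra.EssFiniteType F P :=
    IntermediateField.fg_top_iff.1
      (hτ ▸ IntermediateField.fg_adjoin_of_finite (Set.finite_singleton τ))
  have h4 : Algebra.EssFiniteType F E := Algebra.EssFiniteType.comp F P E
  have h5 := Algebra.EssFiniteType.of_comp F (IntermediateField.adjoin F {x}) E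
  exact Algebra.finite_of_essFiniteType_of_isAlgebraic

section Places

variable {F Λ Ω : Type} [Field F] [Field Λ] [Field Ω] [Algebra Λ Ω] [Algebra F Ω]
  {w : AbsoluteValue Ω ℝ}

/-- A place of `E` with respect to `q`: an embedding `σ` of `E` into a field `L` that is maximal
with respect to not dividing some value by `q`, such that already the value of some element
of `E` is not divisible by `q`. -/
structure IsPlace (w : AbsoluteValue Ω ℝ) (q : ℕ) {E : Type} [Field E] [Algebra F E]
    (L : IntermediateField Λ Ω) (σ : E →ₐ[F] Ω) : Prop where
  good : IsGood w q L
  mem : ∀ e, σ e ∈ L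
  nondiv : ∃ s, ¬ ValueDiv w L q (σ s)

theorem IsPlace.exists_extend {q : ℕ} {E E' M : Type} [Field E] [Field E'] [Field M] [Algebra F E]
    [Algebra F E'] [Algebra E M] {L : IntermediateField Λ Ω} {σ : E →ₐ[F] Ω}
    (hσ : IsPlace w q L σ) {β : M} (hβ : IsIntegral E β) {ρ : Ω} (hρL : ρ ∈ L)
    (hρ : (minpoly E β).eval₂ σ.toRingHom ρ = 0) (ι : E →ₐ[F] E')
    (ε : E' →+* IntermediateField.adjoin E {β}) (hε : ∀ x, ε (ι x) = algebraMap E _ x) :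
    ∃ σ' : E' →ₐ[F] Ω, IsPlace w q L σ' ∧ ∀ x : E, σ' (ι x) = σ x := by
  set δ := (IntermediateField.adjoinRootEquivAdjoin E hβ).symm
  let f : AdjoinRoot (minpoly E β) →+* Ω := AdjoinRoot.lift σ.toRingHom ρ hρ
  have hf (e : E) : f (δ (ε (ι e))) = σ e := by
    rw [hε, AlgEquiv.commutes]
    exact AdjoinRoot.lift_of hρ
  let σ' : E' →ₐ[F] Ω :=
    { f.comp (δ.toRingEquiv.toRingHom.comp ε) with
      commutes' := fun a => by
        change f (δ (ε (algebraMap F _ a))) = _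
        rw [← ι.commutes, hf, AlgHom.commutes] }
  refine ⟨σ', ⟨hσ.good, fun e => ?_, ?_⟩, hf⟩
  · change f (δ (ε e)) ∈ L
    obtain ⟨g, hg⟩ := AdjoinRoot.mk_surjective (δ (ε e))
    rw [← hg, AdjoinRoot.lift_mk, eval₂_eq_sum_range]
    exact sum_mem fun i _ => mul_mem (hσ.mem _) (pow_mem hρL _)
  · obtain ⟨s, hs⟩ := hσ.nondiv
    refine ⟨ι s, ?_⟩
    change ¬ ValueDiv w L q (f (δ (ε _)))
    rwa [hf]

end Places

section Conditions

variable {F Λ Ω : Type} [Field F] [Field Λ] [Field Ω] [Algebra Λ Ω] [Algebra F Ω]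
  {w : AbsoluteValue Ω ℝ} {M : Type} [Field M] [Algebra F M]

instance isScalarTower_intermediateField {P : IntermediateField F M} (K : IntermediateField P M) :
    IsScalarTower F K M :=
  IsScalarTower.of_algebraMap_eq fun _ => rfl

theorem mem_of_adjoin {t : M} (K : IntermediateField (IntermediateField.adjoin F {t}) M) :
    t ∈ K :=
  K.algebraMap_mem (IntermediateField.AdjoinSimple.gen F t)

/-- A finite approximation to the field to be constructed: a finite extension of `F(t)` inside
`M` together with finitely many places to be preserved. The places of type `u ≠ 0` are required
to be centered, with respect to `t`, at an element of `A u`. -/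
structure Condition (Λ : Type) [Field Λ] [Algebra Λ Ω] (w : AbsoluteValue Ω ℝ) (t : M) (q : ℕ → ℕ)
    (A : ℕ → Set F) where
  field : IntermediateField (IntermediateField.adjoin F {t}) M
  finite : FiniteDimensional (IntermediateField.adjoin F {t}) field
  places : Set (ℕ × IntermediateField Λ Ω × (field →ₐ[F] Ω))
  places_finite : places.Finite
  isPlace : ∀ {u L σ}, (u, L, σ) ∈ places → IsPlace w (q u) L σ
  near : ∀ {u L σ}, (u, L, σ) ∈ places → u ≠ 0 → ∃ a ∈ A u,
    w (σ ⟨t, mem_of_adjoin field⟩ - algebraMap F Ω a) < 1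

namespace Condition

variable {t : M} {q : ℕ → ℕ} {A : ℕ → Set F}

/-- The order on conditions: the field grows and every place extends. -/
def Le (p p' : Condition Λ w t q A) : Prop :=
  ∃ h : p.field ≤ p'.field, ∀ u L σ, (u, L, σ) ∈ p.places →
    ∃ σ', (u, L, σ') ∈ p'.places ∧ ∀ x, σ' (IntermediateField.inclusion h x) = σ x

theorem Le.refl (p : Condition Λ w t q A) : p.Le p :=
  ⟨le_rfl, fun _ _ σ h => ⟨σ, h, fun _ => rfl⟩⟩

theorem Le.trans {p₁ p₂ p₃ : Condition Λ w t q A} (h : p₁.Le p₂) (h' : p₂.Le p₃) : p₁.Le p₃ := by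
  obtain ⟨h, H⟩ := h
  obtain ⟨h', H'⟩ := h'
  refine ⟨h.trans h', fun u L σ hσ => ?_⟩
  obtain ⟨σ₁, hσ₁, e₁⟩ := H u L σ hσ
  obtain ⟨σ₂, hσ₂, e₂⟩ := H' u L σ₁ hσ₁
  exact ⟨σ₂, hσ₂, fun x => by rw [← e₁, ← e₂]; rfl⟩

theorem Le.field_le {p p' : Condition Λ w t q A} (h : p.Le p') : p.field ≤ p'.field := h.1

/-- Every place of `p'` restricts to a place of `p`. -/
def NoNewPlaces (p p' : Condition Λ w t q A) : Prop :=
  ∃ h : p.field ≤ p'.field, ∀ u L σ', (u, L, σ') ∈ p'.places →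
    ∃ σ, (u, L, σ) ∈ p.places ∧ ∀ x, σ' (IntermediateField.inclusion h x) = σ x

/-- The element `x` has a pole at some place of type `u`. -/
def Pole (p : Condition Λ w t q A) (u : ℕ) (x : M) : Prop :=
  ∃ (hx : x ∈ p.field) (L : _) (σ : _), (u, L, σ) ∈ p.places ∧ 1 < w (σ ⟨x, hx⟩)

/-- The element `x` has a pole at some place of type `u`, where its value is not divisible
by `q u`. -/
def Bad (p : Condition Λ w t q A) (u : ℕ) (x : M) : Prop :=
  ∃ (hx : x ∈ p.field) (L : _) (σ : _), (u, L, σ) ∈ p.places ∧ 1 < w (σ ⟨x, hx⟩) ∧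
    ¬ ValueDiv w L (q u) (σ ⟨x, hx⟩)

theorem Pole.mono {p p' : Condition Λ w t q A} {u : ℕ} {x : M} (h : p.Pole u x) (hp : p.Le p') :
    p'.Pole u x := by
  obtain ⟨hx, L, σ, hσ, h1⟩ := h
  obtain ⟨hle, H⟩ := hp
  obtain ⟨σ', hσ', e⟩ := H u L σ hσ
  have := e ⟨x, hx⟩
  exact ⟨hle hx, L, σ', hσ', by rw [← this] at h1; exact h1⟩

theorem Bad.mono {p p' : Condition Λ w t q A} {u : ℕ} {x : M} (h : p.Bad u x) (hp : p.Le p') :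
    p'.Bad u x := by
  obtain ⟨hx, L, σ, hσ, h1⟩ := h
  obtain ⟨hle, H⟩ := hp
  obtain ⟨σ', hσ', e⟩ := H u L σ hσ
  have := e ⟨x, hx⟩
  exact ⟨hle hx, L, σ', hσ', by rw [← this] at h1; exact h1⟩

theorem exists_field_extend {P : IntermediateField F M} (K : IntermediateField P M)
    [FiniteDimensional P K] {β : M} (hβ : IsIntegral K β) :
    ∃ (K' : IntermediateField P M) (hK' : K ≤ K'), FiniteDimensional P K' ∧ β ∈ K' ∧
      ∀ (q : ℕ) (L : IntermediateField Λ Ω) (σ : K →ₐ[F] Ω) (ρ : Ω), IsPlace w q L σ → ρ ∈ L →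
        (minpoly K β).eval₂ σ.toRingHom ρ = 0 →
        ∃ σ' : K' →ₐ[F] Ω, IsPlace w q L σ' ∧ ∀ e : K, σ' ⟨e, hK' e.2⟩ = σ e := by
  have := IntermediateField.adjoin.finiteDimensional hβ
  have hfin : FiniteDimensional P ((IntermediateField.adjoin K {β}).restrictScalars P) :=
    FiniteDimensional.trans P K (IntermediateField.adjoin K {β})
  have hle : K ≤ (IntermediateField.adjoin K {β}).restrictScalars P := fun x hx =>
    (IntermediateField.mem_restrictScalars P).2
      ((IntermediateField.adjoin K {β}).algebraMap_mem ⟨x, hx⟩)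
  have hβ' : β ∈ (IntermediateField.adjoin K {β}).restrictScalars P :=
    (IntermediateField.mem_restrictScalars P).2 (IntermediateField.mem_adjoin_simple_self _ _)
  refine ⟨_, hle, hfin, hβ', fun q L σ ρ hσ hρL hρ => ?_⟩
  exact hσ.exists_extend hβ hρL hρ (E' := (IntermediateField.adjoin K {β}).restrictScalars P)
    { toFun := fun x => ⟨x, (IntermediateField.adjoin K {β}).algebraMap_mem x⟩
      map_one' := rfl
      map_mul' := fun _ _ => rfl
      map_zero' := rfl
      map_add' := fun _ _ => rfl
      commutes' := fun _ => rfl }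
    (RingHom.id (IntermediateField.adjoin K {β})) fun _ => rfl

theorem exists_extend (p : Condition Λ w t q A) {β : M} (hβ : IsIntegral p.field β)
    (hroot : ∀ u L σ, (u, L, σ) ∈ p.places →
      ∃ ρ ∈ L, (minpoly p.field β).eval₂ σ.toRingHom ρ = 0) :
    ∃ p' : Condition Λ w t q A, p.Le p' ∧ p.NoNewPlaces p' ∧ β ∈ p'.field := by
  choose! ρ hρL hρ using hroot
  have := p.finite
  have := p.places_finite.to_subtype
  obtain ⟨K', hK', hfin, hβK', hplaces⟩ := exists_field_extend (Λ := Λ) (w := w) p.field hβ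
  have hplaces' (v : p.places) := hplaces _ _ _ _ (p.isPlace v.2) (hρL _ _ _ v.2) (hρ _ _ _ v.2)
  choose f hf hfe using hplaces'
  have hS : ∀ u L σ', (u, L, σ') ∈ Set.range (fun v : p.places => (v.1.1, v.1.2.1, f v)) →
      ∃ σ, (u, L, σ) ∈ p.places ∧ IsPlace w (q u) L σ' ∧ ∀ e : p.field, σ' ⟨e, hK' e.2⟩ = σ e := by
    rintro u L σ ⟨v, hv⟩
    obtain ⟨rfl, h⟩ := Prod.mk.inj hv
    obtain ⟨rfl, rfl⟩ := Prod.mk.inj h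
    exact ⟨v.1.2.2, v.2, hf v, hfe v⟩
  refine ⟨{
    field := K'
    finite := hfin
    places := Set.range fun v : p.places => (v.1.1, v.1.2.1, f v)
    places_finite := Set.finite_range _
    isPlace := fun hσ => (hS _ _ _ hσ).choose_spec.2.1
    near := ?_ }, ⟨hK', ?_⟩, ⟨hK', ?_⟩, hβK'⟩
  · intro u L σ' hσ' hu
    obtain ⟨σ, hσ, -, e⟩ := hS u L σ' hσ'
    obtain ⟨a, ha, h⟩ := p.near hσ hu
    rw [← e] at h
    exact ⟨a, ha, h⟩
  · intro u L σ hσ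
    exact ⟨f ⟨_, hσ⟩, Set.mem_range_self (⟨_, hσ⟩ : p.places), hfe ⟨_, hσ⟩⟩
  · intro u L σ' hσ'
    obtain ⟨σ, hσ, -, e⟩ := hS u L σ' hσ'
    exact ⟨σ, hσ, e⟩

end Condition

end Conditions

/-- The data of the theorem: distinct primes `q u` different from the characteristic, and rational
functions `R u` of degree `d u` prime to `q u` whose values at elements of `M` are `q u`-th powers
in `M`. -/
structure RootData (F M : Type) [Field F] [Field M] [Algebra F M] where
  q : ℕ → ℕ
  prime : ∀ u, (q u).Prime
  inj : Function.Injective q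
  ne_zero : ∀ u, (q u : F) ≠ 0
  m : ℕ → ℕ
  k : ℕ → ℕ
  c : (u : ℕ) → Fin (m u) → F
  b : (u : ℕ) → Fin (k u) → F
  n : (u : ℕ) → Fin (m u) → ℕ
  j : (u : ℕ) → Fin (k u) → ℕ
  d : ℕ → ℕ
  deg : ∀ u, ∑ i, n u i = ∑ i, j u i + d u
  not_dvd : ∀ u, ¬ q u ∣ d u
  roots : ∀ u, ∀ x : M, ∃ y : M, y ^ q u = ratEval (c u) (b u) (n u) (j u) x

/-- The value of the `u`-th rational function. -/
noncomputable def RootData.R {F M : Type} [Field F] [Field M] [Algebra F M] (D : RootData F M)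
    (u : ℕ) {E : Type} [Field E] [Algebra F E] (x : E) : E :=
  ratEval (D.c u) (D.b u) (D.n u) (D.j u) x

theorem RootData.map_R {F M : Type} [Field F] [Field M] [Algebra F M] (D : RootData F M)
    (u : ℕ) {E E' : Type} [Field E] [Algebra F E] [Field E'] [Algebra F E'] (σ : E →ₐ[F] E')
    (x : E) : σ (D.R u x) = D.R u (σ x) :=
  map_ratEval ..

theorem RootData.coe_R {F M : Type} [Field F] [Field M] [Algebra F M] {D : RootData F M}
    {P : IntermediateField F M} (K : IntermediateField P M) (u : ℕ) (x : K) :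
    ((D.R u x : K) : M) = D.R u (x : M) :=
  D.map_R u (IsScalarTower.toAlgHom F K M) x

section Dense

variable {F Λ Ω : Type} [Field F] [Field Λ] [Field Ω] [Algebra Λ Ω] [Algebra F Ω]
  {w : AbsoluteValue Ω ℝ} {T : Λ} {M : Type} [Field M] [Algebra F M]

theorem IsPlace.exists_root [Algebra F Λ] (hw : IsLaurentModel F Λ Ω w T) [Algebra.IsAlgebraic Λ Ω]
    [IsAlgClosed Ω] {q : ℕ} (hq : q.Prime) {E : Type} [Field E] [Algebra F E]
    {L : IntermediateField Λ Ω} {σ : E →ₐ[F] Ω} (hσ : IsPlace w q L σ) (g : E[X])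
    (hg : ¬ q ∣ g.natDegree) : ∃ ρ ∈ L, g.eval₂ σ.toRingHom ρ = 0 := by
  let τ : E →+* L := σ.toRingHom.codRestrict L hσ.mem
  obtain ⟨x, hx⟩ := IsGood.exists_root hw hq hσ.good (g.map τ) (by rwa [natDegree_map])
  refine ⟨x, x.2, ?_⟩
  rw [IsRoot.def, eval_map] at hx
  have h := congrArg (algebraMap L Ω) hx
  rw [hom_eval₂, map_zero] at h
  exact h

namespace Condition

variable {t : M} {D : RootData F M} {A : ℕ → Set F}

/-- A witness for `s` being good for `u` has been put into the field. -/
def Committed (p : Condition Λ w t D.q A) (u : ℕ) (s : M) : Prop :=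
  s ∈ p.field ∧ ∃ α ∈ p.field, α ≠ 0 ∧ (∃ z ∈ p.field, z ^ D.q u = D.R u (s + α)) ∧
    ∃ z ∈ p.field, z ^ D.q u = D.R u (s + α⁻¹)

theorem Committed.mono {p p' : Condition Λ w t D.q A} {u : ℕ} {s : M} (h : p.Committed u s)
    (hp : p.Le p') : p'.Committed u s := by
  obtain ⟨hs, α, hα, hα0, ⟨z, hz, e⟩, z', hz', e'⟩ := h
  have := hp.field_le
  exact ⟨this hs, α, this hα, hα0, ⟨z, this hz, e⟩, z', this hz', e'⟩

theorem finite_setOf_exists_places (p : Condition Λ w t D.q A)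
    {P : (u : ℕ) → (L : IntermediateField Λ Ω) → (σ : p.field →ₐ[F] Ω) → F → Prop}
    (h : ∀ u L σ, (u, L, σ) ∈ p.places → {a | P u L σ a}.Finite) :
    {a | ∃ u L σ, (u, L, σ) ∈ p.places ∧ P u L σ a}.Finite := by
  refine (p.places_finite.biUnion fun v hv => h v.1 v.2.1 v.2.2 hv).subset ?_
  rintro a ⟨u, L, σ, hσ, ha⟩
  exact Set.mem_biUnion hσ ha

variable [Algebra F Λ]

theorem exists_extend_of_not_dvd (hw : IsLaurentModel F Λ Ω w T) [Algebra.IsAlgebraic Λ Ω]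
    [IsAlgClosed Ω] (p : Condition Λ w t D.q A) {β : M} (hβ : IsIntegral p.field β)
    (hdeg : ∀ u, ¬ D.q u ∣ (minpoly p.field β).natDegree) :
    ∃ p' : Condition Λ w t D.q A, p.Le p' ∧ β ∈ p'.field := by
  obtain ⟨p', h, -, h'⟩ := p.exists_extend hβ fun u L σ hσ =>
    (p.isPlace hσ).exists_root hw (D.prime u) _ (hdeg u)
  exact ⟨p', h, h'⟩

theorem exists_extend_root (hw : IsLaurentModel F Λ Ω w T) [Algebra.IsAlgebraic Λ Ω]
    [IsAlgClosed Ω] (p : Condition Λ w t D.q A) (u : ℕ) (z : p.field) {β : M}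
    (hβ : β ^ D.q u = z)
    (hz : ∀ L σ, (u, L, σ) ∈ p.places → ∃ y ∈ L, y ^ D.q u = σ z) :
    ∃ p' : Condition Λ w t D.q A, p.Le p' ∧ p.NoNewPlaces p' ∧
      ∃ β' ∈ p'.field, β' ^ D.q u = z := by
  by_cases h : ∃ y : p.field, y ^ D.q u = z
  · obtain ⟨y, hy⟩ := h
    exact ⟨p, Le.refl p, ⟨le_rfl, fun u L σ hσ => ⟨σ, hσ, fun _ => rfl⟩⟩, y, y.2,
      by rw [← hy]; rfl⟩
  push Not at h
  have hirr := X_pow_sub_C_irreducible_of_prime (D.prime u) h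
  have hmonic : (X ^ D.q u - C z).Monic := monic_X_pow_sub_C z (D.prime u).ne_zero
  have heval : aeval β (X ^ D.q u - C z) = 0 := by
    simp [hβ]
  have hinteg : IsIntegral p.field β := ⟨_, hmonic, heval⟩
  have hmin := minpoly.eq_of_irreducible_of_monic hirr heval hmonic
  obtain ⟨p', hp, hn, hmem⟩ := p.exists_extend hinteg (by
    intro u' L σ hσ
    by_cases huu : u' = u
    · subst huu
      obtain ⟨y, hyL, hy⟩ := hz L σ hσ
      refine ⟨y, hyL, ?_⟩
      rw [← hmin]
      simp [eval₂_sub, eval₂_pow, hy]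
    · refine (p.isPlace hσ).exists_root hw (D.prime u') _ ?_
      rw [← hmin, natDegree_X_pow_sub_C]
      exact fun hdvd => huu (D.inj ((Nat.prime_dvd_prime_iff_eq (D.prime u') (D.prime u)).1 hdvd)))
  exact ⟨p', hp, hn, β, hmem, hβ⟩

theorem finite_not_exists_pow_eq (hw : IsLaurentModel F Λ Ω w T) [Algebra.IsAlgebraic Λ Ω]
    [IsAlgClosed Ω] [IsScalarTower F Λ Ω] (p : Condition Λ w t D.q A) {u : ℕ} {s : p.field}
    (hs : ¬ p.Bad u s) : {a : F | ∃ L σ, (u, L, σ) ∈ p.places ∧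
      ¬ ∃ z ∈ L, z ^ D.q u = σ (D.R u (s + algebraMap F _ a))}.Finite := by
  refine (p.finite_setOf_exists_places (P := fun u' L σ a => u' = u ∧
    ¬ ∃ z ∈ L, z ^ D.q u = D.R u (σ s + algebraMap F _ a)) ?_).subset ?_
  · intro u' L σ hσ
    by_cases huu : u' = u
    · subst huu
      simp only [true_and]
      refine (p.isPlace hσ).good.exists_pow_eq_ratEval hw (D.prime u') (D.ne_zero u') _ _ _ _
        (D.deg u') ((p.isPlace hσ).mem s) fun h1 => ?_
      by_contra hnd
      exact hs ⟨s.2, L, σ, hσ, h1, hnd⟩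
    · simp [huu]
  · rintro a ⟨L, σ, hσ, h⟩
    rw [D.map_R, map_add, AlgHom.commutes] at h
    exact ⟨u, L, σ, hσ, rfl, h⟩

theorem exists_committed (hw : IsLaurentModel F Λ Ω w T) [Algebra.IsAlgebraic Λ Ω]
    [IsAlgClosed Ω] [IsScalarTower F Λ Ω] [Infinite F] (p : Condition Λ w t D.q A) {u : ℕ} {s : M}
    (hs : s ∈ p.field) (hbad : ¬ p.Bad u s) :
    ∃ p' : Condition Λ w t D.q A, p.Le p' ∧ p'.Committed u s := by
  have hfin := p.finite_not_exists_pow_eq hw (s := ⟨s, hs⟩) hbad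
  obtain ⟨a, ha⟩ := ((hfin.union (hfin.preimage inv_injective.injOn)).union
    (Set.finite_singleton 0)).exists_notMem
  simp only [Set.mem_union, not_or, Set.mem_preimage, Set.mem_ofPred_eq, not_exists, not_and,
    Set.mem_singleton_iff] at ha
  obtain ⟨⟨h1, h2⟩, ha0⟩ := ha
  have hR (a : F) : ((D.R u ((⟨s, hs⟩ : p.field) + algebraMap F _ a) : p.field) : M) =
      D.R u (s + algebraMap F M a) :=
    RootData.coe_R p.field u _
  obtain ⟨β, hβ⟩ := D.roots u (s + algebraMap F M a)
  obtain ⟨p₁, hp₁, ⟨hle, hn₁⟩, β₁, hβ₁, e₁⟩ := p.exists_extend_root hw u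
    (D.R u (⟨s, hs⟩ + algebraMap F _ a)) (by rw [hR]; exact hβ) fun L σ hσ => by
      simpa using h1 L σ hσ
  obtain ⟨β', hβ'⟩ := D.roots u (s + algebraMap F M a⁻¹)
  obtain ⟨p₂, hp₂, -, β₂, hβ₂, e₂⟩ := p₁.exists_extend_root hw u
    (IntermediateField.inclusion hle (D.R u (⟨s, hs⟩ + algebraMap F _ a⁻¹)))
    (by rw [IntermediateField.coe_inclusion, hR]; exact hβ') fun L σ' hσ' => by
      obtain ⟨σ, hσ, e⟩ := hn₁ u L σ' hσ'
      rw [e]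
      simpa using h2 L σ hσ
  have hle₂ := (hp₁.trans hp₂).field_le
  refine ⟨p₂, hp₁.trans hp₂, hle₂ hs, algebraMap F M a, ?_, ?_, ⟨β₁, hp₂.field_le hβ₁, ?_⟩,
    β₂, hβ₂, ?_⟩
  · exact p₂.field.algebraMap_mem (algebraMap F _ a)
  · simpa using ha0
  · rw [e₁, hR]
  · rw [← map_inv₀]
    rw [e₂, IntermediateField.coe_inclusion, hR]

theorem Bad.not_committed (hw : IsLaurentModel F Λ Ω w T) {p : Condition Λ w t D.q A} {u : ℕ}
    {s : M} (h : p.Bad u s) : ¬ p.Committed u s := by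
  rintro ⟨hs, α, hα, hα0, ⟨z, hz, e⟩, z', hz', e'⟩
  obtain ⟨hs', L, σ, hσ, h1, hnd⟩ := h
  have key (y z : p.field) (hy : w (σ y) ≤ 1) (hz : (z : M) ^ D.q u = D.R u (s + (y : M))) :
      False := by
    have hz : z ^ D.q u = D.R u (⟨s, hs⟩ + y) := by
      apply Subtype.val_injective
      rw [RootData.coe_R]
      exact hz
    have hv : w (σ (⟨s, hs⟩ + y)) = w (σ ⟨s, hs⟩) := by
      rw [map_add]
      exact AbsoluteValue.na_add_eq_of_lt hw.nonarch (hy.trans_lt h1)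
    refine hw.pow_ne_ratEval (D.prime u) (D.c u) (D.b u) (D.n u) (D.j u) (D.deg u) (D.not_dvd u)
      ((p.isPlace hσ).mem (⟨s, hs⟩ + y)) (hv ▸ h1) ?_ ((p.isPlace hσ).mem z) ?_
    · rintro ⟨h, hh, e⟩
      exact hnd ⟨h, hh, e.trans hv⟩
    · rw [← map_pow, hz, D.map_R]
      rfl
  rcases le_total (w (σ ⟨α, hα⟩)) 1 with h | h
  · exact key ⟨α, hα⟩ ⟨z, hz⟩ h e
  · refine key ⟨α, hα⟩⁻¹ ⟨z', hz'⟩ ?_ e'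
    rw [map_inv₀, map_inv₀]
    exact inv_le_one_of_one_le₀ h

end Condition

end Dense

section ValueDiv

variable {F Λ Ω : Type} [Field F] [Field Λ] [Field Ω] [Algebra Λ Ω] [Algebra F Ω]
  {w : AbsoluteValue Ω ℝ}

theorem ValueDiv.congr {L : IntermediateField Λ Ω} {q : ℕ} {x y : Ω} (h : ValueDiv w L q x)
    (hxy : w x = w y) : ValueDiv w L q y := by
  obtain ⟨z, hz, e⟩ := h
  exact ⟨z, hz, e.trans hxy⟩

theorem ValueDiv.of_map_eq_one {L : IntermediateField Λ Ω} {q : ℕ} {x : Ω} (h : w x = 1) :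
    ValueDiv w L q x :=
  ⟨1, L.one_mem, by rw [map_one, one_pow, h]⟩

theorem ValueDiv.of_mul_pow {L : IntermediateField Λ Ω} {q : ℕ} {x y : Ω} (hy : y ∈ L)
    (hy0 : y ≠ 0) (m : ℕ) (h : ValueDiv w L q (x * y ^ (q * m))) : ValueDiv w L q x := by
  obtain ⟨z, hz, e⟩ := h
  refine ⟨z / y ^ m, L.div_mem hz (pow_mem hy _), ?_⟩
  have : w y ≠ 0 := w.ne_zero hy0
  rw [map_div₀, div_pow, e, map_mul, map_pow, map_pow, ← pow_mul, mul_comm m q, mul_div_assoc,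
    div_self (pow_ne_zero _ this), mul_one]

theorem IsPlace.exists_not_valueDiv_lt {q : ℕ} (hq : q ≠ 0) {E : Type} [Field E] [Algebra F E]
    {L : IntermediateField Λ Ω} {σ : E →ₐ[F] Ω} (hσ : IsPlace w q L σ) :
    ∃ s, 0 < w (σ s) ∧ w (σ s) < 1 ∧ ¬ ValueDiv w L q (σ s) := by
  obtain ⟨s, hs⟩ := hσ.nondiv
  have h0 : 0 < w (σ s) := by
    refine w.pos fun h => hs ⟨0, L.zero_mem, ?_⟩
    rw [h, map_zero, zero_pow hq]
  rcases lt_trichotomy (w (σ s)) 1 with h | h | h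
  · exact ⟨s, h0, h, hs⟩
  · exact (hs (.of_map_eq_one h)).elim
  · refine ⟨s⁻¹, ?_, ?_, ?_⟩ <;> rw [map_inv₀]
    · rw [map_inv₀]; positivity
    · rw [map_inv₀]; exact inv_lt_one_of_one_lt₀ h
    · rintro ⟨z, hz, e⟩
      refine hs ⟨z⁻¹, L.inv_mem hz, ?_⟩
      rw [map_inv₀, inv_pow, e, map_inv₀, inv_inv]

end ValueDiv

theorem IntermediateField.adjoin_gen_eq_top {F M : Type} [Field F] [Field M] [Algebra F M] (t : M) :
    IntermediateField.adjoin F {IntermediateField.AdjoinSimple.gen F t} = ⊤ := by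
  apply IntermediateField.map_injective (IntermediateField.adjoin F {t}).val
  rw [IntermediateField.adjoin_map, ← AlgHom.fieldRange_eq_map, IntermediateField.fieldRange_val,
    Set.image_singleton]
  rfl

section Dense

variable {F Λ Ω : Type} [Field F] [Field Λ] [Field Ω] [Algebra Λ Ω] [Algebra F Ω]
  {w : AbsoluteValue Ω ℝ} {T : Λ} {M : Type} [Field M] [Algebra F M]

namespace Condition

variable {t : M} {D : RootData F M} {A : ℕ → Set F}

theorem exists_pole_of_isPlace (p : Condition Λ w t D.q A) {u : ℕ} {L : IntermediateField Λ Ω}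
    {σ : p.field →ₐ[F] Ω} (hσ : IsPlace w (D.q u) L σ)
    (hnear : u ≠ 0 → ∃ a ∈ A u, w (σ ⟨t, mem_of_adjoin p.field⟩ - algebraMap F Ω a) < 1)
    {x : p.field} (hx : 1 < w (σ x)) :
    ∃ p' : Condition Λ w t D.q A, p.Le p' ∧ p'.Pole u x := by
  refine ⟨{ p with
    places := insert (u, L, σ) p.places
    places_finite := p.places_finite.insert _
    isPlace := ?_
    near := ?_ }, ⟨le_rfl, fun u L σ h => ⟨σ, .inr h, fun _ => rfl⟩⟩, ⟨x.2, L, σ, .inl rfl, hx⟩⟩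
  · rintro u' L' σ' (h | h)
    · simp only [Prod.mk.injEq] at h
      obtain ⟨rfl, rfl, rfl⟩ := h
      exact hσ
    · exact p.isPlace h
  · rintro u' L' σ' (h | h)
    · simp only [Prod.mk.injEq] at h
      obtain ⟨rfl, rfl, rfl⟩ := h
      exact hnear
    · exact p.near h

variable [Algebra F Λ]

theorem exists_isPlace (hw : IsLaurentModel F Λ Ω w T) [Algebra.IsAlgebraic Λ Ω]
    [IsAlgClosed Ω] [IsScalarTower F Λ Ω] (p : Condition Λ w t D.q A) (u : ℕ) {x : p.field}
    (hx : Transcendental F x) :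
    ∃ (L : IntermediateField Λ Ω) (σ : p.field →ₐ[F] Ω), IsPlace w (D.q u) L σ ∧ 1 < w (σ x) := by
  have := p.finite
  have : IsScalarTower F (IntermediateField.adjoin F {t}) p.field :=
    IsScalarTower.of_algebraMap_eq fun _ => rfl
  have := finiteDimensional_adjoin_of_transcendental
    (IntermediateField.adjoin_gen_eq_top (F := F) t) hx
  obtain ⟨L, σ, hL, hσ, h1, hs⟩ := hw.exists_place (D.prime u) hx
  exact ⟨L, σ, ⟨hL, hσ, hs⟩, h1⟩

theorem exists_pole_zero (hw : IsLaurentModel F Λ Ω w T) [Algebra.IsAlgebraic Λ Ω]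
    [IsAlgClosed Ω] [IsScalarTower F Λ Ω] (p : Condition Λ w t D.q A) {x : M} (hxp : x ∈ p.field)
    (hx : Transcendental F x) : ∃ p' : Condition Λ w t D.q A, p.Le p' ∧ p'.Pole 0 x := by
  have hx' : Transcendental F (⟨x, hxp⟩ : p.field) := fun h =>
    hx (h.algHom (IsScalarTower.toAlgHom F p.field M))
  obtain ⟨L, σ, hσ, h1⟩ := p.exists_isPlace hw 0 hx'
  exact p.exists_pole_of_isPlace hσ (fun h => (h rfl).elim) h1

theorem exists_isPlace_center (hw : IsLaurentModel F Λ Ω w T) [Algebra.IsAlgebraic Λ Ω]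
    [IsAlgClosed Ω] [IsScalarTower F Λ Ω] (ht : Transcendental F t) (p : Condition Λ w t D.q A)
    (u : ℕ) (a : F) :
    ∃ (L : IntermediateField Λ Ω) (σ : p.field →ₐ[F] Ω), IsPlace w (D.q u) L σ ∧
      1 < w (σ (⟨t, mem_of_adjoin p.field⟩ - algebraMap F _ a)⁻¹) := by
  refine p.exists_isPlace hw u fun h => ht ?_
  have h2 := h.inv.add (isAlgebraic_algebraMap a)
  rw [inv_inv, sub_add_cancel] at h2
  exact h2.algHom (IsScalarTower.toAlgHom F p.field M)

theorem exists_pole_center (hw : IsLaurentModel F Λ Ω w T) [Algebra.IsAlgebraic Λ Ω]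
    [IsAlgClosed Ω] [IsScalarTower F Λ Ω] (ht : Transcendental F t) (p : Condition Λ w t D.q A)
    {u : ℕ} {a : F} (ha : a ∈ A u) :
    ∃ p' : Condition Λ w t D.q A, p.Le p' ∧ p'.Pole u (t - algebraMap F M a)⁻¹ := by
  obtain ⟨L, σ, hσ, h1⟩ := p.exists_isPlace_center hw ht u a
  refine p.exists_pole_of_isPlace hσ (fun _ => ⟨a, ha, ?_⟩) h1
  rw [map_inv₀, map_inv₀, map_sub, AlgHom.commutes] at h1
  exact (one_lt_inv_iff₀.1 h1).2

theorem exists_map_eq_of_lt [Infinite F] (hw : IsLaurentModel F Λ Ω w T)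
    (p : Condition Λ w t D.q A) {σ : p.field →ₐ[F] Ω} {s : p.field} (hs : w (σ s) < 1) :
    ∃ s' : p.field, w (σ s') = w (σ s) ∧ ∀ u L σ', (u, L, σ') ∈ p.places → w (σ' s') ≤ 1 := by
  obtain ⟨a, ha⟩ := (p.finite_setOf_exists_places (P := fun _ _ σ a =>
    1 < w (σ s / (1 + algebraMap F Ω a * σ s ^ 2)))
    fun u L σ hσ => hw.finite_one_lt_map_div (σ s)).exists_notMem
  simp only [Set.mem_ofPred_eq, not_exists, not_and, not_lt] at ha
  have hσ (σ : p.field →ₐ[F] Ω) : σ (s / (1 + algebraMap F _ a * s ^ 2)) =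
      σ s / (1 + algebraMap F Ω a * σ s ^ 2) := by
    rw [map_div₀, map_add, map_one, map_mul, AlgHom.commutes, map_pow]
  refine ⟨s / (1 + algebraMap F _ a * s ^ 2), ?_, fun u L σ' h => ?_⟩
  · rw [hσ, map_div₀, AbsoluteValue.na_add_eq_of_lt hw.nonarch, map_one, div_one]
    rw [map_mul, map_one, map_pow]
    calc _ ≤ 1 * w (σ s) ^ 2 := by gcongr; exact hw.map_const_le_one a
      _ < 1 := by
        rw [one_mul]
        exact pow_lt_one₀ (apply_nonneg w _) hs two_ne_zero
  · rw [hσ]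
    exact ha u L σ' h

theorem Pole.exists_committed_bad (hw : IsLaurentModel F Λ Ω w T) [Algebra.IsAlgebraic Λ Ω]
    [IsAlgClosed Ω] [IsScalarTower F Λ Ω] [Infinite F] {p : Condition Λ w t D.q A} {u : ℕ} {x : M}
    (h : p.Pole u x) : ∃ p' : Condition Λ w t D.q A, p.Le p' ∧
      ∃ s : M, p'.Committed u s ∧ p'.Bad u (s * x ^ D.q u) := by
  obtain ⟨hx, L, σ, hσ, h1⟩ := h
  have hq := (D.prime u).ne_zero
  have hX0 : σ ⟨x, hx⟩ ≠ 0 := fun h => by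
    rw [h, map_zero] at h1
    linarith
  obtain ⟨s₀, hpos, hlt, hnd⟩ := (p.isPlace hσ).exists_not_valueDiv_lt hq
  have hX1 : 1 < w (σ ⟨x, hx⟩) ^ D.q u := one_lt_pow₀ h1 hq
  have hex : ∃ n : ℕ, 1 ≤ w (σ s₀) * (w (σ ⟨x, hx⟩) ^ D.q u) ^ n := by
    obtain ⟨n, hn⟩ := pow_unbounded_of_one_lt (w (σ s₀))⁻¹ hX1
    refine ⟨n, ?_⟩
    rw [← inv_le_iff_one_le_mul₀' hpos]
    exact hn.le
  obtain ⟨n, hn, hmin⟩ : ∃ n : ℕ, 1 ≤ w (σ s₀) * (w (σ ⟨x, hx⟩) ^ D.q u) ^ (n + 1) ∧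
      w (σ s₀) * (w (σ ⟨x, hx⟩) ^ D.q u) ^ n < 1 := by
    classical
    have h0 : Nat.find hex ≠ 0 := fun h => by
      have := Nat.find_spec hex
      rw [h, pow_zero, mul_one] at this
      linarith
    obtain ⟨k, hk⟩ := Nat.exists_eq_succ_of_ne_zero h0
    have hspec := Nat.find_spec hex
    rw [hk] at hspec
    exact ⟨k, hspec, not_le.1 (Nat.find_min hex (by omega))⟩
  have hval (k : ℕ) : w (σ (s₀ * ⟨x, hx⟩ ^ (D.q u * k))) =
      w (σ s₀) * (w (σ ⟨x, hx⟩) ^ D.q u) ^ k := by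
    rw [map_mul, map_mul, map_pow, map_pow, pow_mul]
  obtain ⟨s, hs, hle⟩ := p.exists_map_eq_of_lt hw (σ := σ) (s := s₀ * ⟨x, hx⟩ ^ (D.q u * n))
    (by rw [hval]; exact hmin)
  obtain ⟨p', hp, hc⟩ := p.exists_committed hw (u := u) s.2 (by
    rintro ⟨h, L', σ', hσ', hgt, -⟩
    exact (hle u L' σ' hσ').not_gt hgt)
  refine ⟨p', hp, s, hc, Bad.mono ?_ hp⟩
  have hv : w (σ (s * ⟨x, hx⟩ ^ D.q u)) = w (σ (s₀ * ⟨x, hx⟩ ^ (D.q u * (n + 1)))) := by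
    rw [map_mul, map_mul, hs, hval, hval, pow_succ, map_pow, map_pow, mul_assoc]
  have hnd' : ¬ ValueDiv w L (D.q u) (σ (s * ⟨x, hx⟩ ^ D.q u)) := fun h => by
    have := h.congr hv
    rw [map_mul, map_pow] at this
    exact hnd (this.of_mul_pow ((p.isPlace hσ).mem _) hX0)
  refine ⟨(s * ⟨x, hx⟩ ^ D.q u).2, L, σ, hσ, lt_of_le_of_ne ?_ fun h => ?_, hnd'⟩
  · exact (hv.trans (hval _)).symm ▸ hn
  · exact hnd' (.of_map_eq_one h.symm)

theorem exists_lt (hw : IsLaurentModel F Λ Ω w T) [Algebra.IsAlgebraic Λ Ω]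
    [IsAlgClosed Ω] [IsScalarTower F Λ Ω] [Infinite F] (ht : Transcendental F t)
    (p : Condition Λ w t D.q A) : ∃ p' : Condition Λ w t D.q A, p.Le p' ∧ p.field < p'.field := by
  obtain ⟨f, hf⟩ := (p.finite_setOf_exists_places (P := fun _ _ σ a =>
    w (-σ ⟨t, mem_of_adjoin p.field⟩ + algebraMap F Ω a) < 1)
    fun u L σ hσ => hw.finite_map_add_lt _).exists_notMem
  simp only [Set.mem_ofPred_eq, not_exists, not_and, not_lt] at hf
  obtain ⟨L₀, τ, hτ, h1⟩ := p.exists_isPlace_center hw ht 0 f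
  obtain ⟨x, hx⟩ : ∃ x : p.field, x = (⟨t, mem_of_adjoin p.field⟩ - algebraMap F _ f)⁻¹ := ⟨_, rfl⟩
  rw [← hx] at h1
  have hxle : ∀ u L σ, (u, L, σ) ∈ p.places → w (σ x) ≤ 1 := by
    intro u L σ hσ
    rw [hx, map_inv₀, map_inv₀, map_sub, AlgHom.commutes, ← AbsoluteValue.map_neg w, neg_sub,
      sub_eq_neg_add, add_comm]
    rw [add_comm]
    exact inv_le_one_of_one_le₀ (hf u L σ hσ)
  have hX0 : τ x ≠ 0 := fun h => by
    rw [h, map_zero] at h1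
    linarith
  have hq := (D.prime 0).ne_zero
  obtain ⟨s₀, hpos, hlt, hnd⟩ := hτ.exists_not_valueDiv_lt hq
  obtain ⟨s₁, hs₁, hle⟩ := p.exists_map_eq_of_lt hw hlt
  obtain ⟨n, hn⟩ := pow_unbounded_of_one_lt (w (τ s₀))⁻¹ (one_lt_pow₀ h1 hq)
  obtain ⟨s, hs⟩ : ∃ s, s = s₁ * x ^ (D.q 0 * n) := ⟨_, rfl⟩
  have hsle : ∀ u L σ, (u, L, σ) ∈ p.places → w (σ s) ≤ 1 := by
    intro u L σ hσ
    rw [hs, map_mul, map_mul, map_pow, map_pow]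
    exact mul_le_one₀ (hle u L σ hσ) (by positivity)
      (pow_le_one₀ (apply_nonneg _ _) (hxle u L σ hσ))
  have hsgt : 1 < w (τ s) := by
    rw [hs, map_mul, map_mul, map_pow, map_pow, hs₁, pow_mul, ← inv_lt_iff_one_lt_mul₀' hpos]
    exact hn
  have hsnd : ¬ ValueDiv w L₀ (D.q 0) (τ s) := fun h => by
    rw [hs, map_mul, map_pow] at h
    exact hnd ((h.of_mul_pow (hτ.mem _) hX0).congr hs₁)
  obtain ⟨a, ha⟩ := (p.finite_not_exists_pow_eq hw (u := 0) (s := s) (by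
    rintro ⟨h, L', σ', hσ', hgt, -⟩
    exact (hsle 0 L' σ' hσ').not_gt hgt)).exists_notMem
  simp only [Set.mem_ofPred_eq, not_exists, not_and] at ha
  obtain ⟨y, hy⟩ : ∃ y, y = s + algebraMap F _ a := ⟨_, rfl⟩
  rw [← hy] at ha
  obtain ⟨β, hβ⟩ := D.roots 0 (y : M)
  obtain ⟨p', hp, -, β', hβ', e⟩ := p.exists_extend_root hw 0 (D.R 0 y)
    (hβ.trans (RootData.coe_R p.field 0 y).symm) fun L σ hσ => by simpa using ha L σ hσ
  refine ⟨p', hp, lt_of_le_of_ne hp.field_le fun heq => ?_⟩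
  rw [← heq] at hβ'
  have he : (⟨β', hβ'⟩ : p.field) ^ D.q 0 = D.R 0 y := Subtype.val_injective e
  have hv : w (τ y) = w (τ s) := by
    rw [hy, map_add, AlgHom.commutes, hw.map_add_const hsgt]
  refine hw.pow_ne_ratEval (D.prime 0) (D.c 0) (D.b 0) (D.n 0) (D.j 0) (D.deg 0) (D.not_dvd 0)
    (hτ.mem y) (hv ▸ hsgt) (fun h => hsnd (h.congr hv)) (hτ.mem ⟨β', hβ'⟩) ?_
  rw [← map_pow, he, D.map_R]
  rfl

end Condition

end Dense

theorem exists_chain {P : Type} {le lt : P → P → Prop} (refl : ∀ p, le p p)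
    (trans : ∀ {p₁ p₂ p₃}, le p₁ p₂ → le p₂ p₃ → le p₁ p₃) {S : Set (P → Prop)}
    (hS : S.Countable) (hne : S.Nonempty)
    (dense : ∀ Q ∈ S, ∀ p, ∃ p', le p p' ∧ lt p p' ∧ Q p') (p₀ : P) :
    ∃ s : ℕ → P, (∀ m n, m ≤ n → le (s m) (s n)) ∧ (∀ n, lt (s n) (s (n + 1))) ∧
      ∀ Q ∈ S, ∃ n, Q (s n) := by
  obtain ⟨e, rfl⟩ := hS.exists_eq_range hne
  choose g hg using fun n => dense (e n) ⟨n, rfl⟩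
  let s : ℕ → P := fun n => Nat.rec p₀ (fun n p => g n p) n
  have hs (n : ℕ) : s (n + 1) = g n (s n) := rfl
  refine ⟨s, fun m n hmn => ?_, fun n => hs n ▸ (hg n _).2.1, ?_⟩
  · induction n, hmn using Nat.le_induction with
    | base => exact refl _
    | succ n _ ih => exact trans ih (hs n ▸ (hg n _).1)
  · rintro _ ⟨n, rfl⟩
    exact ⟨n + 1, hs n ▸ (hg n _).2.2⟩

section Generic

variable {F Λ Ω : Type} [Field F] [Field Λ] [Field Ω] [Algebra Λ Ω] [Algebra F Ω]
  {w : AbsoluteValue Ω ℝ} {T : Λ} {M : Type} [Field M] [Algebra F M]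
  {t : M} {D : RootData F M} {A : ℕ → Set F}

namespace Condition

/-- The condition with field `F(t)` and no places. -/
def initial : Condition Λ w t D.q A where
  field := ⊥
  finite := inferInstance
  places := ∅
  places_finite := Set.finite_empty
  isPlace := fun h => h.elim
  near := fun h => h.elim

/-- An increasing sequence of conditions that decides everything relevant about its union. -/
structure IsGeneric (s : ℕ → Condition Λ w t D.q A) : Prop where
  mono : ∀ m n, m ≤ n → (s m).Le (s n)
  lt : ∀ n, (s n).field < (s (n + 1)).field
  bad_or_committed : ∀ u y k, y ∈ (s k).field → ∃ n, (s n).Bad u y ∨ (s n).Committed u y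
  pole : ∀ u x k, (s k).Pole u x →
    ∃ n y, (s n).Committed u y ∧ (s n).Bad u (y * x ^ D.q u)
  transcendental : ∀ x k, x ∈ (s k).field → Transcendental F x → ∃ n, (s n).Pole 0 x
  center : ∀ u, ∀ a ∈ A u, ∃ n, (s n).Pole u (t - algebraMap F M a)⁻¹
  adjoin : ∀ α k, (∀ n, k ≤ n → IsIntegral (s n).field α ∧
    ∀ u, ¬ D.q u ∣ (minpoly (s n).field α).natDegree) → ∃ n, α ∈ (s n).field

theorem exists_isGeneric [Algebra F Λ] [Countable F] [Countable M]
    (hw : IsLaurentModel F Λ Ω w T) [Algebra.IsAlgebraic Λ Ω]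
    [IsAlgClosed Ω] [IsScalarTower F Λ Ω] [Infinite F] (ht : Transcendental F t) :
    ∃ s : ℕ → Condition Λ w t D.q A, IsGeneric s := by
  let Q₁ : ℕ × M → Condition Λ w t D.q A → Prop := fun i p =>
    (∀ p', p.Le p' → i.2 ∉ p'.field) ∨ p.Bad i.1 i.2 ∨ p.Committed i.1 i.2
  let Q₂ : ℕ × M → Condition Λ w t D.q A → Prop := fun i p =>
    (∀ p', p.Le p' → ¬ p'.Pole i.1 i.2) ∨
      ∃ y, p.Committed i.1 y ∧ p.Bad i.1 (y * i.2 ^ D.q i.1)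
  let Q₃ : M → Condition Λ w t D.q A → Prop := fun x p =>
    Transcendental F x → (∀ p', p.Le p' → x ∉ p'.field) ∨ p.Pole 0 x
  let Q₄ : ℕ × F → Condition Λ w t D.q A → Prop := fun i p =>
    i.2 ∈ A i.1 → p.Pole i.1 (t - algebraMap F M i.2)⁻¹
  let Q₅ : M → Condition Λ w t D.q A → Prop := fun α p =>
    α ∈ p.field ∨ ∀ p', p.Le p' → ¬ (IsIntegral p'.field α ∧
      ∀ u, ¬ D.q u ∣ (minpoly p'.field α).natDegree)
  let S := Set.range Q₁ ∪ Set.range Q₂ ∪ Set.range Q₃ ∪ Set.range Q₄ ∪ Set.range Q₅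
  have hS : S.Countable := ((((Set.countable_range _).union (Set.countable_range _)).union
    (Set.countable_range _)).union (Set.countable_range _)).union (Set.countable_range _)
  have dense : ∀ Q ∈ S, ∀ p : Condition Λ w t D.q A, ∃ p', p.Le p' ∧ Q p' := by
    rintro _ ((((⟨⟨u, y⟩, rfl⟩ | ⟨⟨u, x⟩, rfl⟩) | ⟨x, rfl⟩) | ⟨⟨u, a⟩, rfl⟩) | ⟨α, rfl⟩) p
    · by_cases h : ∀ p', p.Le p' → y ∉ p'.field
      · exact ⟨p, Le.refl p, .inl h⟩
      push Not at h
      obtain ⟨p', hp, hy⟩ := h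
      by_cases hb : p'.Bad u y
      · exact ⟨p', hp, .inr (.inl hb)⟩
      · obtain ⟨p'', hp', hc⟩ := p'.exists_committed hw hy hb
        exact ⟨p'', hp.trans hp', .inr (.inr hc)⟩
    · by_cases h : ∀ p', p.Le p' → ¬ p'.Pole u x
      · exact ⟨p, Le.refl p, .inl h⟩
      push Not at h
      obtain ⟨p', hp, hx⟩ := h
      obtain ⟨p'', hp', hc⟩ := hx.exists_committed_bad hw
      exact ⟨p'', hp.trans hp', .inr hc⟩
    · by_cases h : ∀ p', p.Le p' → x ∉ p'.field
      · exact ⟨p, Le.refl p, fun _ => .inl h⟩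
      push Not at h
      obtain ⟨p', hp, hx⟩ := h
      by_cases htr : Transcendental F x
      · obtain ⟨p'', hp', hc⟩ := p'.exists_pole_zero hw hx htr
        exact ⟨p'', hp.trans hp', fun _ => .inr hc⟩
      · exact ⟨p, Le.refl p, fun h => (htr h).elim⟩
    · by_cases ha : a ∈ A u
      · obtain ⟨p', hp, h⟩ := p.exists_pole_center hw ht ha
        exact ⟨p', hp, fun _ => h⟩
      · exact ⟨p, Le.refl p, fun h => (ha h).elim⟩
    · by_cases h : ∀ p', p.Le p' → ¬ (IsIntegral p'.field α ∧
        ∀ u, ¬ D.q u ∣ (minpoly p'.field α).natDegree)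
      · exact ⟨p, Le.refl p, .inr h⟩
      push Not at h
      obtain ⟨p', hp, hα, hdeg⟩ := h
      obtain ⟨p'', hp', hmem⟩ := p'.exists_extend_of_not_dvd hw hα hdeg
      exact ⟨p'', hp.trans hp', .inl hmem⟩
  obtain ⟨s, hmono, hlt, hQ⟩ := exists_chain (lt := fun p p' => p.field < p'.field) Le.refl
    Le.trans hS ⟨Q₁ (0, 0), .inl (.inl (.inl (.inl ⟨_, rfl⟩)))⟩ (fun Q hQ p => by
      obtain ⟨p₁, h₁, hlt⟩ := p.exists_lt hw ht
      obtain ⟨p₂, h₂, h⟩ := dense Q hQ p₁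
      exact ⟨p₂, h₁.trans h₂, hlt.trans_le h₂.field_le, h⟩) initial
  refine ⟨s, hmono, hlt, fun u y k hy => ?_, fun u x k hx => ?_, fun x k hx htr => ?_,
    fun u a ha => ?_, fun α k h => ?_⟩
  · obtain ⟨n, h | h⟩ := hQ (Q₁ (u, y)) (.inl (.inl (.inl (.inl ⟨_, rfl⟩))))
    · exact (h _ (hmono n _ (le_max_right k n))
        ((hmono k _ (le_max_left k n)).field_le hy)).elim
    · exact ⟨n, h⟩
  · obtain ⟨n, h | ⟨y, h⟩⟩ := hQ (Q₂ (u, x)) (.inl (.inl (.inl (.inr ⟨_, rfl⟩))))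
    · exact (h _ (hmono n _ (le_max_right k n)) (hx.mono (hmono k _ (le_max_left k n)))).elim
    · exact ⟨n, y, h⟩
  · obtain ⟨n, h⟩ := hQ (Q₃ x) (.inl (.inl (.inr ⟨_, rfl⟩)))
    obtain h | h := h htr
    · exact (h _ (hmono n _ (le_max_right k n))
        ((hmono k _ (le_max_left k n)).field_le hx)).elim
    · exact ⟨n, h⟩
  · obtain ⟨n, h⟩ := hQ (Q₄ (u, a)) (.inl (.inr ⟨_, rfl⟩))
    exact ⟨n, h ha⟩
  · obtain ⟨n, h' | h'⟩ := hQ (Q₅ α) (.inr ⟨_, rfl⟩)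
    · exact ⟨n, h'⟩
    · exact (h' _ (hmono n _ (le_max_right k n)) (h _ (le_max_left k n))).elim

end Condition

end Generic

section Definability

open FirstOrder FirstOrder.Ring Set

variable {K : Type} [Field K] [CompatibleRing K] {A : Set K} {α : Type}

theorem Set.Definable.exists_right {P : (α → K) → K → Prop}
    (h : A.Definable Language.ring {v : α ⊕ Unit → K | P (v ∘ Sum.inl) (v (Sum.inr ()))}) :
    A.Definable Language.ring {v : α → K | ∃ x, P v x} := by
  convert! h.exists_of_finite using 1
  ext v
  exact ⟨fun ⟨x, hx⟩ => ⟨fun _ => x, hx⟩, fun ⟨x, hx⟩ => ⟨x (), hx⟩⟩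

theorem Set.DefinableFun.comp_left {β : Type} {f : (α → K) → K}
    (hf : A.DefinableFun Language.ring f) (g : α → β) [Finite α] :
    A.DefinableFun Language.ring fun v : β → K => f (v ∘ g) :=
  DefinableFun.comp (g := fun v : β → K => v ∘ g) (fun _ => DefinableFun.proj _) hf

theorem Set.DefinableFun.comp_one {R : K → K}
    (hR : A.DefinableFun Language.ring fun v : Fin 1 → K => R (v 0)) {f : (α → K) → K}
    (hf : A.DefinableFun Language.ring f) :
    A.DefinableFun Language.ring fun v => R (f v) :=
  DefinableFun.comp (g := fun v _ => f v) (fun _ => hf) hR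

theorem Set.DefinableFun.comp_two {R : K → K → K}
    (hR : A.DefinableFun Language.ring fun v : Fin 2 → K => R (v 0) (v 1)) {f g : (α → K) → K}
    (hf : A.DefinableFun Language.ring f) (hg : A.DefinableFun Language.ring g) :
    A.DefinableFun Language.ring fun v => R (f v) (g v) :=
  DefinableFun.comp (g := fun v => ![f v, g v]) (by simp [DefinableMap, hf, hg]) hR

theorem Set.DefinableFun.add {f g : (α → K) → K} (hf : A.DefinableFun Language.ring f)
    (hg : A.DefinableFun Language.ring g) : A.DefinableFun Language.ring fun v => f v + g v := by
  refine DefinableFun.comp_two (R := (· + ·)) ?_ hf hg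
  simpa only [← CompatibleRing.funMap_add] using
    DefinableFun.of_empty (A := A) (DefinableFun.fun_symbol (M := K) addFunc)

theorem Set.DefinableFun.mul {f g : (α → K) → K} (hf : A.DefinableFun Language.ring f)
    (hg : A.DefinableFun Language.ring g) : A.DefinableFun Language.ring fun v => f v * g v := by
  refine DefinableFun.comp_two (R := (· * ·)) ?_ hf hg
  simpa only [← CompatibleRing.funMap_mul] using
    DefinableFun.of_empty (A := A) (DefinableFun.fun_symbol (M := K) mulFunc)

theorem Set.DefinableFun.neg {f : (α → K) → K} (hf : A.DefinableFun Language.ring f) :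
    A.DefinableFun Language.ring fun v => -f v := by
  refine DefinableFun.comp_one (R := (- ·)) ?_ hf
  simpa only [← CompatibleRing.funMap_neg] using
    DefinableFun.of_empty (A := A) (DefinableFun.fun_symbol (M := K) negFunc)

theorem Set.DefinableFun.zero : A.DefinableFun Language.ring fun _ : α → K => 0 := by
  refine DefinableFun.of_empty ?_
  simpa using (0 : Language.ring.Term α).definableFun_realize (M := K)

theorem Set.DefinableFun.one : A.DefinableFun Language.ring fun _ : α → K => 1 := by
  refine DefinableFun.of_empty ?_
  simpa using (1 : Language.ring.Term α).definableFun_realize (M := K)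

theorem Set.DefinableFun.sub {f g : (α → K) → K} (hf : A.DefinableFun Language.ring f)
    (hg : A.DefinableFun Language.ring g) : A.DefinableFun Language.ring fun v => f v - g v := by
  simpa only [sub_eq_add_neg] using hf.add hg.neg

theorem Set.DefinableFun.pow {f : (α → K) → K} (hf : A.DefinableFun Language.ring f) (n : ℕ) :
    A.DefinableFun Language.ring fun v => f v ^ n := by
  induction n with
  | zero => simpa only [pow_zero] using DefinableFun.one
  | succ n ih => simpa only [pow_succ] using ih.mul hf

theorem Set.DefinableFun.prod {ι : Type} (s : Finset ι) {f : ι → (α → K) → K}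
    (hf : ∀ i, A.DefinableFun Language.ring (f i)) :
    A.DefinableFun Language.ring fun v => ∏ i ∈ s, f i v := by
  classical
  induction s using Finset.induction_on with
  | empty => simpa only [Finset.prod_empty] using DefinableFun.one
  | insert i s hi ih => simpa only [Finset.prod_insert hi] using (hf i).mul ih

theorem Set.DefinableFun.inv {f : (α → K) → K} (hf : A.DefinableFun Language.ring f) :
    A.DefinableFun Language.ring fun v => (f v)⁻¹ := by
  refine DefinableFun.comp_one (R := (·⁻¹)) ?_ hf
  have h0 : A.DefinableFun Language.ring fun v : Option (Fin 1) → K => v (some 0) :=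
    DefinableFun.proj _
  have h1 : A.DefinableFun Language.ring fun v : Option (Fin 1) → K => v none :=
    DefinableFun.proj _
  have h2 := (h1.mul (h1.mul h0)).ofPred_eq h1
  have h3 := (h0.mul (h1.mul h0)).ofPred_eq h0
  change A.Definable Language.ring _
  convert! h2.inter h3 using 1
  ext v
  simp only [Function.tupleGraph, Set.mem_inter_iff, Set.mem_ofPred_eq, Function.comp_apply]
  constructor
  · intro h
    rw [← h]
    by_cases hv : v (some 0) = 0 <;> simp [hv]
  · rintro ⟨h, h'⟩
    by_cases hv : v (some 0) = 0
    · simpa [hv] using h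
    · exact inv_eq_of_mul_eq_one_left (mul_left_cancel₀ hv (h'.trans (mul_one _).symm))

theorem definableFun_ratEval {F : Type} [Field F] [Algebra F K] {m k : ℕ} (c : Fin m → F)
    (b : Fin k → F) (n : Fin m → ℕ) (j : Fin k → ℕ) {f : (α → K) → K}
    (hf : (univ : Set K).DefinableFun Language.ring f) :
    (univ : Set K).DefinableFun Language.ring fun v => ratEval c b n j (f v) := by
  have hc (a : K) : (univ : Set K).DefinableFun Language.ring fun _ : α → K => a :=
    Language.definableFun_const _ _ (mem_univ a)
  simp only [ratEval, div_eq_mul_inv]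
  exact (DefinableFun.prod _ fun i => (hf.sub (hc _)).pow _).mul
    (DefinableFun.prod _ fun i => (hf.sub (hc _)).pow _).inv

/-- The elements `s` such that, for some `α`, both `R (s + α)` and `R (s + α⁻¹)` are `q`-th
powers. -/
def shiftRootSet {K : Type} [Field K] (q : ℕ) (R : K → K) : Set K :=
  {s | ∃ α, α ≠ 0 ∧ (∃ z, z ^ q = R (s + α)) ∧ ∃ z, z ^ q = R (s + α⁻¹)}

/-- The elements `x` such that multiplication by `x ^ q` preserves `shiftRootSet q R`. -/
def rootStabilizer {K : Type} [Field K] (q : ℕ) (R : K → K) : Set K :=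
  {x | ∀ s ∈ shiftRootSet q R, s * x ^ q ∈ shiftRootSet q R}

theorem definable_shiftRootSet {q : ℕ} {R : K → K}
    (hR : A.DefinableFun Language.ring fun v : Fin 1 → K => R (v 0)) {f : (α → K) → K}
    (hf : A.DefinableFun Language.ring f) [Finite α] :
    A.Definable Language.ring {v | f v ∈ shiftRootSet q R} := by
  have key {g : (α ⊕ Unit → K) → K} (hg : A.DefinableFun Language.ring g) :
      A.Definable Language.ring {v : α ⊕ Unit → K | ∃ z, z ^ q = R (g v)} :=
    Definable.exists_right (P := fun v z => z ^ q = R (g v))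
      (((DefinableFun.proj _).pow q).ofPred_eq
        (hR.comp_one (hg.comp_left Sum.inl)))
  have hα : A.DefinableFun Language.ring fun v : α ⊕ Unit → K => v (Sum.inr ()) :=
    DefinableFun.proj _
  have hs := hf.comp_left (β := α ⊕ Unit) Sum.inl
  exact Definable.exists_right (P := fun v α => α ≠ 0 ∧ (∃ z, z ^ q = R (f v + α)) ∧
      ∃ z, z ^ q = R (f v + α⁻¹))
    ((hα.ofPred_eq DefinableFun.zero).compl.inter
      ((key (hs.add hα)).inter (key (hs.add hα.inv))))

theorem definable_rootStabilizer {q : ℕ} {R : K → K}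
    (hR : A.DefinableFun Language.ring fun v : Fin 1 → K => R (v 0)) {f : (α → K) → K}
    (hf : A.DefinableFun Language.ring f) [Finite α] :
    A.Definable Language.ring {v | f v ∈ rootStabilizer q R} := by
  have hs : A.DefinableFun Language.ring fun v : α ⊕ Unit → K => v (Sum.inr ()) :=
    DefinableFun.proj _
  have h := Definable.exists_right
    (P := fun v s => s ∈ shiftRootSet q R ∧ ¬ s * f v ^ q ∈ shiftRootSet q R)
    ((definable_shiftRootSet (q := q) hR hs).inter
      (definable_shiftRootSet (q := q) hR (hs.mul ((hf.comp_left Sum.inl).pow q))).compl)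
  convert! h.compl using 1
  ext v
  simp [rootStabilizer]

end Definability

theorem definableWithParams_rootStabilizer {K : Type} [Field K] {q₀ q : ℕ} {F : Type} [Field F]
    [Algebra F K] {m₀ k₀ m k : ℕ} {c₀ : Fin m₀ → F} {b₀ : Fin k₀ → F} {n₀ : Fin m₀ → ℕ}
    {j₀ : Fin k₀ → ℕ} {c : Fin m → F} {b : Fin k → F} {n : Fin m → ℕ} {j : Fin k → ℕ} (t : K) :
    definableWithParams K {x | x ∈ rootStabilizer q₀ (ratEval c₀ b₀ n₀ j₀) ∧
      (t - x)⁻¹ ∉ rootStabilizer q (ratEval c b n j)} := by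
  let := FirstOrder.Ring.compatibleRingOfRing K
  have hx : (Set.univ : Set K).DefinableFun FirstOrder.Language.ring fun v : Fin 1 → K => v 0 :=
    Set.DefinableFun.proj _
  have ht : (Set.univ : Set K).DefinableFun FirstOrder.Language.ring fun _ : Fin 1 → K => t :=
    FirstOrder.Language.definableFun_const _ _ (Set.mem_univ t)
  exact (definable_rootStabilizer (definableFun_ratEval _ _ _ _ hx) hx).inter
    (definable_rootStabilizer (definableFun_ratEval _ _ _ _ hx) (ht.sub hx).inv).compl

section Union

variable {F Λ Ω : Type} [Field F] [Field Λ] [Field Ω] [Algebra Λ Ω] [Algebra F Ω]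
  {w : AbsoluteValue Ω ℝ} {T : Λ} {M : Type} [Field M] [Algebra F M]
  {t : M} {D : RootData F M} {A : ℕ → Set F}

namespace Condition.IsGeneric

variable {s : ℕ → Condition Λ w t D.q A} {K : IntermediateField (IntermediateField.adjoin F {t}) M}

theorem exists_mem_iSup_iff (hs : IsGeneric s) (x : M) :
    x ∈ (⨆ n, (s n).field) ↔ ∃ n, x ∈ (s n).field := by
  rw [← SetLike.mem_coe, IntermediateField.coe_iSup_of_directed, Set.mem_iUnion]
  · rfl
  · exact (monotone_nat_of_le_succ fun n => (hs.lt n).le).directed_le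

theorem not_finiteDimensional (hs : IsGeneric s) (hK : ∀ x, x ∈ K ↔ ∃ n, x ∈ (s n).field) :
    ¬ FiniteDimensional (IntermediateField.adjoin F {t}) K := by
  intro h
  have hle (n : ℕ) : (s n).field ≤ K := fun x hx => (hK x).2 ⟨n, hx⟩
  have hfin (n : ℕ) := (s n).finite
  have hlt : StrictMono fun n => Module.finrank (IntermediateField.adjoin F {t}) (s n).field := by
    refine strictMono_nat_of_lt_succ fun n => ?_
    by_contra! hn
    exact (hs.lt n).ne (IntermediateField.eq_of_le_of_finrank_le (hs.lt n).le hn)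
  obtain ⟨n, hn⟩ : ∃ n, n = Module.finrank (IntermediateField.adjoin F {t}) K + 1 := ⟨_, rfl⟩
  have h1 := hlt.id_le n
  have h2 := IntermediateField.finrank_le_of_le_right (hle n)
  simp only [id] at h1
  omega

theorem mem_shiftRootSet_iff (hs : IsGeneric s) (hK : ∀ x, x ∈ K ↔ ∃ n, x ∈ (s n).field) (u : ℕ)
    (y : K) : y ∈ shiftRootSet (D.q u) (D.R u) ↔ ∃ n, (s n).Committed u (y : M) := by
  constructor
  · rintro ⟨α, hα, ⟨z, hz⟩, z', hz'⟩
    obtain ⟨n₁, h₁⟩ := (hK _).1 y.2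
    obtain ⟨n₂, h₂⟩ := (hK _).1 α.2
    obtain ⟨n₃, h₃⟩ := (hK _).1 z.2
    obtain ⟨n₄, h₄⟩ := (hK _).1 z'.2
    have key {m : ℕ} {x : M} (hx : x ∈ (s m).field)
        (hm : m ≤ max (max n₁ n₂) (max n₃ n₄)) :
        x ∈ (s (max (max n₁ n₂) (max n₃ n₄))).field := (hs.mono _ _ hm).field_le hx
    refine ⟨_, key h₁ (by simp), α, key h₂ (by simp), fun h => hα (Subtype.val_injective h),
      ⟨z, key h₃ (by simp), ?_⟩, z', key h₄ (by simp), ?_⟩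
    · have := congrArg (Subtype.val) hz
      rw [RootData.coe_R] at this
      exact this
    · have := congrArg (Subtype.val) hz'
      rw [RootData.coe_R] at this
      exact this
  · rintro ⟨n, hy, α, hα, hα0, ⟨z, hz, e⟩, z', hz', e'⟩
    refine ⟨⟨α, (hK _).2 ⟨n, hα⟩⟩, fun h => hα0 (congrArg Subtype.val h),
      ⟨⟨z, (hK _).2 ⟨n, hz⟩⟩, ?_⟩, ⟨z', (hK _).2 ⟨n, hz'⟩⟩, ?_⟩
    · apply Subtype.val_injective
      rw [RootData.coe_R]
      exact e
    · apply Subtype.val_injective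
      rw [RootData.coe_R]
      exact e'

variable [Algebra F Λ]

theorem notMem_shiftRootSet_iff (hw : IsLaurentModel F Λ Ω w T) (hs : IsGeneric s)
    (hK : ∀ x, x ∈ K ↔ ∃ n, x ∈ (s n).field) (u : ℕ) (y : K) :
    y ∉ shiftRootSet (D.q u) (D.R u) ↔ ∃ n, (s n).Bad u (y : M) := by
  rw [hs.mem_shiftRootSet_iff hK]
  constructor
  · intro h
    obtain ⟨k, hk⟩ := (hK _).1 y.2
    obtain ⟨n, hn | hn⟩ := hs.bad_or_committed u y k hk
    · exact ⟨n, hn⟩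
    · exact (h ⟨n, hn⟩).elim
  · rintro ⟨n, hn⟩ ⟨m, hm⟩
    exact (hn.mono (hs.mono n _ (le_max_left n m))).not_committed hw
      (hm.mono (hs.mono m _ (le_max_right n m)))

theorem mem_rootStabilizer_iff (hw : IsLaurentModel F Λ Ω w T) (hs : IsGeneric s)
    (hK : ∀ x, x ∈ K ↔ ∃ n, x ∈ (s n).field) (u : ℕ) (x : K) :
    x ∈ rootStabilizer (D.q u) (D.R u) ↔ ∀ n, ¬ (s n).Pole u (x : M) := by
  constructor
  · intro h n hn
    obtain ⟨m, y, hc, hb⟩ := hs.pole u x n hn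
    have hy : y ∈ K := (hK y).2 ⟨m, hc.1⟩
    obtain ⟨y, rfl⟩ : ∃ y' : K, (y' : M) = y := ⟨⟨y, hy⟩, rfl⟩
    refine (hs.notMem_shiftRootSet_iff hw hK u (y * x ^ D.q u)).2 ⟨m, ?_⟩
      (h y ((hs.mem_shiftRootSet_iff hK u y).2 ⟨m, hc⟩))
    rwa [IntermediateField.coe_mul, IntermediateField.coe_pow]
  · intro h y hy
    by_contra hyx
    obtain ⟨n, hn⟩ := (hs.notMem_shiftRootSet_iff hw hK u _).1 hyx
    refine (hs.notMem_shiftRootSet_iff hw hK u y).2 ?_ hy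
    obtain ⟨k₁, hk₁⟩ := (hK _).1 x.2
    obtain ⟨k₂, hk₂⟩ := (hK _).1 y.2
    obtain ⟨m, hnm, hk₁m, hk₂m⟩ : ∃ m, n ≤ m ∧ k₁ ≤ m ∧ k₂ ≤ m :=
      ⟨max n (max k₁ k₂), by simp⟩
    have hx' : (x : M) ∈ (s m).field := (hs.mono _ _ hk₁m).field_le hk₁
    have hy' : (y : M) ∈ (s m).field := (hs.mono _ _ hk₂m).field_le hk₂
    rw [IntermediateField.coe_mul, IntermediateField.coe_pow] at hn
    obtain ⟨hyx', L, σ, hσ, h1, hnd⟩ := hn.mono (hs.mono _ _ hnm)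
    have hle : w (σ ⟨x, hx'⟩) ≤ 1 := not_lt.1 fun hlt => h m ⟨hx', L, σ, hσ, hlt⟩
    have he : (⟨y * (x : M) ^ D.q u, hyx'⟩ : (s m).field) = ⟨y, hy'⟩ * ⟨x, hx'⟩ ^ D.q u := by
      apply Subtype.val_injective
      rw [IntermediateField.coe_mul, IntermediateField.coe_pow]
    rw [he, map_mul, map_pow] at h1 hnd
    refine ⟨m, hy', L, σ, hσ, ?_, fun hd => hnd ?_⟩
    · rw [map_mul, map_pow] at h1
      exact h1.trans_le (mul_le_of_le_one_right (w.nonneg _) (pow_le_one₀ (w.nonneg _) hle))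
    · obtain ⟨z, hz, e⟩ := hd
      refine ⟨z * σ ⟨x, hx'⟩, L.mul_mem hz (((s m).isPlace hσ).mem _), ?_⟩
      rw [map_mul, map_mul, map_pow, mul_pow, e]

theorem mem_rootStabilizer_and_iff (hw : IsLaurentModel F Λ Ω w T) (hs : IsGeneric s)
    (hK : ∀ x, x ∈ K ↔ ∃ n, x ∈ (s n).field) {u : ℕ} (hu : u ≠ 0) (x : K) :
    (x ∈ rootStabilizer (D.q 0) (D.R 0) ∧
      (⟨t, mem_of_adjoin K⟩ - x)⁻¹ ∉ rootStabilizer (D.q u) (D.R u)) ↔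
      ∃ a ∈ A u, algebraMap F M a = (x : M) := by
  rw [hs.mem_rootStabilizer_iff hw hK, hs.mem_rootStabilizer_iff hw hK, not_forall_not]
  have hcoe : (((⟨t, mem_of_adjoin K⟩ - x)⁻¹ : K) : M) = (t - (x : M))⁻¹ := rfl
  rw [hcoe]
  constructor
  · rintro ⟨h0, n, hn⟩
    have halg : IsAlgebraic F (x : M) := by
      by_contra htr
      obtain ⟨k, hk⟩ := (hK _).1 x.2
      obtain ⟨m, hm⟩ := hs.transcendental x k hk htr
      exact h0 m hm
    obtain ⟨k, hk⟩ := (hK _).1 x.2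
    obtain ⟨htx, L, σ, hσ, h1⟩ := hn.mono (hs.mono _ _ (le_max_left n k))
    have hx := (hs.mono k _ (le_max_right n k)).field_le hk
    obtain ⟨a, ha, hlt⟩ := (s (max n k)).near hσ hu
    refine ⟨a, ha, ?_⟩
    have he : (⟨(t - (x : M))⁻¹, htx⟩ : (s (max n k)).field) =
        (⟨t, mem_of_adjoin _⟩ - ⟨x, hx⟩)⁻¹ := Subtype.val_injective rfl
    rw [he, map_inv₀, map_inv₀, map_sub] at h1
    have hlt' := (one_lt_inv_iff₀.1 h1).2
    have halg' : IsAlgebraic F (⟨x, hx⟩ : (s (max n k)).field) :=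
      (isAlgebraic_algebraMap_iff (A := M) Subtype.val_injective).1 halg
    have hsub : IsAlgebraic F (σ ⟨x, hx⟩ - algebraMap F Ω a) :=
      (halg'.algHom σ).sub (isAlgebraic_algebraMap a)
    have hw1 : w (σ ⟨x, hx⟩ - algebraMap F Ω a) < 1 := by
      have := hw.nonarch (σ ⟨t, mem_of_adjoin _⟩ - algebraMap F Ω a)
        (-(σ ⟨t, mem_of_adjoin _⟩ - σ ⟨x, hx⟩))
      rw [AbsoluteValue.map_neg] at this
      have e : σ ⟨t, mem_of_adjoin _⟩ - algebraMap F Ω a +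
        -(σ ⟨t, mem_of_adjoin _⟩ - σ ⟨x, hx⟩) = σ ⟨x, hx⟩ - algebraMap F Ω a := by ring
      rw [e] at this
      exact this.trans_lt (max_lt hlt hlt')
    have hzero : σ ⟨x, hx⟩ - algebraMap F Ω a = 0 := by
      by_contra h
      exact hw1.ne (hw.map_eq_one_of_isAlgebraic hsub h)
    rw [← σ.commutes, sub_eq_zero] at hzero
    exact (congrArg Subtype.val (σ.injective hzero)).symm
  · rintro ⟨a, ha, hax⟩
    rw [← hax]
    refine ⟨?_, hs.center u a ha⟩
    rintro n ⟨hx, L, σ, hσ, h1⟩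
    have he : (⟨algebraMap F M a, hx⟩ : (s n).field) = algebraMap F _ a := Subtype.val_injective rfl
    rw [he, σ.commutes] at h1
    exact h1.not_ge (hw.map_const_le_one a)

end Condition.IsGeneric

end Union

theorem natDegree_minpoly_of_map_eq {k K M : Type} [Field k] [Field K] [Field M] [Algebra k M]
    [Algebra K M] {f : k →+* K} (hf : ∀ x, algebraMap K M (f x) = algebraMap k M x) {α : M}
    (hα : IsIntegral K α) {g : k[X]} (hg : g.map f = minpoly K α) :
    IsIntegral k α ∧ (minpoly k α).natDegree = (minpoly K α).natDegree := by
  have hmonic : g.Monic := monic_of_injective f.injective (hg ▸ minpoly.monic hα)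
  have hirr : Irreducible g :=
    hmonic.irreducible_of_irreducible_map f g (hg ▸ minpoly.irreducible hα)
  have heval : aeval α g = 0 := by
    have h := minpoly.aeval K α
    rw [← hg, aeval_def, eval₂_map, RingHom.ext (f := (algebraMap K M).comp f) hf] at h
    exact h
  refine ⟨⟨g, hmonic, heval⟩, ?_⟩
  rw [← minpoly.eq_of_irreducible_of_monic hirr heval hmonic, ← hg, natDegree_map]

namespace Condition.IsGeneric

variable {F Λ Ω : Type} [Field F] [Field Λ] [Field Ω] [Algebra Λ Ω] [Algebra F Ω]
  {w : AbsoluteValue Ω ℝ} {M : Type} [Field M] [Algebra F M]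
  {t : M} {D : RootData F M} {A : ℕ → Set F} {s : ℕ → Condition Λ w t D.q A}
  {K : IntermediateField (IntermediateField.adjoin F {t}) M}

theorem mem_of_not_dvd (hs : IsGeneric s) (hK : ∀ x, x ∈ K ↔ ∃ n, x ∈ (s n).field) {α : M}
    (hα : IsIntegral K α) (hdeg : ∀ u, ¬ D.q u ∣ (minpoly K α).natDegree) : α ∈ K := by
  choose f hf using fun i => (hK _).1 ((minpoly K α).coeff i).2
  obtain ⟨k, hk⟩ := ((Finset.range ((minpoly K α).natDegree + 1)).image f).exists_le
  refine (hK α).2 (hs.adjoin α k fun n hn => ?_)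
  have hle : (s n).field ≤ K := fun x hx => (hK x).2 ⟨n, hx⟩
  have hlift : minpoly K α ∈ lifts (IntermediateField.inclusion hle).toRingHom := by
    rw [lifts_iff_coeff_lifts]
    intro i
    rcases lt_or_ge (minpoly K α).natDegree i with hi | hi
    · exact ⟨0, by rw [map_zero, coeff_eq_zero_of_natDegree_lt hi]⟩
    · have hfi : f i ≤ k :=
        hk _ (Finset.mem_image_of_mem f (Finset.mem_range.2 (Nat.lt_succ_of_le hi)))
      exact ⟨⟨_, (hs.mono _ _ (hfi.trans hn)).field_le (hf i)⟩, Subtype.val_injective rfl⟩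
  obtain ⟨g, hg⟩ := (mem_lifts _).1 hlift
  have := natDegree_minpoly_of_map_eq (fun _ => rfl) hα hg
  exact ⟨this.1, fun u => this.2 ▸ hdeg u⟩

theorem finrank_eq_one_or_dvd (hs : IsGeneric s) (hK : ∀ x, x ∈ K ↔ ∃ n, x ∈ (s n).field)
    (H : IntermediateField K M) [FiniteDimensional K H] :
    Module.finrank K H = 1 ∨ ∃ u, D.q u ∣ Module.finrank K H := by
  refine or_iff_not_imp_right.2 fun hdvd => ?_
  push Not at hdvd
  rw [IntermediateField.finrank_eq_one_iff, eq_bot_iff]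
  intro α hα
  have hinteg : IsIntegral K (⟨α, hα⟩ : H) := .of_finite K _
  have hmin : minpoly K (⟨α, hα⟩ : H) = minpoly K α := IntermediateField.minpoly_eq ..
  have hαK : α ∈ K := hs.mem_of_not_dvd hK (hinteg.map H.val) fun u hu =>
    hdvd u (hu.trans (hmin ▸ minpoly.degree_dvd hinteg))
  exact IntermediateField.mem_bot.2 ⟨⟨α, hαK⟩, rfl⟩

end Condition.IsGeneric

/-- Theorem `thm:main` together with Theorem `thm:properties`:
Let `F` be a countable field and, for each `u`, let `A_u ⊆ F` be a countable set such that
for every finite `B ⊆ F` the complement of `{a + b : a ∈ A_u, b ∈ B}` in `F` is infinite.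
Let `M` be a countable field extension of `F`, `t ∈ M` transcendental over `F`, let
`(q_u)` be distinct primes different from the characteristic of `M`, and for each `u` let
`R_u(S) = ∏ᵢ (S - c_{u,i})^{n_{u,i}} / ∏ᵢ (S - b_{u,i})^{j_{u,i}}` with the
`c_{u,i}, b_{u,i} ∈ F` pairwise distinct, the exponents positive,
`n_{u,1} ≢ 0 (mod q_u)`, `0 < deg C_u - deg B_u ≢ 0 (mod q_u)`, and suppose every value
`R_u(x)`, `x ∈ M`, is a `q_u`-th power in `M`.  Then there is a field `K` with
`F(t) ⊆ K ⊆ M` such that (1) `[K : F(t)]` is infinite; (2) each `A_u` is first-order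
definable in `K`; (3) `F` is first-order definable in `K`; and (4) any finite extension
`H` of `K` inside `M` has `[H : K] = 1` or `q_u ∣ [H : K]` for some `u`. -/
theorem stmt_1 (F : Type) [Field F] [Countable F]
    (M : Type) [Field M] [Countable M] [Algebra F M]
    (A : ℕ → Set F) (hAcnt : ∀ u, (A u).Countable)
    (hAcompl : ∀ u, ∀ B : Finset F,
      {x : F | ∃ a ∈ A u, ∃ b₀ ∈ B, x = a + b₀}ᶜ.Infinite)
    (t : M) (ht : Transcendental F t)
    (q : ℕ → ℕ) (hqprime : ∀ u, (q u).Prime) (hqdist : Function.Injective q)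
    (hqchar : ∀ u, (q u : M) ≠ 0)
    (m k : ℕ → ℕ) (hm : ∀ u, 0 < m u)
    (c : (u : ℕ) → Fin (m u) → F) (b : (u : ℕ) → Fin (k u) → F)
    (n : (u : ℕ) → Fin (m u) → ℕ) (j : (u : ℕ) → Fin (k u) → ℕ)
    (hdist : ∀ u, Function.Injective (Sum.elim (c u) (b u)))
    (hn : ∀ u i, 0 < n u i) (hj : ∀ u i, 0 < j u i)
    (hn1 : ∀ u, ¬ q u ∣ n u ⟨0, hm u⟩)
    (hdeg : ∀ u, (0 : ℤ) < (∑ i, (n u i : ℤ)) - ∑ i, (j u i : ℤ) ∧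
      ¬ (q u : ℤ) ∣ ((∑ i, (n u i : ℤ)) - ∑ i, (j u i : ℤ)))
    (hroots : ∀ u, ∀ x : M, ∃ y : M, y ^ q u = ratEval (c u) (b u) (n u) (j u) x) :
    ∃ K : IntermediateField ↥(IntermediateField.adjoin F {t}) M,
      (¬ FiniteDimensional ↥(IntermediateField.adjoin F {t}) ↥K) ∧
      (∀ u, definableWithParams ↥K
        {x : ↥K | ∃ a ∈ A u, algebraMap F M a = (x : M)}) ∧
      (definableWithParams ↥K
        {x : ↥K | (x : M) ∈ Set.range (algebraMap F M)}) ∧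
      (∀ H : IntermediateField ↥K M, FiniteDimensional ↥K ↥H →
        Module.finrank ↥K ↥H = 1 ∨ ∃ u, q u ∣ Module.finrank ↥K ↥H) := by
  have hinf : Infinite F :=
    Set.infinite_univ_iff.1 ((hAcompl 0 ∅).mono (Set.subset_univ _))
  have hdeg' (u : ℕ) : ∃ d, ∑ i, n u i = ∑ i, j u i + d ∧ ¬ q u ∣ d := by
    obtain ⟨h0, hd⟩ := hdeg u
    have hle : ∑ i, j u i ≤ ∑ i, n u i := by
      zify
      linarith
    refine ⟨∑ i, n u i - ∑ i, j u i, (Nat.add_sub_cancel' hle).symm, fun h => hd ?_⟩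
    have := Int.natCast_dvd_natCast.2 h
    rwa [Nat.cast_sub hle, Nat.cast_sum, Nat.cast_sum] at this
  choose d hd hqd using hdeg'
  let D : RootData F M :=
    { q, m, k, c, b, n, j, d
      prime := hqprime
      inj := hqdist
      ne_zero := fun u h => hqchar u (by rw [← map_natCast (algebraMap F M), h, map_zero])
      deg := hd
      not_dvd := hqd
      roots := hroots }
  let A' : ℕ → Set F := fun u => Nat.casesOn u ∅ fun u => Nat.casesOn u Set.univ A
  obtain ⟨w, T, hw⟩ := exists_isLaurentModel F
  obtain ⟨s, hs⟩ := Condition.exists_isGeneric (D := D) (A := A') hw ht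
  obtain ⟨K, hK⟩ : ∃ K : IntermediateField (IntermediateField.adjoin F {t}) M,
      ∀ x, x ∈ K ↔ ∃ n, x ∈ (s n).field := ⟨_, hs.exists_mem_iSup_iff⟩
  have hdef (u : ℕ) (hu : u ≠ 0) :
      definableWithParams K {x | ∃ a ∈ A' u, algebraMap F M a = (x : M)} := by
    have h := definableWithParams_rootStabilizer (q₀ := q 0) (q := q u) (c₀ := c 0) (b₀ := b 0)
      (n₀ := n 0) (j₀ := j 0) (c := c u) (b := b u) (n := n u) (j := j u)
      (⟨t, mem_of_adjoin K⟩ : K)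
    convert! h using 1
    ext x
    exact (hs.mem_rootStabilizer_and_iff hw hK hu x).symm
  refine ⟨K, hs.not_finiteDimensional hK, fun u => hdef (u + 2) (by simp), ?_,
    fun H hH => hs.finrank_eq_one_or_dvd hK H⟩
  convert! hdef 1 one_ne_zero using 1
  ext x
  simp [A']
end
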